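/- If H is a 3-uniform hypergraph, then τ_g(H) ≤ (5/16)(n(H) + m(H)). -/

import Mathlib

variable {V : Type} [Fintype V] [DecidableEq V]

/-- The set of legal moves in the transversal game with uncovered edge set `E`:
the vertices hitting at least one uncovered edge. -/
def playable (E : Finset (Finset V)) : Finset V :=
  Finset.univ.filter (fun v => ∃ e ∈ E, v ∈ e)

/-- The number of moves remaining in the transversal game with uncovered edge set `E`
under optimal play, where `ehTurn = true` iff Edge-hitter (the minimizer) moves next;
Staller (the maximizer) moves next iff `ehTurn = false`.  Each move must hit at least
one uncovered edge, and the game ends when no uncovered edge remains. -/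
def gameVal (ehTurn : Bool) (E : Finset (Finset V)) : ℕ :=
  if h : (playable E).Nonempty then
    1 +
      (if ehTurn then
        (playable E).attach.inf' (Finset.attach_nonempty_iff.mpr h)
          (fun v => gameVal (!ehTurn) (E.filter (fun e => v.1 ∉ e)))
      else
        (playable E).attach.sup' (Finset.attach_nonempty_iff.mpr h)
          (fun v => gameVal (!ehTurn) (E.filter (fun e => v.1 ∉ e))))
  else 0
termination_by E.card
decreasing_by
  all_goals
    obtain ⟨v, hv⟩ := v
    simp only [playable, Finset.mem_filter, Finset.mem_univ, true_and] at hv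
    obtain ⟨e, he, hve⟩ := hv
    exact Finset.card_lt_card (Finset.filter_ssubset.mpr ⟨e, he, by simp [hve]⟩)

/-- The game transversal number `τ_g`: Edge-hitter makes the first move. -/
def gameTransversalNum (E : Finset (Finset V)) : ℕ := gameVal true E

/-- The Staller-start game transversal number `τ_g'`: Staller makes the first move. -/
def stallerGameTransversalNum (E : Finset (Finset V)) : ℕ := gameVal false E

/-- The transversal number `τ`: the minimum size of a set of vertices meeting all edges. -/
noncomputable def transversalNum (E : Finset (Finset V)) : ℕ :=
  sInf {n | ∃ T : Finset V, (∀ e ∈ E, ∃ v ∈ T, v ∈ e) ∧ T.card = n}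


set_option linter.unusedSectionVars false
set_option linter.unusedVariables false

namespace TG

open Finset

/-! ### Basic notions -/

/-- degree of a vertex -/
def deg (E : Finset (Finset V)) (v : V) : ℕ := (E.filter (fun e => v ∈ e)).card

/-- common degree of two vertices -/
def codeg (E : Finset (Finset V)) (v u : V) : ℕ := (E.filter (fun e => v ∈ e ∧ u ∈ e)).card

/-- residual hypergraph after a vertex is played -/
def res (E : Finset (Finset V)) (v : V) : Finset (Finset V) := E.filter (fun e => v ∉ e)

/-- the number of degree one vertices in a set -/
def ones (E : Finset (Finset V)) (f : Finset V) : ℕ := (f.filter (fun u => deg E u = 1)).card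

/-- vertex weights -/
def wt : ℕ → ℤ
  | 0 => 0
  | 1 => 57
  | 2 => 82
  | _ => 85

/-- bonus of an edge with `k` vertices of degree one -/
def bon (γ : ℤ) (k : ℕ) : ℤ := if k = 3 then 16 else if k = 2 then 2 * γ else 0

/-- the potential -/
def Phi (γ : ℤ) (E : Finset (Finset V)) : ℤ :=
  85 * (E.card : ℤ) + ∑ v, wt (deg E v) + ∑ f ∈ E, bon γ (ones E f)

/-- uniformity -/
def Unif (E : Finset (Finset V)) : Prop := ∀ e ∈ E, e.card = 3

theorem mem_res {E : Finset (Finset V)} {v : V} {e : Finset V} :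
    e ∈ res E v ↔ e ∈ E ∧ v ∉ e := by simp [res]

theorem res_subset (E : Finset (Finset V)) (v : V) : res E v ⊆ E := Finset.filter_subset _ _

theorem Unif.mono {E F : Finset (Finset V)} (h : Unif E) (hs : F ⊆ E) : Unif F :=
  fun e he => h e (hs he)

theorem Unif.res {E : Finset (Finset V)} (h : Unif E) (v : V) : Unif (res E v) :=
  h.mono (res_subset E v)

theorem deg_mono {E F : Finset (Finset V)} (hs : F ⊆ E) (v : V) : deg F v ≤ deg E v :=
  Finset.card_le_card (Finset.filter_subset_filter _ hs)

theorem deg_pos {E : Finset (Finset V)} {v : V} : 0 < deg E v ↔ ∃ e ∈ E, v ∈ e := by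
  simp [deg, Finset.card_pos, Finset.Nonempty]

theorem deg_pos_of {E : Finset (Finset V)} {v : V} {e : Finset V} (he : e ∈ E) (hv : v ∈ e) :
    0 < deg E v := deg_pos.2 ⟨e, he, hv⟩

theorem deg_res (E : Finset (Finset V)) (v u : V) :
    deg (res E v) u + codeg E v u = deg E u := by
  unfold deg codeg res
  rw [Finset.filter_filter, ← Finset.card_union_of_disjoint]
  · congr 1
    ext e
    simp only [Finset.mem_union, Finset.mem_filter]
    tauto
  · rw [Finset.disjoint_left]
    intro e
    simp only [Finset.mem_filter]
    tauto

theorem codeg_self (E : Finset (Finset V)) (v : V) : codeg E v v = deg E v := by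
  simp [codeg, deg]

theorem codeg_comm (E : Finset (Finset V)) (v u : V) : codeg E v u = codeg E u v := by
  simp [codeg, and_comm]

theorem deg_res_self (E : Finset (Finset V)) (v : V) : deg (res E v) v = 0 := by
  have := deg_res E v v
  rw [codeg_self] at this
  omega

theorem codeg_pos {E : Finset (Finset V)} {v u : V} :
    0 < codeg E v u ↔ ∃ e ∈ E, v ∈ e ∧ u ∈ e := by
  simp [codeg, Finset.card_pos, Finset.Nonempty]

theorem card_res_add (E : Finset (Finset V)) (v : V) : (res E v).card + deg E v = E.card := by
  unfold res deg
  rw [add_comm]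
  exact Finset.card_filter_add_card_filter_not (s := E) (fun e => v ∈ e)

theorem card_res_lt {E : Finset (Finset V)} {v : V} (h : 0 < deg E v) :
    (res E v).card < E.card := by
  have := card_res_add E v
  omega

theorem wt_nonneg (n : ℕ) : 0 ≤ wt n := by
  match n with
  | 0 => simp [wt]
  | 1 => simp [wt]
  | 2 => simp [wt]
  | (n+3) => simp [wt]

theorem wt_mono {m n : ℕ} (h : m ≤ n) : wt m ≤ wt n := by
  match m, n with
  | 0, n => exact wt_nonneg n
  | 1, 1 => simp
  | 1, 2 => simp [wt]
  | 1, (n+3) => simp [wt]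
  | 2, 2 => simp
  | 2, (n+3) => simp [wt]
  | (m+3), (n+3) => simp [wt]
  | 1, 0 => omega
  | 2, 0 => omega
  | 2, 1 => omega
  | (m+3), 0 => omega
  | (m+3), 1 => omega
  | (m+3), 2 => omega

theorem bon_nonneg {γ : ℤ} (hγ : 0 ≤ γ) (k : ℕ) : 0 ≤ bon γ k := by
  unfold bon
  split_ifs <;> omega

theorem Phi_nonneg {γ : ℤ} (hγ : 0 ≤ γ) (E : Finset (Finset V)) : 0 ≤ Phi γ E := by
  unfold Phi
  have h1 : 0 ≤ ∑ v, wt (deg E v) := Finset.sum_nonneg fun v _ => wt_nonneg _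
  have h2 : 0 ≤ ∑ f ∈ E, bon γ (ones E f) := Finset.sum_nonneg fun v _ => bon_nonneg hγ _
  positivity

theorem Phi_zero_le_one (E : Finset (Finset V)) : Phi 0 E ≤ Phi 1 E := by
  unfold Phi
  have h2 : ∑ f ∈ E, bon 0 (ones E f) ≤ ∑ f ∈ E, bon 1 (ones E f) := by
    apply Finset.sum_le_sum
    intro f _
    unfold bon
    split_ifs <;> omega
  omega

/-! ### The game -/

theorem gameVal_empty (b : Bool) : gameVal b (∅ : Finset (Finset V)) = 0 := by
  rw [gameVal]
  simp [playable]

theorem gameVal_true_le {E : Finset (Finset V)} {v : V} (hv : 0 < deg E v) :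
    gameVal true E ≤ 1 + gameVal false (res E v) := by
  have hp : v ∈ playable E := by
    simpa [playable] using deg_pos.1 hv
  have hne : (playable E).Nonempty := ⟨v, hp⟩
  rw [gameVal, dif_pos hne]
  simp only [if_true, Bool.not_true]
  gcongr
  exact Finset.inf'_le (f := fun v : {x // x ∈ playable E} =>
    gameVal false (E.filter (fun e => v.1 ∉ e))) (Finset.mem_attach _ ⟨v, hp⟩)

theorem gameVal_false_le {E : Finset (Finset V)} {B : ℕ}
    (h : ∀ u, 0 < deg E u → 1 + gameVal true (res E u) ≤ B) : gameVal false E ≤ B := by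
  rw [gameVal]
  by_cases hne : (playable E).Nonempty
  · rw [dif_pos hne]
    simp only [Bool.not_false, Bool.false_eq_true, if_false]
    obtain ⟨v, hv, he⟩ := Finset.exists_mem_eq_sup' (Finset.attach_nonempty_iff.mpr hne)
      (fun v : {x // x ∈ playable E} => gameVal true (E.filter (fun e => v.1 ∉ e)))
    have hv' := v.2
    simp only [playable, Finset.mem_filter, Finset.mem_univ, true_and] at hv'
    have := h v.1 (deg_pos.2 hv')
    rw [he]
    exact this
  · rw [dif_neg hne]
    omega

/-- One round of the game. -/
theorem round {E : Finset (Finset V)} {C : ℤ} {v : V} (hv : 0 < deg E v)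
    (h0 : 272 ≤ C)
    (h : ∀ u, 0 < deg (res E v) u →
      272 * (gameVal true (res (res E v) u) : ℤ) + 544 ≤ C) :
    272 * (gameVal true E : ℤ) ≤ C := by
  have h1 := gameVal_true_le hv
  have h2 : gameVal false (res E v) ≤ ((C - 272) / 272).toNat := by
    apply gameVal_false_le
    intro u hu
    have := h u hu
    omega
  omega

end TG

namespace TG
open Finset

/-! ### The drop of the potential -/

/-- `u` gets degree one when `v` is played -/
def NewOne (E : Finset (Finset V)) (v u : V) : Prop := deg (res E v) u = 1 ∧ 0 < codeg E v u

instance (E : Finset (Finset V)) (v u : V) : Decidable (NewOne E v u) := by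
  unfold NewOne; infer_instance

/-- number of new degree one vertices in an edge -/
def nnew (E : Finset (Finset V)) (v : V) (f : Finset V) : ℕ :=
  (f.filter (fun u => NewOne E v u)).card

/-- charge of a surviving edge to each of its new degree one vertices -/
def chf (γ : ℤ) (E : Finset (Finset V)) (v : V) (f : Finset V) : ℤ :=
  if ones (res E v) f = 3 then (if 2 ≤ nnew E v f then 8 else 16)
  else if ones (res E v) f = 2 then (if 2 ≤ nnew E v f then γ else 2 * γ) else 0

/-- charge to a vertex -/
def ch (γ : ℤ) (E : Finset (Finset V)) (v u : V) : ℤ :=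
  ∑ f ∈ (res E v).filter (fun f => u ∈ f), chf γ E v f

/-- extra gain of a vertex -/
def ex (γ : ℤ) (E : Finset (Finset V)) (v u : V) : ℤ :=
  if codeg E v u = 0 then 0 else
  if deg (res E v) u = 0 then (if deg E u = 1 then 54 else 76) else
  if deg (res E v) u = 1 then 22 - ch γ E v u else 0

theorem chf_nonneg {γ : ℤ} (hγ : 0 ≤ γ) (E : Finset (Finset V)) (v : V) (f : Finset V) :
    0 ≤ chf γ E v f := by
  unfold chf
  split_ifs <;> omega

theorem chf_le {γ : ℤ} (hγ : γ ≤ 1) (E : Finset (Finset V)) (v : V) (f : Finset V) :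
    chf γ E v f ≤ 16 := by
  unfold chf
  split_ifs <;> omega

theorem ch_nonneg {γ : ℤ} (hγ : 0 ≤ γ) (E : Finset (Finset V)) (v u : V) :
    0 ≤ ch γ E v u := Finset.sum_nonneg fun _ _ => chf_nonneg hγ _ _ _

theorem ch_eq {γ : ℤ} {E : Finset (Finset V)} {v u : V} (h : deg (res E v) u = 1) :
    ∃ f ∈ res E v, u ∈ f ∧ (∀ g ∈ res E v, u ∈ g → g = f) ∧ ch γ E v u = chf γ E v f := by
  unfold deg at h
  obtain ⟨f, hf⟩ := Finset.card_eq_one.1 h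
  have hm : f ∈ (res E v).filter (fun e => u ∈ e) := by rw [hf]; simp
  rw [Finset.mem_filter] at hm
  refine ⟨f, hm.1, hm.2, ?_, ?_⟩
  · intro g hg hug
    have : g ∈ (res E v).filter (fun e => u ∈ e) := by simp [hg, hug]
    rw [hf] at this
    simpa using this
  · unfold ch
    rw [hf]
    simp

theorem ch_le {γ : ℤ} (hγ : γ ≤ 1) {E : Finset (Finset V)} {v u : V} (h : deg (res E v) u = 1) :
    ch γ E v u ≤ 16 := by
  obtain ⟨f, _, _, _, he⟩ := ch_eq (γ := γ) h
  rw [he]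
  exact chf_le hγ _ _ _

theorem bonus_le {γ : ℤ} (h0 : 0 ≤ γ) {E : Finset (Finset V)} (hU : Unif E) (v : V) :
    ∑ f ∈ res E v, (bon γ (ones (res E v) f) - bon γ (ones E f)) ≤
      ∑ u, (if NewOne E v u then ch γ E v u else 0) := by
  have h1 : ∑ u, (if NewOne E v u then ch γ E v u else 0) =
      ∑ f ∈ res E v, (nnew E v f : ℤ) * chf γ E v f := by
    unfold ch nnew
    simp_rw [Finset.sum_filter, Finset.card_filter]
    have : ∀ u : V, (if NewOne E v u then ∑ f ∈ res E v, (if u ∈ f then chf γ E v f else 0) else 0)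
        = ∑ f ∈ res E v, (if u ∈ f then (if NewOne E v u then chf γ E v f else 0) else 0) := by
      intro u
      by_cases h : NewOne E v u <;> simp [h]
    rw [Finset.sum_congr rfl fun u _ => this u, Finset.sum_comm]
    apply Finset.sum_congr rfl
    intro f _
    push_cast
    rw [Finset.sum_mul]
    simp only [ite_mul, one_mul, zero_mul]
    rw [Finset.sum_ite_mem, Finset.univ_inter]
  rw [h1]
  apply Finset.sum_le_sum
  intro f hf
  have hb := bon_nonneg h0 (ones E f)
  by_cases hn : nnew E v f = 0
  · have : ones (res E v) f = ones E f := by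
      unfold ones
      congr 1
      apply Finset.filter_congr
      intro u hu
      have hd := deg_res E v u
      have hp : 0 < deg (res E v) u := deg_pos_of hf hu
      unfold nnew at hn
      rw [Finset.card_eq_zero, Finset.filter_eq_empty_iff] at hn
      have := hn hu
      unfold NewOne at this
      constructor
      · intro h; 
        have : codeg E v u = 0 := by
          by_contra hc
          exact this ⟨h, by omega⟩
        omega
      · intro h; omega
    rw [this, hn]
    simp
  · have hb' : bon γ (ones (res E v) f) ≤ (nnew E v f : ℤ) * chf γ E v f := by
      unfold bon chf
      have h1 : (1:ℤ) ≤ (nnew E v f : ℤ) := by omega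
      split_ifs with h3 h4 h5 h6 <;> nlinarith
    omega

theorem sum_codeg {E : Finset (Finset V)} (hU : Unif E) (v : V) :
    ∑ u ∈ univ.erase v, codeg E v u = 2 * deg E v := by
  have h : ∑ u, codeg E v u = 3 * deg E v := by
    unfold codeg deg
    simp_rw [Finset.card_filter]
    rw [Finset.sum_comm, Finset.mul_sum]
    apply Finset.sum_congr rfl
    intro e he
    by_cases hv : v ∈ e
    · simp [hv, hU e he]
    · simp [hv]
  have h2 := Finset.add_sum_erase univ (fun u => codeg E v u) (Finset.mem_univ v)
  simp only [codeg_self] at h2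
  omega

/-- net gain of a vertex -/
def net (γ : ℤ) (E : Finset (Finset V)) (v u : V) : ℤ :=
  wt (deg E u) - wt (deg (res E v) u) - (if NewOne E v u then ch γ E v u else 0)

theorem net_nonneg {γ : ℤ} (h1 : γ ≤ 1) (E : Finset (Finset V)) (v u : V) :
    0 ≤ net γ E v u := by
  unfold net
  have hd := deg_res E v u
  split_ifs with h
  · have hc := ch_le h1 h.1
    rw [h.1]
    have : wt 2 ≤ wt (deg E u) := wt_mono (by have := h.1; have := h.2; omega)
    simp only [wt] at this ⊢
    omega
  · have := wt_mono (deg_mono (res_subset E v) u)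
    omega

theorem net_ge {γ : ℤ} (h1 : γ ≤ 1) {E : Finset (Finset V)} {v u : V} (hu : deg E u ≤ 3) :
    3 * (codeg E v u : ℤ) + ex γ E v u ≤ net γ E v u := by
  have hN : (if NewOne E v u then ch γ E v u else 0) =
      (if deg (res E v) u = 1 ∧ 0 < codeg E v u then ch γ E v u else 0) := by
    by_cases h : NewOne E v u
    · rw [if_pos h]; exact (if_pos h).symm
    · rw [if_neg h]; exact (if_neg h).symm
  unfold net ex
  rw [hN]
  have hd := deg_res E v u
  have hcl : deg (res E v) u = 1 → ch γ E v u ≤ 16 := fun h => ch_le h1 h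
  generalize ch γ E v u = q at *
  generalize deg (res E v) u = a at *
  generalize deg E u = b at *
  generalize codeg E v u = c at *
  have : a ≤ 3 := by omega
  have : c ≤ 3 := by omega
  interval_cases a <;> interval_cases c <;> first | (exfalso; omega) | (subst hd; simp [wt] at *; try omega)

theorem ex_nonneg {γ : ℤ} (h1 : γ ≤ 1) (E : Finset (Finset V)) (v u : V) :
    0 ≤ ex γ E v u := by
  unfold ex
  split_ifs with h2 h3 h4 h5
  · omega
  · omega
  · omega
  · have := ch_le h1 h5
    omega
  · omega

theorem Phi_res {γ : ℤ} (h0 : 0 ≤ γ) {E : Finset (Finset V)} (hU : Unif E) (v : V) :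
    Phi γ (res E v) + 85 * deg E v + wt (deg E v) + ∑ u ∈ univ.erase v, net γ E v u
      + ∑ e ∈ E.filter (fun e => v ∈ e), bon γ (ones E e) ≤ Phi γ E := by
  have hb := bonus_le h0 hU v
  have hc := card_res_add E v
  have hs : ∑ f ∈ E, bon γ (ones E f) =
      ∑ e ∈ E.filter (fun e => v ∈ e), bon γ (ones E e) + ∑ e ∈ res E v, bon γ (ones E e) :=
    (Finset.sum_filter_add_sum_filter_not E (fun e => v ∈ e) _).symm
  have hn : ∑ u, net γ E v u = ∑ u, wt (deg E u) - ∑ u, wt (deg (res E v) u) -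
      ∑ u, (if NewOne E v u then ch γ E v u else 0) := by
    unfold net
    rw [Finset.sum_sub_distrib, Finset.sum_sub_distrib]
  have hv : net γ E v v = wt (deg E v) := by
    unfold net NewOne
    simp [deg_res_self, wt]
  have he := Finset.add_sum_erase univ (fun u => net γ E v u) (Finset.mem_univ v)
  simp only [hv] at he
  rw [Finset.sum_sub_distrib] at hb
  unfold Phi
  rw [hs]
  have : ((res E v).card : ℤ) + deg E v = E.card := by exact_mod_cast hc
  linarith

/-- the drop, large degrees -/
theorem drop_big {γ : ℤ} (h0 : 0 ≤ γ) (h1 : γ ≤ 1) {E : Finset (Finset V)} (hU : Unif E) (v : V) :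
    Phi γ (res E v) + 85 * deg E v + wt (deg E v) ≤ Phi γ E := by
  have h := Phi_res h0 hU v
  have h2 : 0 ≤ ∑ u ∈ univ.erase v, net γ E v u := Finset.sum_nonneg fun u _ => net_nonneg h1 _ _ _
  have h3 : 0 ≤ ∑ e ∈ E.filter (fun e => v ∈ e), bon γ (ones E e) :=
    Finset.sum_nonneg fun u _ => bon_nonneg h0 _
  linarith

/-- the drop, degrees at most three -/
theorem drop_ex {γ : ℤ} (h0 : 0 ≤ γ) (h1 : γ ≤ 1) {E : Finset (Finset V)} (hU : Unif E)
    (hD : ∀ u, deg E u ≤ 3) (v : V) (A : Finset V) (hA : v ∉ A) :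
    Phi γ (res E v) + 91 * deg E v + wt (deg E v) + ∑ u ∈ A, ex γ E v u
      + ∑ e ∈ E.filter (fun e => v ∈ e), bon γ (ones E e) ≤ Phi γ E := by
  have h := Phi_res h0 hU v
  have h2 : ∑ u ∈ univ.erase v, (3 * (codeg E v u : ℤ) + ex γ E v u) ≤
      ∑ u ∈ univ.erase v, net γ E v u := Finset.sum_le_sum fun u _ => net_ge h1 (hD u)
  rw [Finset.sum_add_distrib, ← Finset.mul_sum] at h2
  have h3 : ∑ u ∈ univ.erase v, (codeg E v u : ℤ) = 2 * deg E v := by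
    exact_mod_cast sum_codeg hU v
  have h4 : ∑ u ∈ A, ex γ E v u ≤ ∑ u ∈ univ.erase v, ex γ E v u := by
    apply Finset.sum_le_sum_of_subset_of_nonneg
    · intro u hu
      simp only [Finset.mem_erase, Finset.mem_univ, and_true]
      rintro rfl
      exact hA hu
    · intro u _ _
      exact ex_nonneg h1 _ _ _
  rw [h3] at h2
  linarith

end TG

namespace TG
open Finset

/-! ### Local structure -/

theorem edge_form {E : Finset (Finset V)} (hU : Unif E) {e : Finset V} {v : V} (he : e ∈ E)
    (hv : v ∈ e) : ∃ a b, v ≠ a ∧ v ≠ b ∧ a ≠ b ∧ e = {v, a, b} := by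
  have hc : (e.erase v).card = 2 := by
    rw [Finset.card_erase_of_mem hv, hU e he]
  obtain ⟨a, b, hab, h⟩ := Finset.card_eq_two.1 hc
  have ha : a ∈ e.erase v := by rw [h]; simp
  have hb : b ∈ e.erase v := by rw [h]; simp
  refine ⟨a, b, (Finset.ne_of_mem_erase ha).symm, (Finset.ne_of_mem_erase hb).symm, hab, ?_⟩
  rw [← h, Finset.insert_erase hv]

theorem edge_form2 {E : Finset (Finset V)} (hU : Unif E) {e : Finset V} {v a : V} (he : e ∈ E)
    (hv : v ∈ e) (ha : a ∈ e) (hva : v ≠ a) : ∃ b, v ≠ b ∧ a ≠ b ∧ e = {v, a, b} := by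
  obtain ⟨x, y, h1, h2, h3, rfl⟩ := edge_form hU he hv
  simp only [Finset.mem_insert, Finset.mem_singleton] at ha
  rcases ha with rfl | rfl | rfl
  · exact absurd rfl hva
  · exact ⟨y, h2, h3, rfl⟩
  · exact ⟨x, h1, h3.symm, by rw [Finset.pair_comm]⟩

theorem deg_one {E : Finset (Finset V)} {v : V} (h : deg E v = 1) :
    ∃ e ∈ E, v ∈ e ∧ ∀ f ∈ E, v ∈ f → f = e := by
  obtain ⟨e, he⟩ := Finset.card_eq_one.1 h
  have hm : e ∈ E.filter (fun e => v ∈ e) := by rw [he]; simp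
  rw [Finset.mem_filter] at hm
  refine ⟨e, hm.1, hm.2, fun f hf hvf => ?_⟩
  have : f ∈ E.filter (fun e => v ∈ e) := by simp [hf, hvf]
  rw [he] at this
  simpa using this

theorem deg_two {E : Finset (Finset V)} {v : V} (h : deg E v = 2) :
    ∃ e ∈ E, ∃ e' ∈ E, e ≠ e' ∧ v ∈ e ∧ v ∈ e' ∧ ∀ f ∈ E, v ∈ f → f = e ∨ f = e' := by
  obtain ⟨e, e', hne, he⟩ := Finset.card_eq_two.1 h
  have hm : e ∈ E.filter (fun e => v ∈ e) := by rw [he]; simp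
  have hm' : e' ∈ E.filter (fun e => v ∈ e) := by rw [he]; simp
  rw [Finset.mem_filter] at hm hm'
  refine ⟨e, hm.1, e', hm'.1, hne, hm.2, hm'.2, fun f hf hvf => ?_⟩
  have : f ∈ E.filter (fun e => v ∈ e) := by simp [hf, hvf]
  rw [he] at this
  simpa using this

theorem two_le_deg {E : Finset (Finset V)} {v : V} {e f : Finset V} (he : e ∈ E) (hf : f ∈ E)
    (hne : e ≠ f) (hve : v ∈ e) (hvf : v ∈ f) : 2 ≤ deg E v := by
  unfold deg
  rw [← Finset.card_pair hne]
  apply Finset.card_le_card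
  intro g hg
  simp only [Finset.mem_insert, Finset.mem_singleton] at hg
  rcases hg with rfl | rfl <;> simp [*]

theorem two_le_codeg {E : Finset (Finset V)} {v u : V} {e f : Finset V} (he : e ∈ E) (hf : f ∈ E)
    (hne : e ≠ f) (hve : v ∈ e) (hvf : v ∈ f) (hue : u ∈ e) (huf : u ∈ f) : 2 ≤ codeg E v u := by
  unfold codeg
  rw [← Finset.card_pair hne]
  apply Finset.card_le_card
  intro g hg
  simp only [Finset.mem_insert, Finset.mem_singleton] at hg
  rcases hg with rfl | rfl <;> simp [*]

theorem codeg_pos_of {E : Finset (Finset V)} {v u : V} {e : Finset V} (he : e ∈ E)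
    (hv : v ∈ e) (hu : u ∈ e) : 0 < codeg E v u := codeg_pos.2 ⟨e, he, hv, hu⟩

theorem codeg_le (E : Finset (Finset V)) (v u : V) : codeg E v u ≤ deg E u := by
  have := deg_res E v u
  omega

theorem codeg_le' (E : Finset (Finset V)) (v u : V) : codeg E v u ≤ deg E v := by
  rw [codeg_comm]; exact codeg_le E u v

/-! ### Bounds for the extra gain -/

theorem ex_vanish {γ : ℤ} {E : Finset (Finset V)} {v u : V} (hc : 0 < codeg E v u)
    (hd : deg (res E v) u = 0) : 54 ≤ ex γ E v u := by
  unfold ex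
  rw [if_neg (by omega), if_pos hd]
  split_ifs <;> omega

theorem ex_vanish_two {γ : ℤ} {E : Finset (Finset V)} {v u : V} (hc : 0 < codeg E v u)
    (hd : deg (res E v) u = 0) (h2 : 2 ≤ deg E u) : 76 ≤ ex γ E v u := by
  unfold ex
  rw [if_neg (by omega), if_pos hd, if_neg (by omega)]

theorem ex_new {γ : ℤ} {E : Finset (Finset V)} {v u : V} (hn : NewOne E v u) :
    ∃ f ∈ E, v ∉ f ∧ u ∈ f ∧ (∀ g ∈ E, v ∉ g → u ∈ g → g = f) ∧
      ex γ E v u = 22 - chf γ E v f := by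
  obtain ⟨f, hf, huf, huniq, hch⟩ := ch_eq (γ := γ) hn.1
  rw [mem_res] at hf
  refine ⟨f, hf.1, hf.2, huf, fun g hg hvg hug => huniq g (mem_res.2 ⟨hg, hvg⟩) hug, ?_⟩
  unfold ex
  rw [if_neg (by have := hn.2; omega), if_neg (by have := hn.1; omega), if_pos hn.1, hch]

theorem ex_six {γ : ℤ} (h1 : γ ≤ 1) {E : Finset (Finset V)} {v u : V} (hc : 0 < codeg E v u)
    (hd : deg (res E v) u ≤ 1) : 6 ≤ ex γ E v u := by
  by_cases h : deg (res E v) u = 0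
  · have := ex_vanish (γ := γ) hc h
    omega
  · obtain ⟨f, _, _, _, _, he⟩ := ex_new (γ := γ) (E := E) (v := v) (u := u) ⟨by omega, hc⟩
    have := chf_le h1 E v f
    omega

theorem ones_three {E : Finset (Finset V)} {f : Finset V} (hf : f.card = 3) (h : ones E f = 3) :
    ∀ x ∈ f, deg E x = 1 := by
  unfold ones at h
  rw [← hf] at h
  exact Finset.card_filter_eq_iff.1 h

theorem ex_fourteen {γ : ℤ} (h1 : γ ≤ 1) {E : Finset (Finset V)} (hU : Unif E) {v u : V}
    (hc : 0 < codeg E v u) (hd : deg (res E v) u ≤ 1)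
    (hno : ∀ f ∈ E, v ∉ f → u ∈ f → ∃ x ∈ f, x ≠ u ∧ deg E x ≠ 1) : 14 ≤ ex γ E v u := by
  by_cases h : deg (res E v) u = 0
  · have := ex_vanish (γ := γ) hc h
    omega
  · have hn : NewOne E v u := ⟨by omega, hc⟩
    obtain ⟨f, hfE, hvf, huf, _, he⟩ := ex_new (γ := γ) hn
    rw [he]
    unfold chf
    split_ifs with h3 h4 h5 h6 <;> try omega
    exfalso
    obtain ⟨x, hxf, hxu, hx1⟩ := hno f hfE hvf huf
    have hx' := ones_three (hU f hfE) h3 x hxf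
    have hxn : NewOne E v x := ⟨hx', by have := deg_res E v x; omega⟩
    apply h4
    unfold nnew
    rw [← Finset.card_pair hxu]
    apply Finset.card_le_card
    intro g hg
    simp only [Finset.mem_insert, Finset.mem_singleton] at hg
    rcases hg with rfl | rfl <;> simp [*]

theorem ex_twenty {γ : ℤ} (h1 : γ ≤ 1) {E : Finset (Finset V)} (hU : Unif E) {v u : V}
    (hc : 0 < codeg E v u) (hd : deg (res E v) u ≤ 1)
    (hno : ∀ f ∈ E, v ∉ f → u ∈ f → ∃ x ∈ f, deg (res E v) x ≠ 1) : 20 ≤ ex γ E v u := by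
  by_cases h : deg (res E v) u = 0
  · have := ex_vanish (γ := γ) hc h
    omega
  · have hn : NewOne E v u := ⟨by omega, hc⟩
    obtain ⟨f, hfE, hvf, huf, _, he⟩ := ex_new (γ := γ) hn
    rw [he]
    obtain ⟨x, hxf, hx⟩ := hno f hfE hvf huf
    unfold chf
    split_ifs with h3 h4 h5 h6 <;> try omega
    · exact absurd (ones_three (hU f hfE) h3 x hxf) hx
    · exact absurd (ones_three (hU f hfE) h3 x hxf) hx

/-- no old degree-one vertices in the edge, and some vertex is not of degree one afterwards -/
theorem ex_twentyone {γ : ℤ} (h1 : γ ≤ 1) {E : Finset (Finset V)} (hU : Unif E) {v u : V}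
    (hc : 0 < codeg E v u) (hd : deg (res E v) u ≤ 1)
    (hno : ∀ f ∈ E, v ∉ f → u ∈ f → (∃ x ∈ f, deg (res E v) x ≠ 1) ∧ ∀ x ∈ f, deg E x ≠ 1) :
    21 ≤ ex γ E v u := by
  by_cases h : deg (res E v) u = 0
  · have := ex_vanish (γ := γ) hc h
    omega
  · have hn : NewOne E v u := ⟨by omega, hc⟩
    obtain ⟨f, hfE, hvf, huf, _, he⟩ := ex_new (γ := γ) hn
    rw [he]
    obtain ⟨⟨x, hxf, hx⟩, hold⟩ := hno f hfE hvf huf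
    unfold chf
    split_ifs with h3 h4 h5 h6 <;> try omega
    · exact absurd (ones_three (hU f hfE) h3 x hxf) hx
    · exact absurd (ones_three (hU f hfE) h3 x hxf) hx
    · exfalso
      apply h6
      rw [← h5]
      unfold ones nnew
      apply Finset.card_le_card
      intro y hy
      rw [Finset.mem_filter] at hy ⊢
      refine ⟨hy.1, hy.2, ?_⟩
      have := deg_res E v y
      have := hold y hy.1
      omega

theorem ex_twentytwo {γ : ℤ} {E : Finset (Finset V)} (hU : Unif E) {v u : V}
    (hc : 0 < codeg E v u) (hd : deg (res E v) u ≤ 1)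
    (hno : ∀ f ∈ E, v ∉ f → u ∈ f → ∀ x ∈ f, x ≠ u → deg (res E v) x ≠ 1) :
    22 ≤ ex γ E v u := by
  by_cases h : deg (res E v) u = 0
  · have := ex_vanish (γ := γ) hc h
    omega
  · have hn : NewOne E v u := ⟨by omega, hc⟩
    obtain ⟨f, hfE, hvf, huf, _, he⟩ := ex_new (γ := γ) hn
    rw [he]
    have h2 : ones (res E v) f ≤ 1 := by
      unfold ones
      rw [Finset.card_le_one]
      intro a ha b hb
      rw [Finset.mem_filter] at ha hb
      have := hno f hfE hvf huf
      by_cases hau : a = u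
      · by_cases hbu : b = u
        · rw [hau, hbu]
        · exact absurd hb.2 (this b hb.1 hbu)
      · exact absurd ha.2 (this a ha.1 hau)
    unfold chf
    rw [if_neg (by omega), if_neg (by omega)]
    omega

/-- for `γ = 0` -/
theorem ex_noiso {E : Finset (Finset V)} (hU : Unif E) {v u : V}
    (hc : 0 < codeg E v u) (hd : deg (res E v) u ≤ 1)
    (hno : ∀ f ∈ E, v ∉ f → u ∈ f → ∃ x ∈ f, deg (res E v) x ≠ 1) : 22 ≤ ex 0 E v u := by
  by_cases h : deg (res E v) u = 0
  · have := ex_vanish (γ := 0) hc h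
    omega
  · have hn : NewOne E v u := ⟨by omega, hc⟩
    obtain ⟨f, hfE, hvf, huf, _, he⟩ := ex_new (γ := 0) hn
    rw [he]
    obtain ⟨x, hxf, hx⟩ := hno f hfE hvf huf
    unfold chf
    split_ifs with h3 h4 h5 h6 <;> try omega
    · exact absurd (ones_three (hU f hfE) h3 x hxf) hx
    · exact absurd (ones_three (hU f hfE) h3 x hxf) hx

/-! ### Replies -/

/-- some edge contains a degree one vertex and a vertex of degree at least three -/
def P13 (E : Finset (Finset V)) : Prop :=
  ∃ e ∈ E, ∃ a ∈ e, ∃ b ∈ e, deg E a = 1 ∧ 3 ≤ deg E b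

/-- a pendant edge -/
def Pend (E : Finset (Finset V)) : Prop :=
  ∃ e ∈ E, ∃ u ∈ e, 2 ≤ deg E u ∧ ∀ x ∈ e, x ≠ u → deg E x = 1

/-- a vertex of degree two with degree one vertices in both edges -/
def QQ (E : Finset (Finset V)) : Prop :=
  ∃ w, deg E w = 2 ∧ ∀ e ∈ E, w ∈ e → ∃ a ∈ e, deg E a = 1

theorem drop_ge {γ : ℤ} (h0 : 0 ≤ γ) (h1 : γ ≤ 1) {E : Finset (Finset V)} (hU : Unif E)
    (hD : ∀ u, deg E u ≤ 3) (v : V) (A : Finset V) (hA : v ∉ A) :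
    Phi γ (res E v) + 91 * deg E v + wt (deg E v) + ∑ u ∈ A, ex γ E v u ≤ Phi γ E := by
  have h := drop_ex h0 h1 hU hD v A hA
  have h3 : 0 ≤ ∑ e ∈ E.filter (fun e => v ∈ e), bon γ (ones E e) :=
    Finset.sum_nonneg fun u _ => bon_nonneg h0 _
  linarith

theorem reply_two {γ : ℤ} (h0 : 0 ≤ γ) (h1 : γ ≤ 1) {E : Finset (Finset V)} (hU : Unif E)
    (hD : ∀ u, deg E u ≤ 3) {v : V} (hv : 2 ≤ deg E v) :
    Phi γ (res E v) + 264 ≤ Phi γ E := by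
  have h := drop_ge h0 h1 hU hD v ∅ (by simp)
  have h3 := hD v
  have : deg E v = 2 ∨ deg E v = 3 := by omega
  rcases this with h' | h' <;> rw [h'] at h <;> simp [wt] at h <;> omega

theorem reply_min {γ : ℤ} (h0 : 0 ≤ γ) (h1 : γ ≤ 1) {E : Finset (Finset V)} (hU : Unif E)
    (hD : ∀ u, deg E u ≤ 3) {v : V} (hv : 0 < deg E v) :
    Phi γ (res E v) + 148 ≤ Phi γ E := by
  have h := drop_ge h0 h1 hU hD v ∅ (by simp)
  have h3 := hD v
  have : deg E v = 1 ∨ deg E v = 2 ∨ deg E v = 3 := by omega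
  rcases this with h' | h' | h' <;> rw [h'] at h <;> simp [wt] at h <;> omega

theorem reply_edge {γ : ℤ} (h0 : 0 ≤ γ) (h1 : γ ≤ 1) {E : Finset (Finset V)} (hU : Unif E)
    (hD : ∀ u, deg E u ≤ 3) {v x y : V} (hv : deg E v = 1) (hx : v ≠ x) (hy : v ≠ y)
    (hxy : x ≠ y) : Phi γ (res E v) + 148 + ex γ E v x + ex γ E v y ≤ Phi γ E := by
  have h := drop_ge h0 h1 hU hD v {x, y} (by simp [hx, hy])
  rw [hv, Finset.sum_pair hxy] at h
  simp only [wt] at h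
  push_cast at h
  linarith

theorem reply_gen {γ : ℤ} (h0 : 0 ≤ γ) (h1 : γ ≤ 1) {E : Finset (Finset V)} (hU : Unif E)
    (hD : ∀ u, deg E u ≤ 3) {c : ℤ} (hc : c ≤ 54) {v : V} (hv : 0 < deg E v)
    (h : deg E v = 1 → ∀ e ∈ E, v ∈ e → ∀ x ∈ e, x ≠ v → c ≤ ex γ E v x) :
    Phi γ (res E v) + 148 + 2 * c ≤ Phi γ E := by
  by_cases h2 : 2 ≤ deg E v
  · have := reply_two h0 h1 hU hD h2
    omega
  · have hd : deg E v = 1 := by omega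
    obtain ⟨e, he, hve, _⟩ := deg_one hd
    obtain ⟨a, b, hva, hvb, hab, rfl⟩ := edge_form hU he hve
    have h3 := reply_edge h0 h1 hU hD hd hva hvb hab
    have ha := h hd _ he hve a (by simp) hva.symm
    have hb := h hd _ he hve b (by simp) hvb.symm
    linarith

theorem deg_res_le_one {E : Finset (Finset V)} {e : Finset V} {v x : V} (he : e ∈ E) (hv : v ∈ e)
    (hx : x ∈ e) (h2 : deg E x ≤ 2) : deg (res E v) x ≤ 1 := by
  have := deg_res E v x
  have := codeg_pos_of he hv hx
  omega

theorem deg_le_two_of {E : Finset (Finset V)} (hP : ¬ P13 E) {e : Finset V} {v x : V} (he : e ∈ E)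
    (hv : v ∈ e) (hx : x ∈ e) (h1 : deg E v = 1) : deg E x ≤ 2 := by
  by_contra h
  exact hP ⟨e, he, v, hv, x, hx, h1, by omega⟩

theorem reply_noP {γ : ℤ} (h0 : 0 ≤ γ) (h1 : γ ≤ 1) {E : Finset (Finset V)} (hU : Unif E)
    (hD : ∀ u, deg E u ≤ 3) (hP : ¬ P13 E) {v : V} (hv : 0 < deg E v) :
    Phi γ (res E v) + 160 ≤ Phi γ E := by
  have := reply_gen h0 h1 hU hD (c := 6) (by norm_num) hv (fun hd e he hve x hxe _ =>
    ex_six h1 (codeg_pos_of he hve hxe) (deg_res_le_one he hve hxe (deg_le_two_of hP he hve hxe hd)))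
  linarith

theorem reply_noPend {γ : ℤ} (h0 : 0 ≤ γ) (h1 : γ ≤ 1) {E : Finset (Finset V)} (hU : Unif E)
    (hD : ∀ u, deg E u ≤ 3) (hP : ¬ P13 E)
    (hQ : ¬ ∃ w, ∃ e ∈ E, ∃ f ∈ E, ∃ a ∈ e, deg E a = 1 ∧ a ≠ w ∧ a ∉ f ∧ w ∈ e ∧ w ∈ f ∧
      ∀ x ∈ f, x ≠ w → deg E x = 1)
    {v : V} (hv : 0 < deg E v) :
    Phi γ (res E v) + 176 ≤ Phi γ E := by
  have := reply_gen h0 h1 hU hD (c := 14) (by norm_num) hv (fun hd e he hve x hxe hne =>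
    ex_fourteen h1 hU (codeg_pos_of he hve hxe)
      (deg_res_le_one he hve hxe (deg_le_two_of hP he hve hxe hd)) (by
        intro f hf hvf hxf
        by_contra hcon
        push Not at hcon
        exact hQ ⟨x, e, he, f, hf, v, hve, hd, hne.symm, hvf, hxe, hxf, hcon⟩))
  linarith

theorem reply_noPend' {γ : ℤ} (h0 : 0 ≤ γ) (h1 : γ ≤ 1) {E : Finset (Finset V)} (hU : Unif E)
    (hD : ∀ u, deg E u ≤ 3) (hP : ¬ P13 E) (hQ : ¬ Pend E)
    {v : V} (hv : 0 < deg E v) :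
    Phi γ (res E v) + 176 ≤ Phi γ E := by
  apply reply_noPend h0 h1 hU hD hP _ hv
  rintro ⟨w, e, he, f, hf, a, hae, ha, haw, haf, hwe, hwf, hx⟩
  refine hQ ⟨f, hf, w, hwf, ?_, hx⟩
  exact two_le_deg he hf (by rintro rfl; exact haf hae) hwe hwf

theorem reply_noQQ {γ : ℤ} (h0 : 0 ≤ γ) (h1 : γ ≤ 1) {E : Finset (Finset V)} (hU : Unif E)
    (hD : ∀ u, deg E u ≤ 3) (hP : ¬ P13 E) (hQ : ¬ QQ E)
    {v : V} (hv : 0 < deg E v) :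
    Phi γ (res E v) + 190 ≤ Phi γ E := by
  have := reply_gen h0 h1 hU hD (c := 21) (by norm_num) hv (fun hd e he hve x hxe hne => by
    have hx2 := deg_le_two_of hP he hve hxe hd
    have hcp := codeg_pos_of he hve hxe
    have hd1 := deg_res_le_one he hve hxe hx2
    apply ex_twentyone h1 hU hcp hd1
    intro f hf hvf hxf
    have hef : e ≠ f := by rintro rfl; exact hvf hve
    have hdx : deg E x = 2 := by
      have := two_le_deg he hf hef hxe hxf
      omega
    have hold : ∀ y ∈ f, deg E y ≠ 1 := by
      intro y hyf hy1
      apply hQ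
      refine ⟨x, hdx, ?_⟩
      intro g hg hxg
      by_cases hge : g = e
      · exact ⟨v, hge ▸ hve, hd⟩
      · by_cases hgf : g = f
        · exact ⟨y, hgf ▸ hyf, hy1⟩
        · exfalso
          obtain ⟨e1, _, e2, _, _, _, _, h3⟩ := deg_two hdx
          rcases h3 e he hxe with h | h <;> rcases h3 f hf hxf with h' | h' <;>
            rcases h3 g hg hxg with h'' | h'' <;> simp_all
    refine ⟨?_, hold⟩
    by_contra hcon
    push Not at hcon
    obtain ⟨eu, heu, hveu, hun⟩ := deg_one hd
    -- all vertices of f would be in e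
    have hsub : f ⊆ e := by
      intro y hy
      have := hcon y hy
      have h3 := deg_res E v y
      have h4 := hold y hy
      have h5 : 0 < codeg E v y := by omega
      obtain ⟨g, hg, hvg, hyg⟩ := codeg_pos.1 h5
      have := hun g hg hvg
      have := hun e he hve
      simp_all
    exact hef (Finset.eq_of_subset_of_card_le hsub (by rw [hU e he, hU f hf])).symm)
  linarith

end TG

namespace TG
open Finset

/-! ### Rounds -/

theorem round_gen {γ k s D R : ℤ} (h0 : 0 ≤ γ) {E : Finset (Finset V)} {v : V} (hv : 0 < deg E v)
    (hD : Phi γ (res E v) + D ≤ Phi γ E)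
    (hR : ∀ u, 0 < deg (res E v) u → Phi γ (res (res E v) u) + R ≤ Phi γ (res E v))
    (hIH : ∀ F, F ⊆ E → F.card < E.card → 272 * (gameVal true F : ℤ) ≤ Phi γ F + s)
    (h : 544 + s ≤ D + R + k) (h272 : 272 ≤ D + k) :
    272 * (gameVal true E : ℤ) ≤ Phi γ E + k := by
  apply round hv
  · have := Phi_nonneg h0 (res E v)
    omega
  · intro u hu
    have h1 := hR u hu
    have h2 := hIH (res (res E v) u) ((res_subset _ _).trans (res_subset _ _))
      (lt_of_le_of_lt (Finset.card_le_card (res_subset _ _)) (card_res_lt hv))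
    omega

theorem deg_eq_two_form {E : Finset (Finset V)} (hU : Unif E) {v : V} (h : deg E v = 2) :
    (∃ p q r s, v ≠ p ∧ v ≠ q ∧ v ≠ r ∧ v ≠ s ∧ p ≠ q ∧ p ≠ r ∧ p ≠ s ∧ q ≠ r ∧ q ≠ s ∧ r ≠ s ∧
      {v, p, q} ∈ E ∧ {v, r, s} ∈ E ∧ ∀ e ∈ E, v ∈ e → e = {v, p, q} ∨ e = {v, r, s}) ∨
    (∃ p q s, v ≠ p ∧ v ≠ q ∧ v ≠ s ∧ p ≠ q ∧ p ≠ s ∧ q ≠ s ∧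
      {v, p, q} ∈ E ∧ {v, p, s} ∈ E ∧ ∀ e ∈ E, v ∈ e → e = {v, p, q} ∨ e = {v, p, s}) := by
  obtain ⟨e, he, f, hf, hef, hve, hvf, hall⟩ := deg_two h
  obtain ⟨p, q, h1, h2, h3, rfl⟩ := edge_form hU he hve
  obtain ⟨r, s, h4, h5, h6, rfl⟩ := edge_form hU hf hvf
  by_cases hpr : p = r
  · subst hpr
    right
    refine ⟨p, q, s, h1, h2, h5, h3, h6, ?_, he, hf, hall⟩
    rintro rfl; exact hef rfl
  by_cases hps : p = s
  · subst hps
    right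
    rw [Finset.pair_comm r p] at hf hef hall
    refine ⟨p, q, r, h1, h2, h4, h3, Ne.symm h6, ?_, he, hf, hall⟩
    rintro rfl; exact hef rfl
  by_cases hqr : q = r
  · subst hqr
    right
    rw [Finset.pair_comm p q] at he hef hall
    refine ⟨q, p, s, h2, h1, h5, Ne.symm h3, h6, ?_, he, hf, hall⟩
    rintro rfl; exact hef rfl
  by_cases hqs : q = s
  · subst hqs
    right
    rw [Finset.pair_comm r q] at hf hef hall
    rw [Finset.pair_comm p q] at he hef hall
    refine ⟨q, p, r, h2, h1, h4, Ne.symm h3, Ne.symm h6, ?_, he, hf, hall⟩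
    rintro rfl; exact hef rfl
  left
  exact ⟨p, q, r, s, h1, h2, h4, h5, h3, hpr, hps, hqr, hqs, h6, he, hf, hall⟩

theorem ex_one {γ : ℤ} {E : Finset (Finset V)} {v u : V} (hc : 0 < codeg E v u)
    (h1 : deg E u = 1) : 54 ≤ ex γ E v u := by
  apply ex_vanish hc
  have := deg_res E v u
  omega

theorem ex_dbl {γ : ℤ} {E : Finset (Finset V)} {v u : V} (hc : 2 ≤ codeg E v u)
    (h1 : deg E u ≤ 2) : 76 ≤ ex γ E v u := by
  have := deg_res E v u
  apply ex_vanish_two <;> omega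

theorem iso_drop {γ : ℤ} (h0 : 0 ≤ γ) (h1 : γ ≤ 1) {E : Finset (Finset V)} (hU : Unif E)
    (hD : ∀ u, deg E u ≤ 3) {v : V} {e : Finset V} (he : e ∈ E) (hve : v ∈ e)
    (hall : ∀ x ∈ e, deg E x = 1) : Phi γ (res E v) + 272 ≤ Phi γ E := by
  obtain ⟨a, b, hva, hvb, hab, rfl⟩ := edge_form hU he hve
  have h := drop_ex h0 h1 hU hD v {a, b} (by simp [hva, hvb])
  have hv1 := hall v hve
  have ha := ex_one (γ := γ) (codeg_pos_of he hve (by simp : a ∈ _)) (hall a (by simp))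
  have hb := ex_one (γ := γ) (codeg_pos_of he hve (by simp : b ∈ _)) (hall b (by simp))
  rw [hv1, Finset.sum_pair hab] at h
  have hs : bon γ (ones E {v, a, b}) ≤
      ∑ e ∈ E.filter (fun e => v ∈ e), bon γ (ones E e) := by
    apply Finset.single_le_sum (f := fun e => bon γ (ones E e))
    · intro i _; exact bon_nonneg h0 _
    · simp [he]
  have h3 : ones E {v, a, b} = 3 := by
    unfold ones
    rw [Finset.filter_true_of_mem hall, hU _ he]
  rw [h3] at hs
  simp only [bon, wt] at h hs
  push_cast at h
  simp only [if_true] at hs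
  linarith

/-! ### Maximum degree two -/

section D2

variable {E : Finset (Finset V)}

theorem d2_drop4 (hU : Unif E) (hD : ∀ u, deg E u ≤ 3) {v p q r s : V} (hv : deg E v = 2)
    (h : v ≠ p ∧ v ≠ q ∧ v ≠ r ∧ v ≠ s ∧ p ≠ q ∧ p ≠ r ∧ p ≠ s ∧ q ≠ r ∧ q ≠ s ∧ r ≠ s)
    {γ : ℤ} (h0 : 0 ≤ γ) (h1 : γ ≤ 1) :
    Phi γ (res E v) + 264 + ex γ E v p + ex γ E v q + ex γ E v r + ex γ E v s ≤ Phi γ E := by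
  obtain ⟨a1, a2, a3, a4, a5, a6, a7, a8, a9, a10⟩ := h
  have h := drop_ge h0 h1 hU hD v {p, q, r, s} (by simp [*])
  rw [hv, Finset.sum_insert (by simp [*]), Finset.sum_insert (by simp [*]),
    Finset.sum_pair a10] at h
  simp only [wt] at h
  push_cast at h
  linarith

theorem d2_drop3 (hU : Unif E) (hD : ∀ u, deg E u ≤ 3) {v p q s : V} (hv : deg E v = 2)
    (h : v ≠ p ∧ v ≠ q ∧ v ≠ s ∧ p ≠ q ∧ p ≠ s ∧ q ≠ s)
    {γ : ℤ} (h0 : 0 ≤ γ) (h1 : γ ≤ 1) :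
    Phi γ (res E v) + 264 + ex γ E v p + ex γ E v q + ex γ E v s ≤ Phi γ E := by
  obtain ⟨a1, a2, a3, a4, a5, a6⟩ := h
  have h := drop_ge h0 h1 hU hD v {p, q, s} (by simp [*])
  rw [hv, Finset.sum_insert (by simp [*]), Finset.sum_pair a6] at h
  simp only [wt] at h
  push_cast at h
  linarith

/-- no vertex of degree two has two neighbours of degree one -/
def H1 (E : Finset (Finset V)) : Prop :=
  ∀ v a b, deg E v = 2 → a ≠ b → deg E a = 1 → deg E b = 1 → 0 < codeg E v a →
    0 < codeg E v b → False

/-- no two vertices of degree two in two common edges -/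
def H2 (E : Finset (Finset V)) : Prop :=
  ∀ v p, deg E v = 2 → v ≠ p → codeg E v p ≤ 1

theorem noP13_of (hD : ∀ u, deg E u ≤ 2) : ¬ P13 E := by
  rintro ⟨e, _, a, _, b, _, _, hb⟩
  have := hD b
  omega

theorem res_deg_le {n : ℕ} (hD : ∀ u, deg E u ≤ n) (v : V) : ∀ u, deg (res E v) u ≤ n :=
  fun u => (deg_mono (res_subset E v) u).trans (hD u)

theorem d2_R1 (hU : Unif E) (hD : ∀ u, deg E u ≤ 2) (h : ¬ H1 E)
    (hIH : ∀ F, F ⊆ E → F.card < E.card → 272 * (gameVal true F : ℤ) ≤ Phi 0 F) :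
    272 * (gameVal true E : ℤ) ≤ Phi 0 E := by
  have hD3 : ∀ u, deg E u ≤ 3 := fun u => (hD u).trans (by norm_num)
  unfold H1 at h
  push Not at h
  obtain ⟨v, a, b, hv, hab, ha1, hb1, hca, hcb, -⟩ := h
  have hdrop : Phi 0 (res E v) + 384 ≤ Phi 0 E := by
    have h6 : ∀ x, 0 < codeg E v x → 6 ≤ ex 0 E v x := fun x hx => by
      apply ex_six (by norm_num) hx
      have := deg_res E v x
      have := hD x
      omega
    have h54a := ex_one (γ := 0) hca ha1
    have h54b := ex_one (γ := 0) hcb hb1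
    obtain ⟨ea, hea, hvea, haea⟩ := codeg_pos.1 hca
    obtain ⟨eb, heb, hveb, hbeb⟩ := codeg_pos.1 hcb
    have hva : v ≠ a := by rintro rfl; omega
    have hvb : v ≠ b := by rintro rfl; omega
    rcases deg_eq_two_form hU hv with ⟨p, q, r, s, a1, a2, a3, a4, a5, a6, a7, a8, a9, a10, he, hf, hall⟩ |
      ⟨p, q, s, a1, a2, a3, a4, a5, a6, he, hf, hall⟩
    · have hd := d2_drop4 hU hD3 hv ⟨a1, a2, a3, a4, a5, a6, a7, a8, a9, a10⟩ (γ := 0) (by norm_num) (by norm_num)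
      have hp := h6 p (codeg_pos_of he (by simp) (by simp))
      have hq := h6 q (codeg_pos_of he (by simp) (by simp))
      have hr := h6 r (codeg_pos_of hf (by simp) (by simp))
      have hs := h6 s (codeg_pos_of hf (by simp) (by simp))
      have hma : a = p ∨ a = q ∨ a = r ∨ a = s := by
        rcases hall ea hea hvea with rfl | rfl <;>
          simp only [Finset.mem_insert, Finset.mem_singleton] at haea <;> tauto
      have hmb : b = p ∨ b = q ∨ b = r ∨ b = s := by
        rcases hall eb heb hveb with rfl | rfl <;>
          simp only [Finset.mem_insert, Finset.mem_singleton] at hbeb <;> tauto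
      rcases hma with rfl | rfl | rfl | rfl <;> rcases hmb with rfl | rfl | rfl | rfl <;>
        first | exact absurd rfl hab | linarith
    · have hd := d2_drop3 hU hD3 hv ⟨a1, a2, a3, a4, a5, a6⟩ (γ := 0) (by norm_num) (by norm_num)
      have hne : ({v, p, q} : Finset V) ≠ {v, p, s} := by
        intro h
        have : q ∈ ({v, p, s} : Finset V) := by rw [← h]; simp
        simp only [Finset.mem_insert, Finset.mem_singleton] at this
        rcases this with h | h | h
        · exact a2 h.symm
        · exact a4 h.symm
        · exact a6 h
      have hc2 := two_le_codeg he hf hne (by simp : v ∈ _) (by simp) (by simp : p ∈ _) (by simp)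
      have hp := ex_dbl (γ := 0) hc2 (hD p)
      have hp2 := codeg_le E v p
      have hma : a = q ∨ a = s := by
        have : a ≠ p := by rintro rfl; omega
        rcases hall ea hea hvea with rfl | rfl <;>
          simp only [Finset.mem_insert, Finset.mem_singleton] at haea <;> tauto
      have hmb : b = q ∨ b = s := by
        have : b ≠ p := by rintro rfl; omega
        rcases hall eb heb hveb with rfl | rfl <;>
          simp only [Finset.mem_insert, Finset.mem_singleton] at hbeb <;> tauto
      rcases hma with rfl | rfl <;> rcases hmb with rfl | rfl <;>
        first | exact absurd rfl hab | linarith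
  have := round_gen (k := 0) (s := 0) (γ := 0) le_rfl (by omega) hdrop
    (fun u hu => reply_noP le_rfl (by norm_num) (hU.res v) (res_deg_le hD3 v)
      (noP13_of (res_deg_le hD v)) hu) (by simpa using hIH) (by norm_num) (by norm_num)
  simpa using this

theorem d2_R2 (hU : Unif E) (hD : ∀ u, deg E u ≤ 2) (hH1 : H1 E) (h : ¬ H2 E)
    (hIH : ∀ F, F ⊆ E → F.card < E.card → 272 * (gameVal true F : ℤ) ≤ Phi 0 F) :
    272 * (gameVal true E : ℤ) ≤ Phi 0 E := by
  have hD3 : ∀ u, deg E u ≤ 3 := fun u => (hD u).trans (by norm_num)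
  unfold H2 at h
  push Not at h
  obtain ⟨v, p, hv, hvp, hc⟩ := h
  have hp2 : deg E p = 2 := by
    have := codeg_le E v p
    have := hD p
    omega
  -- structure
  have hform : ∃ q s, v ≠ q ∧ v ≠ s ∧ p ≠ q ∧ p ≠ s ∧ q ≠ s ∧ {v, p, q} ∈ E ∧ {v, p, s} ∈ E ∧
      ∀ e ∈ E, v ∈ e → e = {v, p, q} ∨ e = {v, p, s} := by
    obtain ⟨e, f, hef, hh⟩ := Finset.one_lt_card_iff.1 (show 1 < (E.filter (fun e => v ∈ e ∧ p ∈ e)).card from hc)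
    obtain ⟨h2, h3⟩ := hh
    simp only [Finset.mem_filter] at hef h2
    obtain ⟨q, b1, b2, rfl⟩ := edge_form2 hU hef.1 hef.2.1 hef.2.2 hvp
    obtain ⟨s, c1, c2, rfl⟩ := edge_form2 hU h2.1 h2.2.1 h2.2.2 hvp
    refine ⟨q, s, b1, c1, b2, c2, ?_, hef.1, h2.1, ?_⟩
    · rintro rfl; exact h3 rfl
    · intro e he hve
      obtain ⟨e1, _, e2, _, _, _, _, h4⟩ := deg_two hv
      rcases h4 e he hve with h | h <;> rcases h4 _ hef.1 hef.2.1 with h' | h' <;>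
            rcases h4 _ h2.1 h2.2.1 with h'' | h'' <;> simp_all
  obtain ⟨q, s, a2, a3, a4, a5, a6, he, hf, hall⟩ := hform
  have hd := d2_drop3 hU hD3 hv ⟨hvp, a2, a3, a4, a5, a6⟩ (γ := 0) (by norm_num) (by norm_num)
  have hp := ex_dbl (γ := 0) (v := v) (u := p) hc (hD p)
  have hcq : 0 < codeg E v q := codeg_pos_of he (by simp) (by simp)
  have hcs : 0 < codeg E v s := codeg_pos_of hf (by simp) (by simp)
  have hdq : deg (res E v) q ≤ 1 := by have := deg_res E v q; have := hD q; omega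
  have hds : deg (res E v) s ≤ 1 := by have := deg_res E v s; have := hD s; omega
  have hq6 := ex_six (γ := 0) (by norm_num) hcq hdq
  have hs6 := ex_six (γ := 0) (by norm_num) hcs hds
  have fin : ∀ D R : ℤ, Phi 0 (res E v) + D ≤ Phi 0 E →
      (∀ u, 0 < deg (res E v) u → Phi 0 (res (res E v) u) + R ≤ Phi 0 (res E v)) →
      544 ≤ D + R → 272 ≤ D → 272 * (gameVal true E : ℤ) ≤ Phi 0 E := by
    intro D R h1 h2 h3 h4
    have := round_gen (k := 0) (s := 0) (γ := 0) le_rfl (by omega) h1 h2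
     (by simpa using hIH) (by omega) (by omega)
    simpa using this
  have h160 : ∀ u, 0 < deg (res E v) u → Phi 0 (res (res E v) u) + 160 ≤ Phi 0 (res E v) :=
    fun u hu => reply_noP le_rfl (by norm_num) (hU.res v) (res_deg_le hD3 v)
      (noP13_of (res_deg_le hD v)) hu
  by_cases hq1 : deg E q = 1
  · have := ex_one (γ := 0) hcq hq1
    exact fin 384 160 (by linarith) h160 (by norm_num) (by norm_num)
  by_cases hs1 : deg E s = 1
  · have := ex_one (γ := 0) hcs hs1
    exact fin 384 160 (by linarith) h160 (by norm_num) (by norm_num)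
  have hq2 : deg E q = 2 := by have := hD q; have := codeg_le E v q; omega
  have hs2 : deg E s = 2 := by have := hD s; have := codeg_le E v s; omega
  -- a lone vertex with two old ones is impossible
  have hno : ∀ x, deg E x = 2 → ∀ f ∈ E, v ∉ f → x ∈ f → ∃ y ∈ f, y ≠ x ∧ deg E y ≠ 1 := by
    intro x hx f hf hvf hxf
    by_contra hcon
    push Not at hcon
    obtain ⟨y, z, b1, b2, b3, rfl⟩ := edge_form hU hf hxf
    exact hH1 x y z hx b3 (hcon y (by simp) b1.symm) (hcon z (by simp) b2.symm)
      (codeg_pos_of hf hxf (by simp)) (codeg_pos_of hf hxf (by simp))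
  by_cases hiso : ∃ f ∈ E, v ∉ f ∧ ∀ x ∈ f, deg (res E v) x = 1 ∧ (q ∈ f ∨ s ∈ f)
  · obtain ⟨f, hfE, hvf, hf1⟩ := hiso
    have h14q := ex_fourteen (γ := 0) (by norm_num) hU hcq hdq (hno q hq2)
    have h14s := ex_fourteen (γ := 0) (by norm_num) hU hcs hds (hno s hs2)
    have hnew : ∀ x ∈ f, deg E x = 1 ∨ x = q ∨ x = s := by
      intro x hx
      have h1 := (hf1 x hx).1
      have h2 := deg_res E v x
      by_cases hc0 : codeg E v x = 0
      · left; omega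
      · right
        obtain ⟨g, hg, hvg, hxg⟩ := codeg_pos.1 (Nat.pos_of_ne_zero hc0)
        have hxv : x ≠ v := by rintro rfl; exact hvf hx
        have hxp : x ≠ p := by
          rintro rfl
          have := deg_res E v x
          omega
        rcases hall g hg hvg with rfl | rfl <;>
          simp only [Finset.mem_insert, Finset.mem_singleton] at hxg <;> tauto
    have hqs : q ∈ f ∧ s ∈ f := by
      have hne : f.Nonempty := by
        rw [← Finset.card_pos, hU f hfE]; norm_num
      obtain ⟨x, hx⟩ := hne
      rcases (hf1 x hx).2 with h | h
      · refine ⟨h, ?_⟩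
        obtain ⟨y, hy, hyq, hy1⟩ := hno q hq2 f hfE hvf h
        rcases hnew y hy with h' | h' | h'
        · exact absurd h' hy1
        · exact absurd h' hyq
        · exact h' ▸ hy
      · refine ⟨?_, h⟩
        obtain ⟨y, hy, hyq, hy1⟩ := hno s hs2 f hfE hvf h
        rcases hnew y hy with h' | h' | h'
        · exact absurd h' hy1
        · exact h' ▸ hy
        · exact absurd h' hyq
    refine fin 368 176 (by linarith) (fun u hu => reply_noPend le_rfl (by norm_num) (hU.res v)
      (res_deg_le hD3 v) (noP13_of (res_deg_le hD v)) ?_ hu) (by norm_num) (by norm_num)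
    rintro ⟨w, e, he', g, hg, a, hae, ha1, haw, hag, hwe, hwg, hgx⟩
    have hwd : 2 ≤ deg (res E v) w :=
      two_le_deg he' hg (by rintro rfl; exact hag hae) hwe hwg
    have hwE : deg E w = 2 := by
      have := deg_mono (res_subset E v) w
      have := hD w
      omega
    rw [mem_res] at hg
    obtain ⟨y, hy, hyw, hy1⟩ := hno w hwE g hg.1 hg.2 hwg
    have hy1' := hgx y hy hyw
    have hyr := deg_res E v y
    have hcy : 0 < codeg E v y := by omega
    -- so y is q or s
    have hyqs : y = q ∨ y = s := by
      obtain ⟨g', hg', hvg, hxg⟩ := codeg_pos.1 hcy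
      have hxv : y ≠ v := by rintro rfl; exact hg.2 hy
      have hxp : y ≠ p := by
        rintro rfl
        omega
      rcases hall g' hg' hvg with rfl | rfl <;>
        simp only [Finset.mem_insert, Finset.mem_singleton] at hxg <;> tauto
    have hyf : y ∈ f := by rcases hyqs with rfl | rfl; exacts [hqs.1, hqs.2]
    obtain ⟨e0, _, _, hun⟩ := deg_one hy1'
    have h1 := hun g (mem_res.2 hg) hy
    have h2 := hun f (mem_res.2 ⟨hfE, hvf⟩) hyf
    have : w ∈ f := by rw [h2, ← h1]; exact hwg
    have := (hf1 w this).1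
    omega
  · push Not at hiso
    have hq22 := ex_noiso hU hcq hdq (by
      intro f hf hvf hqf
      by_contra hcon
      push Not at hcon
      obtain ⟨x, hx, hx'⟩ := hiso f hf hvf
      exact (hx' (hcon x hx)).1 hqf)
    have hs22 := ex_noiso hU hcs hds (by
      intro f hf hvf hqf
      by_contra hcon
      push Not at hcon
      obtain ⟨x, hx, hx'⟩ := hiso f hf hvf
      exact (hx' (hcon x hx)).2 hqf)
    exact fin 384 160 (by linarith) h160 (by norm_num) (by norm_num)

end D2
end TG

namespace TG
open Finset

section D2

variable {E : Finset (Finset V)}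

theorem deg_two_only {v : V} {e f g : Finset V} (h : deg E v ≤ 2) (he : e ∈ E) (hf : f ∈ E)
    (hg : g ∈ E) (hef : e ≠ f) (hve : v ∈ e) (hvf : v ∈ f) (hvg : v ∈ g) : g = e ∨ g = f := by
  have h2 : deg E v = 2 := le_antisymm h (two_le_deg he hf hef hve hvf)
  obtain ⟨e1, _, e2, _, _, _, _, h4⟩ := deg_two h2
  rcases h4 e he hve with h | h <;> rcases h4 f hf hvf with h' | h' <;>
    rcases h4 g hg hvg with h'' | h'' <;> simp_all

/-- a vertex in exactly two edges, with four distinct neighbours -/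
def Star2 (E : Finset (Finset V)) (v p q r s : V) : Prop :=
  (v ≠ p ∧ v ≠ q ∧ v ≠ r ∧ v ≠ s ∧ p ≠ q ∧ p ≠ r ∧ p ≠ s ∧ q ≠ r ∧ q ≠ s ∧ r ≠ s) ∧
      {v, p, q} ∈ E ∧ {v, r, s} ∈ E ∧ ∀ e ∈ E, v ∈ e → e = {v, p, q} ∨ e = {v, r, s}

theorem Star2.swap1 {v p q r s : V} (h : Star2 E v p q r s) : Star2 E v q p r s := by
  obtain ⟨⟨a1, a2, a3, a4, a5, a6, a7, a8, a9, a10⟩, h1, h2, h3⟩ := h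
  rw [Finset.pair_comm p q] at h1 h3
  exact ⟨⟨a2, a1, a3, a4, a5.symm, a8, a9, a6, a7, a10⟩, h1, h2, h3⟩

theorem Star2.swap {v p q r s : V} (h : Star2 E v p q r s) : Star2 E v r s p q := by
  obtain ⟨⟨a1, a2, a3, a4, a5, a6, a7, a8, a9, a10⟩, h1, h2, h3⟩ := h
  exact ⟨⟨a3, a4, a1, a2, a10, a6.symm, a8.symm, a7.symm, a9.symm, a5⟩, h2, h1,
    fun e he hv => (h3 e he hv).symm⟩

theorem Star2.nbr {v p q r s x : V} (h : Star2 E v p q r s) (hx : 0 < codeg E v x) (hxv : x ≠ v) :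
    x = p ∨ x = q ∨ x = r ∨ x = s := by
  obtain ⟨e, he, hve, hxe⟩ := codeg_pos.1 hx
  rcases h.2.2.2 e he hve with rfl | rfl <;>
          simp only [Finset.mem_insert, Finset.mem_singleton] at hxe <;> tauto

theorem star2_of (hU : Unif E) (hH2 : H2 E) {v : V} (h : deg E v = 2) :
    ∃ p q r s, Star2 E v p q r s := by
  rcases deg_eq_two_form hU h with ⟨p, q, r, s, a1, a2, a3, a4, a5, a6, a7, a8, a9, a10, he, hf, hall⟩ |
      ⟨p, q, s, a1, a2, a3, a4, a5, a6, he, hf, hall⟩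
  · exact ⟨p, q, r, s, ⟨a1, a2, a3, a4, a5, a6, a7, a8, a9, a10⟩, he, hf, hall⟩
  · exfalso
    have hne : ({v, p, q} : Finset V) ≠ {v, p, s} := by
      intro h
      have : q ∈ ({v, p, s} : Finset V) := by rw [← h]; simp
      simp only [Finset.mem_insert, Finset.mem_singleton] at this
      rcases this with h | h | h
      · exact a2 h.symm
      · exact a4 h.symm
      · exact a6 h
    have := two_le_codeg he hf hne (by simp : v ∈ _) (by simp) (by simp : p ∈ _) (by simp)
    have := hH2 v p h a1
    omega

theorem d2_fin (hIH : ∀ F, F ⊆ E → F.card < E.card → 272 * (gameVal true F : ℤ) ≤ Phi 0 F)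
    {v : V} (hv : 0 < deg E v) {D R : ℤ} (h1 : Phi 0 (res E v) + D ≤ Phi 0 E)
    (h2 : ∀ u, 0 < deg (res E v) u → Phi 0 (res (res E v) u) + R ≤ Phi 0 (res E v))
    (h3 : 544 ≤ D + R) (h4 : 272 ≤ D) : 272 * (gameVal true E : ℤ) ≤ Phi 0 E := by
  have := round_gen (k := 0) (s := 0) (γ := 0) le_rfl hv h1 h2
     (by simpa using hIH) (by omega) (by omega)
  simpa using this

theorem old_or_nbr {v x : V} (h : deg (res E v) x = 1) : deg E x = 1 ∨ 0 < codeg E v x := by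
  have := deg_res E v x
  omega

theorem ne_of_mem_res {v x : V} {f : Finset V} (hvf : v ∉ f) (hx : x ∈ f) : x ≠ v := by
  rintro rfl; exact hvf hx

theorem d2_R3 (hU : Unif E) (hD : ∀ u, deg E u ≤ 2) (hH1 : H1 E) (hH2 : H2 E)
    {v o b c d : V} (hS : Star2 E v o b c d) (ho : deg E o = 1) (hv : deg E v = 2)
    (hIH : ∀ F, F ⊆ E → F.card < E.card → 272 * (gameVal true F : ℤ) ≤ Phi 0 F) :
    272 * (gameVal true E : ℤ) ≤ Phi 0 E := by
  have hD3 : ∀ u, deg E u ≤ 3 := fun u => (hD u).trans (by norm_num)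
  obtain ⟨hne, he, hf, hall⟩ := id hS
  obtain ⟨a1, a2, a3, a4, a5, a6, a7, a8, a9, a10⟩ := id hne
  have hd := d2_drop4 hU hD3 hv hne (γ := 0) le_rfl (by norm_num)
  have hco : 0 < codeg E v o := codeg_pos_of he (by simp) (by simp)
  have hcb : 0 < codeg E v b := codeg_pos_of he (by simp) (by simp)
  have hcc : 0 < codeg E v c := codeg_pos_of hf (by simp) (by simp)
  have hcd : 0 < codeg E v d := codeg_pos_of hf (by simp) (by simp)
  have two : ∀ x, x ≠ o → 0 < codeg E v x → deg E x = 2 := by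
    intro x hx hc
    have := hD x
    have := codeg_le E v x
    have : deg E x ≠ 1 := fun h => hH1 v x o hv hx h ho hc hco
    omega
  have key : ∀ x, x = b ∨ x = c ∨ x = d → 0 < codeg E v x → 22 ≤ ex 0 E v x := by
    intro x hx hcx
    have hxo : x ≠ o := by rintro rfl; tauto
    have hx2 := two x hxo hcx
    apply ex_noiso hU hcx
    · have := deg_res E v x; omega
    intro f hfE hvf hxf
    by_contra hcon
    push Not at hcon
    have hof : o ∉ f := by
      intro h
      have h1 := hcon o h
      have := deg_res E v o
      omega
    have cls : ∀ y ∈ f, deg E y = 1 ∨ y = b ∨ y = c ∨ y = d := by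
      intro y hy
      rcases old_or_nbr (hcon y hy) with h | h
      · exact Or.inl h
      · rcases hS.nbr h (ne_of_mem_res hvf hy) with h | h
        · exact absurd (h ▸ hy) hof
        · exact Or.inr h
    have hCD : ¬ (c ∈ f ∧ d ∈ f) := by
      rintro ⟨h1, h2⟩
      have := two_le_codeg hfE hf (by rintro rfl; simp at hvf) h1 (by simp) h2 (by simp)
      have := hH2 c d (two c (Ne.symm a6) hcc) a10
      omega
    have hB1 : b ∈ f → ∀ t ∈ f, deg E t ≠ 1 := by
      intro hb t ht h1
      exact hH1 b t o (two b a5.symm hcb) (by rintro rfl; exact hof ht) h1 ho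
        (codeg_pos_of hfE hb ht) (codeg_pos_of he (by simp) (by simp))
    obtain ⟨y, z, b1, b2, b3, rfl⟩ := edge_form hU hfE hxf
    have hxx : ¬ (deg E y = 1 ∧ deg E z = 1) := fun h =>
      hH1 x y z hx2 b3 h.1 h.2 (codeg_pos_of hfE (by simp) (by simp))
        (codeg_pos_of hfE (by simp) (by simp))
    have h1 := cls y (by simp)
    have h2 := cls z (by simp)
    rcases hx with rfl | rfl | rfl <;> rcases h1 with h1 | rfl | rfl | rfl <;>
      rcases h2 with h2 | rfl | rfl | rfl <;> simp_all
  have h54 := ex_one (γ := 0) hco ho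
  have k1 := key b (by simp) hcb
  have k2 := key c (by simp) hcc
  have k3 := key d (by simp) hcd
  exact d2_fin hIH (by omega) (D := 384) (R := 160) (by linarith) (fun u hu => reply_noP le_rfl (by norm_num) (hU.res v) (res_deg_le hD3 v)
      (noP13_of (res_deg_le hD v)) hu) (by norm_num) (by norm_num)

/-- edges with a vertex of degree two contain no vertices of degree one -/
def H3 (E : Finset (Finset V)) : Prop :=
  ∀ e ∈ E, ∀ x ∈ e, ∀ y ∈ e, deg E x = 2 → deg E y ≠ 1

/-- no triangle at `v` -/
def TF (E : Finset (Finset V)) (v : V) : Prop :=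
  ∀ g ∈ E, v ∉ g → ∀ x ∈ g, ∀ y ∈ g, x ≠ y → 0 < codeg E v x → 0 < codeg E v y → False

theorem H3.two (hD : ∀ u, deg E u ≤ 2) (h : H3 E) {e : Finset V} {x y : V} (he : e ∈ E)
    (hx : x ∈ e) (hy : y ∈ e) (hx2 : deg E x = 2) : deg E y = 2 := by
  have := h e he x hx y hy hx2
  have := hD y
  have := deg_pos_of he hy
  omega

theorem d2_352 (hU : Unif E) (hD : ∀ u, deg E u ≤ 2) (hH2 : H2 E) (hH3 : H3 E)
    {v a b c d : V} (hS : Star2 E v a b c d) (hv : deg E v = 2) :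
    Phi 0 (res E v) + 352 ≤ Phi 0 E := by
  have hD3 : ∀ u, deg E u ≤ 3 := fun u => (hD u).trans (by norm_num)
  obtain ⟨hne, he, hf, hall⟩ := id hS
  obtain ⟨a1, a2, a3, a4, a5, a6, a7, a8, a9, a10⟩ := id hne
  have hd := d2_drop4 hU hD3 hv hne (γ := 0) le_rfl (by norm_num)
  have hca : 0 < codeg E v a := codeg_pos_of he (by simp) (by simp)
  have hcb : 0 < codeg E v b := codeg_pos_of he (by simp) (by simp)
  have hcc : 0 < codeg E v c := codeg_pos_of hf (by simp) (by simp)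
  have hcd : 0 < codeg E v d := codeg_pos_of hf (by simp) (by simp)
  have key : ∀ x, 0 < codeg E v x → 22 ≤ ex 0 E v x := by
    intro x hcx
    obtain ⟨e', he', h1, h2⟩ := codeg_pos.1 hcx
    have hx2 := hH3.two hD he' h1 h2 hv
    apply ex_noiso hU hcx
    · have := deg_res E v x; omega
    intro f hfE hvf hxf
    by_contra hcon
    push Not at hcon
    have cls : ∀ y ∈ f, y = a ∨ y = b ∨ y = c ∨ y = d := by
      intro y hy
      rcases old_or_nbr (hcon y hy) with h | h
      · exact absurd h (hH3 f hfE x hxf y hy hx2)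
      · exact hS.nbr h (ne_of_mem_res hvf hy)
    have hAB : ¬ (a ∈ f ∧ b ∈ f) := by
      rintro ⟨h1, h2⟩
      have := two_le_codeg hfE he (by rintro rfl; simp at hvf) h1 (by simp) h2 (by simp)
      have := hH2 a b (hH3.two hD hfE hxf h1 hx2) a5
      omega
    have hCD : ¬ (c ∈ f ∧ d ∈ f) := by
      rintro ⟨h1, h2⟩
      have := two_le_codeg hfE hf (by rintro rfl; simp at hvf) h1 (by simp) h2 (by simp)
      have := hH2 c d (hH3.two hD hfE hxf h1 hx2) a10
      omega
    obtain ⟨y, z, b1, b2, b3, rfl⟩ := edge_form hU hfE hxf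
    have h0 := cls x (by simp)
    have h1 := cls y (by simp)
    have h2 := cls z (by simp)
    rcases h0 with rfl | rfl | rfl | rfl <;> rcases h1 with rfl | rfl | rfl | rfl <;>
      rcases h2 with rfl | rfl | rfl | rfl <;> simp_all
  have := key a hca
  have := key b hcb
  have := key c hcc
  have := key d hcd
  linarith

theorem d2_TF (hU : Unif E) (hD : ∀ u, deg E u ≤ 2) (hH2 : H2 E) (hH3 : H3 E)
    {v : V} (hv : deg E v = 2) (hT : TF E v)
    (hIH : ∀ F, F ⊆ E → F.card < E.card → 272 * (gameVal true F : ℤ) ≤ Phi 0 F) :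
    272 * (gameVal true E : ℤ) ≤ Phi 0 E := by
  have hD3 : ∀ u, deg E u ≤ 3 := fun u => (hD u).trans (by norm_num)
  obtain ⟨a, b, c, d, hS⟩ := star2_of hU hH2 hv
  refine d2_fin hIH (by omega) (d2_352 hU hD hH2 hH3 hS hv) (R := 148 + 2 * 22) (fun u hu => ?_)
    (by norm_num) (by norm_num)
  have hr := reply_gen (γ := 0) le_rfl (by norm_num) (hU.res v) (res_deg_le hD3 v) (c := 22)
    (by norm_num) hu ?_
  · linarith
  intro hu1 e he hue x hxe hxu
  have hcx : 0 < codeg (res E v) u x := codeg_pos_of he hue hxe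
  have hx2 := res_deg_le hD v x
  have hxpos := deg_pos_of he hxe
  by_cases hx1 : deg (res E v) x = 1
  · have := ex_one (γ := 0) hcx hx1
    linarith
  have hxE : deg E x = 2 := by
    have := deg_mono (res_subset E v) x
    have := hD x
    omega
  apply ex_noiso (hU.res v) hcx
  · have := deg_res (res E v) u x; omega
  intro f hfE huf hxf
  by_contra hcon
  push Not at hcon
  have hef : e ≠ f := by rintro rfl; exact huf hue
  have cls : ∀ y ∈ f, y ≠ x → 0 < codeg E v y := by
    intro y hy hyx
    have hy1 := hcon y hy
    rcases old_or_nbr hy1 with h | h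
    · rcases old_or_nbr h with h' | h'
      · exact absurd h' (hH3 f (res_subset _ _ hfE) x hxf y hy hxE)
      · exact h'
    · exfalso
      obtain ⟨e', he', h1, h2⟩ := codeg_pos.1 h
      obtain ⟨e0, _, _, hun⟩ := deg_one hu1
      have : e' = e := by rw [hun e' he' h1, hun e he hue]
      subst this
      have := two_le_codeg (res_subset _ _ he) (res_subset _ _ hfE) hef hxe hxf h2 hy
      have := hH2 x y hxE hyx.symm
      omega
  obtain ⟨y, z, b1, b2, b3, rfl⟩ := edge_form (hU.res v) hfE hxf
  rw [mem_res] at hfE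
  exact hT _ hfE.1 hfE.2 y (by simp) z (by simp) b3 (cls y (by simp) b1.symm) (cls z (by simp) b2.symm)

theorem d2_K4 (hU : Unif E) (hD : ∀ u, deg E u ≤ 2) (hH2 : H2 E) (hH3 : H3 E)
    {v a b c d x : V} (hv : deg E v = 2) (hS : Star2 E v a b c d)
    (hg : {a, c, x} ∈ E) (hh : {b, d, x} ∈ E) (hxv : x ≠ v) (hx4 : x ≠ a ∧ x ≠ b ∧ x ≠ c ∧ x ≠ d)
    (hIH : ∀ F, F ⊆ E → F.card < E.card → 272 * (gameVal true F : ℤ) ≤ Phi 0 F) :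
    272 * (gameVal true E : ℤ) ≤ Phi 0 E := by
  have hD3 : ∀ u, deg E u ≤ 3 := fun u => (hD u).trans (by norm_num)
  refine d2_fin hIH (by omega) (d2_352 hU hD hH2 hH3 hS hv) (R := 192) (fun u hu => ?_)
    (by norm_num) (by norm_num)
  obtain ⟨hne, he, hf, hall⟩ := id hS
  obtain ⟨a1, a2, a3, a4, a5, a6, a7, a8, a9, a10⟩ := id hne
  obtain ⟨x1, x2, x3, x4⟩ := hx4
  have hle := res_deg_le hD v u
  by_cases hu2 : deg (res E v) u = 2
  · have := reply_two (γ := 0) le_rfl (by norm_num) (hU.res v) (res_deg_le hD3 v) hu2.ge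
    linarith
  have hu1 : deg (res E v) u = 1 := by omega
  have hca : 0 < codeg E v a := codeg_pos_of he (by simp) (by simp)
  have hcb : 0 < codeg E v b := codeg_pos_of he (by simp) (by simp)
  have hcc : 0 < codeg E v c := codeg_pos_of hf (by simp) (by simp)
  have hcd : 0 < codeg E v d := codeg_pos_of hf (by simp) (by simp)
  have hg' : {a, c, x} ∈ res E v := mem_res.2 ⟨hg, by simp [*, Ne.symm hxv]⟩
  have hh' : {b, d, x} ∈ res E v := mem_res.2 ⟨hh, by simp [*, Ne.symm hxv]⟩
  rcases old_or_nbr hu1 with h1 | h1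
  · have hr := reply_gen (γ := 0) le_rfl (by norm_num) (hU.res v) (res_deg_le hD3 v) (c := 54)
      (by norm_num) hu ?_
    · linarith
    intro _ e he hue y hy hyu
    apply ex_one (codeg_pos_of he hue hy)
    have h2 := hH3 e (res_subset _ _ he) y hy u hue
    have := deg_pos_of he hy
    have := deg_mono (res_subset E v) y
    have := hD y
    have : deg E y ≠ 2 := fun h => h2 h h1
    omega
  · have key : ∀ w, u ≠ w → u ≠ x → w ≠ x → ({u, w, x} : Finset V) ∈ res E v →
        0 < codeg E v w → Phi 0 (res (res E v) u) + 192 ≤ Phi 0 (res E v) := by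
      intro w h3 h4 h5 h6 h7
      have hr := reply_edge (γ := 0) le_rfl (by norm_num) (hU.res v) (res_deg_le hD3 v) hu1 h3 h4 h5
      have hw : deg (res E v) w = 1 := by
        have := deg_pos_of h6 (by simp : w ∈ _)
        have := deg_res E v w
        have := hD w
        omega
      have k1 := ex_one (γ := 0) (codeg_pos_of h6 (by simp : u ∈ _) (by simp : w ∈ _)) hw
      have hcx := codeg_pos_of h6 (by simp : u ∈ _) (by simp : x ∈ _)
      have k2 := ex_six (γ := 0) (by norm_num) hcx (by
        have := deg_res (res E v) u x
        have := res_deg_le hD v x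
        omega)
      linarith
    have huv : u ≠ v := by
      rintro rfl
      rw [deg_res_self] at hu1
      omega
    rcases hS.nbr h1 huv with rfl | rfl | rfl | rfl
    · exact key c a6 x1.symm x3.symm hg' hcc
    · exact key d a9 x2.symm x4.symm hh' hcd
    · exact key a a6.symm x3.symm x1.symm (by rwa [Finset.insert_comm]) hca
    · exact key b a9.symm x4.symm x2.symm (by rwa [Finset.insert_comm]) hcb

/-- opposite vertex of a triangle is triangle free unless it meets another opposite vertex -/
theorem tri_opp (hU : Unif E) (hD : ∀ u, deg E u ≤ 2) {v a b c d x : V}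
    (hne : [v, a, b, c, d, x].Nodup)
    (h1 : {v, a, b} ∈ E) (h2 : {v, c, d} ∈ E) (h3 : {a, c, x} ∈ E) (hb2 : deg E b = 2)
    (hH2 : H2 E) (hT : ¬ TF E b) : ∃ e ∈ E, b ∈ e ∧ (d ∈ e ∨ x ∈ e) := by
  simp only [List.nodup_cons, List.mem_cons, List.not_mem_nil, or_false, not_or] at hne
  unfold TF at hT
  push Not at hT
  obtain ⟨g, hg, hbg, y, hy, z, hz, hyz, hcy, hcz, -⟩ := hT
  obtain ⟨ey, hey, hbey, hyey⟩ := codeg_pos.1 hcy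
  obtain ⟨ez, hez, hbez, hzez⟩ := codeg_pos.1 hcz
  have ev : ∀ g ∈ E, v ∈ g → g = {v, a, b} ∨ g = {v, c, d} := fun g hg hv =>
    deg_two_only (hD v) h1 h2 hg (by
      intro h; have : a ∈ ({v, c, d} : Finset V) := by rw [← h]; simp
      simp at this; grind) (by simp) (by simp) hv
  have ea : ∀ g ∈ E, a ∈ g → g = {v, a, b} ∨ g = {a, c, x} := fun g hg hv =>
    deg_two_only (hD a) h1 h3 hg (by
      intro h; have : v ∈ ({a, c, x} : Finset V) := by rw [← h]; simp
      simp at this; grind) (by simp) (by simp) hv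
  have ec : ∀ g ∈ E, c ∈ g → g = {v, c, d} ∨ g = {a, c, x} := fun g hg hv =>
    deg_two_only (hD c) h2 h3 hg (by
      intro h; have : v ∈ ({a, c, x} : Finset V) := by rw [← h]; simp
      simp at this; grind) (by simp) (by simp) hv
  have hyb : y ≠ b := by rintro rfl; exact hbg hy
  have hzb : z ≠ b := by rintro rfl; exact hbg hz
  have main : ∀ y z : V, y ∈ g → z ∈ g → y ≠ z → ∀ ey ∈ E, b ∈ ey → y ∈ ey → ∀ ez ∈ E, b ∈ ez → z ∈ ez →
      y = v ∨ y = a → ∃ e ∈ E, b ∈ e ∧ (d ∈ e ∨ x ∈ e) := by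
    intro y z hy hz hyz ey hey hbey hyey ez hez hbez hzez hyva
    refine ⟨ez, hez, hbez, ?_⟩
    have hc : c ∉ ez := by
      intro h
      rcases ec ez hez h with rfl | rfl <;> simp at hbez <;> grind
    rcases hyva with rfl | rfl
    · rcases ev g hg hy with rfl | rfl
      · simp at hbg
      · simp only [Finset.mem_insert, Finset.mem_singleton] at hz
        rcases hz with rfl | rfl | rfl
        · exact absurd rfl hyz
        · exact absurd hzez hc
        · exact Or.inl hzez
    · rcases ea g hg hy with rfl | rfl
      · simp at hbg
      · simp only [Finset.mem_insert, Finset.mem_singleton] at hz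
        rcases hz with rfl | rfl | rfl
        · exact absurd rfl hyz
        · exact absurd hzez hc
        · exact Or.inr hzez
  -- one of y, z is v or a
  have hor : (y = v ∨ y = a) ∨ (z = v ∨ z = a) := by
    by_contra hcon
    push Not at hcon
    have hy' : ey ≠ {v, a, b} := by
      rintro rfl
      simp only [Finset.mem_insert, Finset.mem_singleton] at hyey
      tauto
    have hz' : ez ≠ {v, a, b} := by
      rintro rfl
      simp only [Finset.mem_insert, Finset.mem_singleton] at hzez
      tauto
    have : ez = ey := by
      rcases deg_two_only (hD b) h1 hey hez hy'.symm (by simp) hbey hbez with h | h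
      · exact absurd h hz'
      · exact h
    subst this
    have hgz : g ≠ ez := by rintro rfl; exact hbg hbez
    have h2 := two_le_codeg hg hez hgz hy hyey hz hzez
    have := codeg_le' E y z
    have := hD y
    have := hH2 y z (by omega) hyz
    omega
  rcases hor with h | h
  · exact main y z hy hz hyz ey hey hbey hyey ez hez hbez hzez h
  · exact main z y hz hy hyz.symm ez hez hbez hzez ey hey hbey hyey h

set_option maxHeartbeats 1000000 in
theorem d2_R4 (hU : Unif E) (hD : ∀ u, deg E u ≤ 2) (hH2 : H2 E) (hH3 : H3 E)
    {v : V} (hv : deg E v = 2)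
    (hIH : ∀ F, F ⊆ E → F.card < E.card → 272 * (gameVal true F : ℤ) ≤ Phi 0 F) :
    272 * (gameVal true E : ℤ) ≤ Phi 0 E := by
  by_cases hex : ∃ w, deg E w = 2 ∧ TF E w
  · obtain ⟨w, hw, hT⟩ := hex
    exact d2_TF hU hD hH2 hH3 hw hT hIH
  push Not at hex
  have hT := hex v hv
  unfold TF at hT
  push Not at hT
  obtain ⟨g, hg, hvg, y, hy, z, hz, hyz, hcy, hcz, -⟩ := hT
  -- choose coordinates
  have main : ∀ a b c d, Star2 E v a b c d → a ∈ g → c ∈ g →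
      272 * (gameVal true E : ℤ) ≤ Phi 0 E := by
    intro a b c d hS hag hcg
    obtain ⟨hne, he, hf, hall⟩ := id hS
    obtain ⟨a1, a2, a3, a4, a5, a6, a7, a8, a9, a10⟩ := id hne
    obtain ⟨x, hax, hcx, rfl⟩ := edge_form2 hU hg hag hcg a6
    have ha2 := hH3.two hD he (by simp : v ∈ _) (by simp : a ∈ _) hv
    have hb2 := hH3.two hD he (by simp : v ∈ _) (by simp : b ∈ _) hv
    have hc2 := hH3.two hD hf (by simp : v ∈ _) (by simp : c ∈ _) hv
    have hd2 := hH3.two hD hf (by simp : v ∈ _) (by simp : d ∈ _) hv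
    have hx2 := hH3.two hD hg hag (by simp : x ∈ _) ha2
    have hvx : v ≠ x := by rintro rfl; simp at hvg
    have hbx : b ≠ x := by
      rintro rfl
      have := two_le_codeg he hg (by intro h; rw [← h] at hvg; simp at hvg) (by simp : a ∈ _) (by simp)
        (by simp : b ∈ _) (by simp)
      have := hH2 a b ha2 a5
      omega
    have hdx : d ≠ x := by
      rintro rfl
      have := two_le_codeg hf hg (by intro h; rw [← h] at hvg; simp at hvg) (by simp : c ∈ _) (by simp)
        (by simp : d ∈ _) (by simp)
      have := hH2 c d hc2 a10
      omega
    have t1 := tri_opp hU hD (v := v) (a := a) (b := b) (c := c) (d := d) (x := x)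
      (by simp; grind) he hf hg hb2 hH2 (hex b hb2)
    have t2 := tri_opp hU hD (v := v) (a := c) (b := d) (c := a) (d := b) (x := x)
      (by simp; grind) hf he (by rwa [Finset.insert_comm]) hd2 hH2 (hex d hd2)
    have t3 := tri_opp hU hD (v := a) (a := c) (b := x) (c := v) (d := b) (x := d)
      (by simp; grind) hg (by rwa [Finset.insert_comm]) (by rwa [Finset.insert_comm]) hx2 hH2 (hex x hx2)
    have ub : ∀ e1 ∈ E, ∀ e2 ∈ E, b ∈ e1 → b ∈ e2 → d ∈ e1 ∨ x ∈ e1 → d ∈ e2 ∨ x ∈ e2 → e1 = e2 := by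
      intro e1 he1 e2 he2 hb1 hb2 h1 h2
      have n1 : ({v, a, b} : Finset V) ≠ e1 := by rintro rfl; simp at h1; grind
      rcases deg_two_only (hD b) he he1 he2 n1 (by simp) hb1 hb2 with rfl | rfl
      · simp at h2; grind
      · rfl
    have ud : ∀ e1 ∈ E, ∀ e2 ∈ E, d ∈ e1 → d ∈ e2 → b ∈ e1 ∨ x ∈ e1 → b ∈ e2 ∨ x ∈ e2 → e1 = e2 := by
      intro e1 he1 e2 he2 hb1 hb2 h1 h2
      have n1 : ({v, c, d} : Finset V) ≠ e1 := by rintro rfl; simp at h1; grind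
      rcases deg_two_only (hD d) hf he1 he2 n1 (by simp) hb1 hb2 with rfl | rfl
      · simp at h2; grind
      · rfl
    have ux : ∀ e1 ∈ E, ∀ e2 ∈ E, x ∈ e1 → x ∈ e2 → b ∈ e1 ∨ d ∈ e1 → b ∈ e2 ∨ d ∈ e2 → e1 = e2 := by
      intro e1 he1 e2 he2 hb1 hb2 h1 h2
      have n1 : ({a, c, x} : Finset V) ≠ e1 := by rintro rfl; simp at h1; grind
      rcases deg_two_only (hD x) hg he1 he2 n1 (by simp) hb1 hb2 with rfl | rfl
      · simp at h2; grind
      · rfl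
    have : ∃ e ∈ E, b ∈ e ∧ d ∈ e ∧ x ∈ e := by
      obtain ⟨e1, he1, hb1, h1⟩ := t1
      obtain ⟨e2, he2, hb2, h2⟩ := t2
      obtain ⟨e3, he3, hb3, h3⟩ := t3
      have q1 := ub e1 he1 e2 he2 hb1
      have q2 := ub e1 he1 e3 he3 hb1
      have q3 := ud e1 he1 e2 he2
      have q4 := ud e2 he2 e3 he3 hb2
      have q5 := ux e1 he1 e3 he3
      have q6 := ux e2 he2 e3 he3
      grind
    obtain ⟨e, heE, hb, hd, hx⟩ := this
    have : e = {b, d, x} := by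
      symm
      apply Finset.eq_of_subset_of_card_le
      · intro t ht; simp at ht; rcases ht with rfl | rfl | rfl <;> assumption
      · rw [hU e heE, Finset.card_eq_three.2 ⟨b, d, x, a9, hbx, hdx, rfl⟩]
    subst this
    exact d2_K4 hU hD hH2 hH3 hv hS hg heE hvx.symm ⟨hax.symm, hbx.symm, hcx.symm, hdx.symm⟩ hIH
  obtain ⟨a, b, c, d, hS⟩ := star2_of hU hH2 hv
  have two : ∀ p q, ∀ e ∈ E, v ∈ e → p ≠ q → p ∈ e → q ∈ e → ¬ (p ∈ g ∧ q ∈ g) := by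
    rintro p q e he hve hpq hp hq ⟨h1, h2⟩
    have := two_le_codeg he hg (by rintro rfl; exact hvg hve) hp h1 hq h2
    have := hH2 p q (hH3.two hD he hve hp hv) hpq
    omega
  have hAB := two a b _ hS.2.1 (by simp) hS.1.2.2.2.2.1 (by simp) (by simp)
  have hCD := two c d _ hS.2.2.1 (by simp) hS.1.2.2.2.2.2.2.2.2.2 (by simp) (by simp)
  have hyv := ne_of_mem_res hvg hy
  have hzv := ne_of_mem_res hvg hz
  have m1 := main a b c d hS
  have m2 := main b a c d hS.swap1
  have m3 := main a b d c hS.swap.swap1.swap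
  have m4 := main b a d c hS.swap1.swap.swap1.swap
  rcases hS.nbr hcy hyv with rfl | rfl | rfl | rfl <;> rcases hS.nbr hcz hzv with rfl | rfl | rfl | rfl <;>
    tauto

theorem le_two (n : ℕ) : ∀ E : Finset (Finset V), E.card = n → Unif E → (∀ u, deg E u ≤ 2) →
    272 * (gameVal true E : ℤ) ≤ Phi 0 E := by
  induction n using Nat.strong_induction_on with
  | _ n ih =>
  intro E hn hU hD
  have hIH : ∀ F, F ⊆ E → F.card < E.card → 272 * (gameVal true F : ℤ) ≤ Phi 0 F :=
    fun F hF hlt => ih F.card (hn ▸ hlt) F rfl (hU.mono hF) (fun u => (deg_mono hF u).trans (hD u))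
  by_cases hH1 : H1 E
  swap
  · exact d2_R1 hU hD hH1 hIH
  by_cases hH2 : H2 E
  swap
  · exact d2_R2 hU hD hH1 hH2 hIH
  by_cases hH3 : H3 E
  swap
  · unfold H3 at hH3
    push Not at hH3
    obtain ⟨e, he, v, hv, o, ho, hv2, ho1⟩ := hH3
    obtain ⟨a, b, c, d, hS⟩ := star2_of hU hH2 hv2
    have hov : o ≠ v := by rintro rfl; omega
    rcases hS.nbr (codeg_pos_of he hv ho) hov with rfl | rfl | rfl | rfl
    · exact d2_R3 hU hD hH1 hH2 hS ho1 hv2 hIH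
    · exact d2_R3 hU hD hH1 hH2 hS.swap1 ho1 hv2 hIH
    · exact d2_R3 hU hD hH1 hH2 hS.swap ho1 hv2 hIH
    · exact d2_R3 hU hD hH1 hH2 hS.swap.swap1 ho1 hv2 hIH
  by_cases hex : ∃ v, deg E v = 2
  · obtain ⟨v, hv⟩ := hex
    exact d2_R4 hU hD hH2 hH3 hv hIH
  push Not at hex
  have hD1 : ∀ u, deg E u ≤ 1 := fun u => by have := hD u; have := hex u; omega
  have hD3 : ∀ u, deg E u ≤ 3 := fun u => (hD u).trans (by norm_num)
  have drop : ∀ F, F ⊆ E → ∀ v, 0 < deg F v → Phi 0 (res F v) + 272 ≤ Phi 0 F := by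
    intro F hF v hv
    obtain ⟨e, he, hve⟩ := deg_pos.1 hv
    apply iso_drop le_rfl (by norm_num) (hU.mono hF) (fun u => (deg_mono hF u).trans (hD3 u)) he hve
    intro x hx
    have := deg_pos_of he hx
    have := deg_mono hF x
    have := hD1 x
    omega
  rcases E.eq_empty_or_nonempty with rfl | ⟨e, he⟩
  · rw [gameVal_empty]
    simpa using Phi_nonneg le_rfl _
  · obtain ⟨v, hv⟩ : e.Nonempty := by rw [← Finset.card_pos, hU e he]; norm_num
    have hv0 := deg_pos_of he hv
    exact d2_fin hIH hv0 (drop E subset_rfl v hv0)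
      (fun u hu => drop (res E v) (res_subset _ _) u hu) (by norm_num) (by norm_num)

theorem val_le_two (hU : Unif E) (hD : ∀ u, deg E u ≤ 2) :
    272 * (gameVal true E : ℤ) ≤ Phi 1 E :=
  (le_two _ E rfl hU hD).trans (Phi_zero_le_one E)

end D2
end TG

namespace TG
open Finset

/-! ### Maximum degree three: first reductions -/

section D3

variable {E : Finset (Finset V)}

/-- induction hypothesis -/
def Gen (E : Finset (Finset V)) : Prop :=
  ∀ F, F ⊆ E → F.card < E.card → 272 * (gameVal true F : ℤ) ≤ Phi 1 F + 16

/-- the bound with a surplus -/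
def Sur (E : Finset (Finset V)) (σ : ℤ) : Prop := 272 * (gameVal true E : ℤ) + σ ≤ Phi 1 E + 16

theorem Gen.mono {F : Finset (Finset V)} (h : Gen E) (hF : F ⊆ E) : Gen F :=
  fun G hG hlt => h G (hG.trans hF) (lt_of_lt_of_le hlt (Finset.card_le_card hF))

theorem Sur.mono {σ τ : ℤ} (h : Sur E σ) (ht : τ ≤ σ) : Sur E τ := by
  unfold Sur at *; linarith

theorem fin1 {σ D R : ℤ} (hG : Gen E) {v : V} (hv : 0 < deg E v)
    (hD : Phi 1 (res E v) + D ≤ Phi 1 E)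
    (hR : ∀ u, 0 < deg (res E v) u → Phi 1 (res (res E v) u) + R ≤ Phi 1 (res E v))
    (h : 544 + σ ≤ D + R) (h272 : 256 + σ ≤ D) : Sur E σ := by
  have := round_gen (k := 16 - σ) (s := 16) (γ := 1) (by norm_num) hv hD hR hG (by omega) (by omega)
  unfold Sur
  linarith

theorem sur_big (hU : Unif E) (hG : Gen E) {v : V} (hv : 4 ≤ deg E v) : Sur E 0 := by
  have h1 := drop_big (γ := 1) (by norm_num) (by norm_num) hU v
  have hw : wt (deg E v) = 85 := by
    obtain ⟨k, hk⟩ := Nat.exists_eq_add_of_le hv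
    rw [hk, show 4 + k = k + 1 + 1 + 1 + 1 by ring]; rfl
  refine fin1 hG (v := v) (D := 425) (R := 142) (by omega) ?_ ?_ (by norm_num) (by norm_num)
  · have : (4 : ℤ) ≤ deg E v := by exact_mod_cast hv
    linarith
  · intro u hu
    have h2 := drop_big (γ := 1) (by norm_num) (by norm_num) (hU.res v) u
    have : (1 : ℤ) ≤ deg (res E v) u := by exact_mod_cast hu
    have : (57 : ℤ) ≤ wt (deg (res E v) u) := wt_mono (m := 1) hu
    linarith

theorem drop3 (hU : Unif E) (hD : ∀ u, deg E u ≤ 3) {v : V} (hv : deg E v = 3) (A : Finset V)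
    (hA : v ∉ A) : Phi 1 (res E v) + 358 + ∑ u ∈ A, ex 1 E v u ≤ Phi 1 E := by
  have := drop_ge (γ := 1) (by norm_num) (by norm_num) hU hD v A hA
  rw [hv] at this
  simp only [wt] at this
  push_cast at this
  linarith

theorem drop3_0 (hU : Unif E) (hD : ∀ u, deg E u ≤ 3) {v : V} (hv : deg E v = 3) :
    Phi 1 (res E v) + 358 ≤ Phi 1 E := by
  simpa using drop3 hU hD hv ∅ (by simp)

theorem drop3_1 (hU : Unif E) (hD : ∀ u, deg E u ≤ 3) {v a : V} (hv : deg E v = 3)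
    (ha : a ≠ v) : Phi 1 (res E v) + 358 + ex 1 E v a ≤ Phi 1 E := by
  simpa using drop3 hU hD hv {a} (by simp [ha.symm])

theorem drop3_2 (hU : Unif E) (hD : ∀ u, deg E u ≤ 3) {v a b : V} (hv : deg E v = 3)
    (ha : a ≠ v) (hb : b ≠ v) (hab : a ≠ b) :
    Phi 1 (res E v) + 358 + ex 1 E v a + ex 1 E v b ≤ Phi 1 E := by
  have := drop3 hU hD hv {a, b} (by simp [ha.symm, hb.symm])
  rw [Finset.sum_pair hab] at this
  linarith

theorem drop3_3 (hU : Unif E) (hD : ∀ u, deg E u ≤ 3) {v a b c : V} (hv : deg E v = 3)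
    (ha : a ≠ v) (hb : b ≠ v) (hc : c ≠ v) (hab : a ≠ b) (hac : a ≠ c) (hbc : b ≠ c) :
    Phi 1 (res E v) + 358 + ex 1 E v a + ex 1 E v b + ex 1 E v c ≤ Phi 1 E := by
  have := drop3 hU hD hv {a, b, c} (by simp [ha.symm, hb.symm, hc.symm])
  rw [Finset.sum_insert (by simp [hab, hac]), Finset.sum_pair hbc] at this
  linarith

theorem rep148 (hU : Unif E) (hD : ∀ u, deg E u ≤ 3) (v : V) : ∀ u, 0 < deg (res E v) u →
    Phi 1 (res (res E v) u) + 148 ≤ Phi 1 (res E v) := fun u hu =>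
  reply_min (by norm_num) (by norm_num) (hU.res v) (res_deg_le hD v) hu

theorem rep160 (hU : Unif E) (hD : ∀ u, deg E u ≤ 3) (v : V) (hP : ¬ P13 (res E v)) :
    ∀ u, 0 < deg (res E v) u →
    Phi 1 (res (res E v) u) + 160 ≤ Phi 1 (res E v) := fun u hu =>
  reply_noP (by norm_num) (by norm_num) (hU.res v) (res_deg_le hD v) hP hu

theorem rep190 (hU : Unif E) (hD : ∀ u, deg E u ≤ 3) (v : V) (hP : ¬ P13 (res E v))
    (hQ : ¬ QQ (res E v)) : ∀ u, 0 < deg (res E v) u →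
    Phi 1 (res (res E v) u) + 190 ≤ Phi 1 (res E v) := fun u hu =>
  reply_noQQ (by norm_num) (by norm_num) (hU.res v) (res_deg_le hD v) hP hQ hu

theorem sur_P13 (hU : Unif E) (hD : ∀ u, deg E u ≤ 3) (hG : Gen E) (h : P13 E) : Sur E 16 := by
  obtain ⟨e, he, a, ha, b, hb, ha1, hb3⟩ := h
  have hb : deg E b = 3 := le_antisymm (hD b) hb3
  have h54 := ex_one (γ := 1) (codeg_pos_of he ‹b ∈ e› ha) ha1
  have h1 := drop3_1 hU hD hb (a := a) (by rintro rfl; omega)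
  exact fin1 hG (D := 412) (by omega) (by linarith) (rep148 hU hD b) (by norm_num) (by norm_num)

/-- a new (1,3)-edge comes from a vertex with a large gain -/
theorem new_P13 (hU : Unif E) (hD : ∀ u, deg E u ≤ 3) (hP : ¬ P13 E) {v : V}
    (h : P13 (res E v)) : ∃ a b, ∃ g ∈ E, v ∉ g ∧ a ∈ g ∧ b ∈ g ∧ a ≠ v ∧ b ≠ a ∧ NewOne E v a ∧
      deg (res E v) b = 3 ∧ deg E b = 3 ∧ (∀ x ∈ g, deg E x ≠ 1) ∧ 21 ≤ ex 1 E v a := by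
  obtain ⟨g, hg, a, ha, b, hb, ha1, hb3⟩ := h
  have hbE : deg E b = 3 := le_antisymm (hD b) (hb3.trans (deg_mono (res_subset E v) b))
  have hg' := mem_res.1 hg
  have hno : ∀ x ∈ g, deg E x ≠ 1 := fun x hx h1 => hP ⟨g, hg'.1, x, hx, b, hb, h1, hbE.ge⟩
  have hc : 0 < codeg E v a := by
    rcases old_or_nbr ha1 with h | h
    · exact absurd h (hno a ha)
    · exact h
  have hb' : deg (res E v) b = 3 := le_antisymm ((deg_mono (res_subset E v) b).trans (hD b)) hb3
  refine ⟨a, b, g, hg'.1, hg'.2, ha, hb, ne_of_mem_res hg'.2 ha, by rintro rfl; omega,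
    ⟨ha1, hc⟩, hb', hbE, hno, ?_⟩
  apply ex_twentyone (by norm_num) hU hc ha1.le
  intro f hf hvf haf
  have : f = g := by
    obtain ⟨e, _, _, hun⟩ := deg_one ha1
    rw [hun f (mem_res.2 ⟨hf, hvf⟩) haf, hun g hg ha]
  subst this
  exact ⟨⟨b, hb, by omega⟩, hno⟩

/-- if all new ones lie in isolated edges then no bad structures appear -/
theorem lemK (hP : ¬ P13 E) (hQ : ¬ QQ E) {v : V}
    (hD : ∀ u, deg E u ≤ 3)
    (h : ∀ a, NewOne E v a → ∀ g ∈ res E v, a ∈ g → ∀ x ∈ g, deg (res E v) x = 1) :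
    ¬ P13 (res E v) ∧ ¬ QQ (res E v) := by
  constructor
  · rintro ⟨e, he, a, ha, b, hb, ha1, hb3⟩
    rcases old_or_nbr ha1 with h1 | h1
    · exact hP ⟨e, res_subset _ _ he, a, ha, b, hb, h1, hb3.trans (deg_mono (res_subset E v) b)⟩
    · have := h a ⟨ha1, h1⟩ e he ha b hb
      omega
  · rintro ⟨w, hw, hall⟩
    obtain ⟨e, he, e', he', hne, hwe, hwe', hh⟩ := deg_two hw
    have old : ∀ e ∈ res E v, w ∈ e → ∃ a ∈ e, deg E a = 1 := by
      intro e he hwe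
      obtain ⟨a, ha, ha1⟩ := hall e he hwe
      refine ⟨a, ha, ?_⟩
      rcases old_or_nbr ha1 with h1 | h1
      · exact h1
      · have := h a ⟨ha1, h1⟩ e he ha w hwe
        omega
    have hwE : deg E w = 2 := by
      have h1 := deg_mono (res_subset E v) w
      have h2 := hD w
      by_contra hcon
      obtain ⟨a, ha, ha1⟩ := old e he hwe
      exact hP ⟨e, res_subset _ _ he, a, ha, w, hwe, ha1, by omega⟩
    apply hQ
    refine ⟨w, hwE, ?_⟩
    intro f hf hwf
    rcases deg_two_only hwE.le (res_subset _ _ he) (res_subset _ _ he') hf hne hwe hwe' hwf with rfl | rfl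
    · exact old _ he hwe
    · exact old _ he' hwe'

theorem sur_QQ (hU : Unif E) (hD : ∀ u, deg E u ≤ 3) (hG : Gen E) (hP : ¬ P13 E) (h : QQ E) :
    Sur E 0 := by
  obtain ⟨w, hw, hall1⟩ := h
  have small : ∀ x, 0 < codeg E w x → deg (res E w) x ≤ 1 := by
    intro x hx
    obtain ⟨e, he, hwe, hxe⟩ := codeg_pos.1 hx
    obtain ⟨a, ha, ha1⟩ := hall1 e he hwe
    have := deg_le_two_of hP he ha hxe ha1
    have := deg_res E w x
    omega
  have six : ∀ x, 0 < codeg E w x → 6 ≤ ex 1 E w x := fun x hx =>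
    ex_six (by norm_num) hx (small x hx)
  have key : ∀ p q r s, Star2 E w p q r s → deg E p = 1 → deg E r = 1 → Sur E 0 := by
    intro p q r s hS hp hr
    obtain ⟨hne, he, hf, hall⟩ := id hS
    have hd := d2_drop4 hU hD hw hne (γ := 1) (by norm_num) le_rfl
    have hcp : 0 < codeg E w p := codeg_pos_of he (by simp) (by simp)
    have hcq : 0 < codeg E w q := codeg_pos_of he (by simp) (by simp)
    have hcr : 0 < codeg E w r := codeg_pos_of hf (by simp) (by simp)
    have hcs : 0 < codeg E w s := codeg_pos_of hf (by simp) (by simp)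
    have k1 := ex_one (γ := 1) hcp hp
    have k2 := six q hcq
    have k3 := ex_one (γ := 1) hcr hr
    have k4 := six s hcs
    by_cases hP' : P13 (res E w)
    · obtain ⟨a, b, g, hg, hwg, hag, hbg, haw, hba, hN, hb', hb, hno, h21⟩ := new_P13 hU hD hP hP'
      refine fin1 hG (D := 399) (by omega) ?_ (rep148 hU hD w) (by norm_num) (by norm_num)
      rcases hS.nbr hN.2 haw with rfl | rfl | rfl | rfl
      · exact absurd hp (hno _ hag)
      · linarith
      · exact absurd hr (hno _ hag)
      · linarith
    · exact fin1 hG (D := 384) (by omega) (by linarith) (rep160 hU hD w hP') (by norm_num) (by norm_num)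
  rcases deg_eq_two_form hU hw with ⟨p, q, r, s, a1, a2, a3, a4, a5, a6, a7, a8, a9, a10, he, hf, hall⟩ |
      ⟨p, q, s, a1, a2, a3, a4, a5, a6, he, hf, hall⟩
  · have hS : Star2 E w p q r s := ⟨⟨a1, a2, a3, a4, a5, a6, a7, a8, a9, a10⟩, he, hf, hall⟩
    obtain ⟨a, ha, ha1⟩ := hall1 _ he (by simp)
    obtain ⟨b, hb, hb1⟩ := hall1 _ hf (by simp)
    simp only [Finset.mem_insert, Finset.mem_singleton] at ha hb
    rcases ha with rfl | rfl | rfl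
    · omega
    · rcases hb with rfl | rfl | rfl
      · omega
      · exact key _ _ _ _ hS ha1 hb1
      · exact key _ _ _ _ hS.swap.swap1.swap ha1 hb1
    · rcases hb with rfl | rfl | rfl
      · omega
      · exact key _ _ _ _ hS.swap1 ha1 hb1
      · exact key _ _ _ _ hS.swap1.swap.swap1.swap ha1 hb1
  · have hd := d2_drop3 hU hD hw ⟨a1, a2, a3, a4, a5, a6⟩ (γ := 1) (by norm_num) le_rfl
    have hne : ({w, p, q} : Finset V) ≠ {w, p, s} := by
      intro h
      have : q ∈ ({w, p, s} : Finset V) := by rw [← h]; simp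
      simp only [Finset.mem_insert, Finset.mem_singleton] at this
      rcases this with h | h | h
      · exact a2 h.symm
      · exact a4 h.symm
      · exact a6 h
    have hc2 := two_le_codeg he hf hne (by simp : w ∈ _) (by simp) (by simp : p ∈ _) (by simp)
    have hp1 := codeg_le E w p
    obtain ⟨a, ha, ha1⟩ := hall1 _ he (by simp)
    obtain ⟨b, hb, hb1⟩ := hall1 _ hf (by simp)
    have hp2 := deg_le_two_of hP he ha (by simp : p ∈ _) ha1
    have hp := ex_dbl (γ := 1) hc2 hp2
    have haq : a = q := by
      simp only [Finset.mem_insert, Finset.mem_singleton] at ha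
      rcases ha with rfl | rfl | rfl
      · omega
      · omega
      · rfl
    have hbs : b = s := by
      simp only [Finset.mem_insert, Finset.mem_singleton] at hb
      rcases hb with rfl | rfl | rfl
      · omega
      · omega
      · rfl
    subst haq hbs
    have k1 := ex_one (γ := 1) (codeg_pos_of he (by simp : w ∈ _) (by simp)) ha1
    have k2 := ex_one (γ := 1) (codeg_pos_of hf (by simp : w ∈ _) (by simp)) hb1
    exact fin1 hG (D := 448) (by omega) (by linarith) (rep148 hU hD w) (by norm_num) (by norm_num)

theorem pend_form (hU : Unif E) (hP : ¬ P13 E) (hQ : ¬ QQ E) {e : Finset V} (he : e ∈ E) {w : V}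
    (hwe : w ∈ e) (hw2 : 2 ≤ deg E w) (h1 : ∀ x ∈ e, x ≠ w → deg E x = 1) :
    ∃ o o' y z, deg E w = 2 ∧ e = {w, o, o'} ∧ Star2 E w o o' y z ∧ deg E o = 1 ∧ deg E o' = 1 ∧
      2 ≤ deg E y ∧ 2 ≤ deg E z := by
  obtain ⟨o, o', b1, b2, b3, rfl⟩ := edge_form hU he hwe
  have ho := h1 o (by simp) b1.symm
  have ho' := h1 o' (by simp) b2.symm
  have hw : deg E w = 2 := le_antisymm (deg_le_two_of hP he (by simp : o ∈ _) hwe ho) hw2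
  obtain ⟨f, hf, f', hf', hne, hwf, hwf', hall⟩ := deg_two hw
  have hex : ∃ g ∈ E, g ≠ {w, o, o'} ∧ w ∈ g := by
    by_cases h : f = {w, o, o'}
    · exact ⟨f', hf', by rw [← h]; exact hne.symm, hwf'⟩
    · exact ⟨f, hf, h, hwf⟩
  obtain ⟨g, hg, hge, hwg⟩ := hex
  obtain ⟨y, z, c1, c2, c3, rfl⟩ := edge_form hU hg hwg
  have only := fun f hf hwf => deg_two_only (g := f) hw.le he hg hf hge.symm hwe hwg hwf
  have hog : ∀ t, t ∈ ({w, o, o'} : Finset V) → t ≠ w → t ∉ ({w, y, z} : Finset V) := by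
    intro t ht htw htg
    have := two_le_deg he hg hge.symm ht htg
    have := h1 t ht htw
    omega
  have h3 := hog o (by simp) b1.symm
  have h4 := hog o' (by simp) b2.symm
  simp only [Finset.mem_insert, Finset.mem_singleton, not_or] at h3 h4
  have hge2 : ∀ t ∈ ({w, y, z} : Finset V), 2 ≤ deg E t := by
    intro t ht
    by_contra hcon
    have ht1 : deg E t = 1 := by have := deg_pos_of hg ht; omega
    apply hQ
    refine ⟨w, hw, ?_⟩
    intro f hf hwf
    rcases only f hf hwf with rfl | rfl
    · exact ⟨o, by simp, ho⟩
    · exact ⟨t, ht, ht1⟩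
  exact ⟨o, o', y, z, hw, rfl, ⟨⟨b1, b2, c1, c2, b3, h3.2.1, h3.2.2, h4.2.1, h4.2.2, c3⟩, he, hg, only⟩,
    ho, ho', hge2 y (by simp), hge2 z (by simp)⟩

theorem pend_drop (hU : Unif E) (hD : ∀ u, deg E u ≤ 3) {w o o' y z : V}
    (hS : Star2 E w o o' y z) (hw : deg E w = 2) (ho : deg E o = 1) (ho' : deg E o' = 1) :
    Phi 1 (res E w) + 374 + ex 1 E w y + ex 1 E w z ≤ Phi 1 E := by
  obtain ⟨⟨a1, a2, a3, a4, a5, a6, a7, a8, a9, a10⟩, he, hf, hall⟩ := hS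
  have h := drop_ex (γ := 1) (by norm_num) le_rfl hU hD w {o, o', y, z} (by simp [*])
  rw [hw, Finset.sum_insert (by simp [*]), Finset.sum_insert (by simp [*]),
    Finset.sum_pair a10] at h
  have hs : bon 1 (ones E {w, o, o'}) ≤
      ∑ e ∈ E.filter (fun e => w ∈ e), bon 1 (ones E e) := by
    apply Finset.single_le_sum (f := fun e => bon 1 (ones E e))
    · intro i _; exact bon_nonneg (by norm_num) _
    · simp [he]
  have h3 : ones E {w, o, o'} = 2 := by
    unfold ones
    have : ({w, o, o'} : Finset V).filter (fun u => deg E u = 1) = {o, o'} := by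
      ext x
      simp only [Finset.mem_filter, Finset.mem_insert, Finset.mem_singleton]
      constructor
      · rintro ⟨rfl | rfl | rfl, h⟩
        · omega
        · simp
        · simp
      · rintro (rfl | rfl) <;> simp [*]
    rw [this, Finset.card_pair a5]
  rw [h3] at hs
  have k1 := ex_one (γ := 1) (codeg_pos_of he (by simp : w ∈ _) (by simp)) ho
  have k2 := ex_one (γ := 1) (codeg_pos_of he (by simp : w ∈ _) (by simp)) ho'
  simp only [bon, wt] at h hs
  push_cast at h
  norm_num at hs
  linarith

theorem star_codeg_one {w p q r s : V} (hS : Star2 E w p q r s) : codeg E w r = 1 := by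
  obtain ⟨⟨a1, a2, a3, a4, a5, a6, a7, a8, a9, a10⟩, he, hf, hall⟩ := hS
  have : E.filter (fun e => w ∈ e ∧ r ∈ e) = {{w, r, s}} := by
    ext e
    simp only [Finset.mem_filter, Finset.mem_singleton]
    constructor
    · rintro ⟨h1, h2, h3⟩
      rcases hall e h1 h2 with rfl | rfl
      · simp only [Finset.mem_insert, Finset.mem_singleton] at h3
        rcases h3 with rfl | rfl | rfl <;> simp at *
      · rfl
    · rintro rfl
      simp [hf]
  unfold codeg
  rw [this, Finset.card_singleton]

theorem sur_Pend (hU : Unif E) (hD : ∀ u, deg E u ≤ 3) (hG : Gen E) (hP : ¬ P13 E) (hQ : ¬ QQ E)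
    (h : Pend E) : Sur E 0 := by
  obtain ⟨e, he, w, hwe, hw2, h1⟩ := h
  obtain ⟨o, o', y, z, hw, rfl, hS, ho, ho', hy, hz⟩ := pend_form hU hP hQ he hwe hw2 h1
  have hd := pend_drop hU hD hS hw ho ho'
  have hcy := star_codeg_one hS
  have hcz := star_codeg_one hS.swap.swap1.swap
  have ry := deg_res E w y
  have rz := deg_res E w z
  have y3 := hD y
  have z3 := hD z
  have nw : ∀ a, NewOne E w a → (a = y ∧ deg E y = 2) ∨ (a = z ∧ deg E z = 2) := by
    intro a ha
    have haw : a ≠ w := by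
      rintro rfl
      have := ha.1
      rw [deg_res_self] at this
      omega
    have h2 := ha.1
    have h3 := ha.2
    have h4 := deg_res E w a
    rcases hS.nbr ha.2 haw with rfl | rfl | rfl | rfl
    · omega
    · omega
    · left; exact ⟨rfl, by omega⟩
    · right; exact ⟨rfl, by omega⟩
  have gen190 : (∀ a, NewOne E w a → ∀ g ∈ res E w, a ∈ g → ∀ x ∈ g, deg (res E w) x = 1) →
      Sur E 0 := by
    intro h
    obtain ⟨q1, q2⟩ := lemK hP hQ hD h
    have n1 := ex_nonneg (γ := 1) le_rfl E w y
    have n2 := ex_nonneg (γ := 1) le_rfl E w z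
    exact fin1 hG (D := 374) (by omega) (by linarith) (rep190 hU hD w q1 q2) (by norm_num) (by norm_num)
  -- the mixed case
  have mixed : ∀ y z, Star2 E w o o' y z → deg E y = 2 → deg E z = 3 → Sur E 0 := by
    clear hd hcy hcz ry rz y3 z3 nw gen190 hS hy hz y z
    intro y z hS hy hz
    have hd := pend_drop hU hD hS hw ho ho'
    have hcy := star_codeg_one hS
    have hcz := star_codeg_one hS.swap.swap1.swap
    have ry := deg_res E w y
    have rz := deg_res E w z
    have nw : ∀ a, NewOne E w a → a = y := by
      intro a ha
      have haw : a ≠ w := by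
        rintro rfl
        have := ha.1
        rw [deg_res_self] at this
        omega
      have h2 := ha.1
      have h3 := ha.2
      have h4 := deg_res E w a
      rcases hS.nbr ha.2 haw with rfl | rfl | rfl | rfl
      · omega
      · omega
      · rfl
      · omega
    have n2 := ex_nonneg (γ := 1) le_rfl E w z
    have uniq : ∀ f ∈ E, w ∉ f → y ∈ f → ∀ g ∈ E, w ∉ g → y ∈ g → f = g := by
      intro f hf hwf hyf g hg hwg hyg
      have : deg (res E w) y = 1 := by omega
      obtain ⟨e, _, _, hun⟩ := deg_one this
      rw [hun f (mem_res.2 ⟨hf, hwf⟩) hyf, hun g (mem_res.2 ⟨hg, hwg⟩) hyg]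
    by_cases hP' : P13 (res E w)
    · obtain ⟨a, b, g, hg, hwg, hag, hbg, haw, hba, hN, hb', hb, hno, h21⟩ := new_P13 hU hD hP hP'
      obtain rfl := nw a hN
      have h22 : 22 ≤ ex 1 E w a := by
        apply ex_twentytwo hU (by omega) (by omega)
        intro f hf hwf haf x hx hxa h1
        obtain rfl := uniq f hf hwf haf g hg hwg hag
        rcases old_or_nbr h1 with h | h
        · exact hno x hx h
        · exact hxa (nw x ⟨h1, h⟩)
      exact fin1 hG (D := 396) (by omega) (by linarith) (rep148 hU hD w) (by norm_num) (by norm_num)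
    · by_cases hiso : ∀ f ∈ E, w ∉ f → y ∈ f → ∃ x ∈ f, x ≠ y ∧ deg E x ≠ 1
      · have := ex_fourteen (γ := 1) le_rfl hU (v := w) (u := y) (by omega) (by omega) hiso
        exact fin1 hG (D := 388) (by omega) (by linarith) (rep160 hU hD w hP') (by norm_num) (by norm_num)
      · push Not at hiso
        obtain ⟨f, hf, hwf, hyf, hf1⟩ := hiso
        have hK := lemK hP hQ hD (v := w) (by
          intro a ha g hg hag x hx
          obtain rfl := nw a ha
          have hg' := mem_res.1 hg
          obtain rfl := uniq f hf hwf hyf g hg'.1 hg'.2 hag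
          by_cases hxa : x = a
          · subst hxa; exact ha.1
          · have := hf1 x hx hxa
            have := deg_mono (res_subset E w) x
            have := deg_pos_of hg hx
            omega)
        have := ex_nonneg (γ := 1) le_rfl E w y
        exact fin1 hG (D := 374) (by omega) (by linarith) (rep190 hU hD w hK.1 hK.2) (by norm_num) (by norm_num)
  by_cases hy2 : deg E y = 2
  · by_cases hz2 : deg E z = 2
    · have k1 := ex_six (γ := 1) le_rfl (E := E) (v := w) (u := y) (by omega) (by omega)
      have k2 := ex_six (γ := 1) le_rfl (E := E) (v := w) (u := z) (by omega) (by omega)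
      by_cases hP' : P13 (res E w)
      · obtain ⟨a, b, g, hg, hwg, hag, hbg, haw, hba, hN, hb', hb, hno, h21⟩ := new_P13 hU hD hP hP'
        refine fin1 hG (D := 401) (by omega) ?_ (rep148 hU hD w) (by norm_num) (by norm_num)
        rcases nw a hN with ⟨rfl, _⟩ | ⟨rfl, _⟩ <;> linarith
      · exact fin1 hG (D := 386) (by omega) (by linarith) (rep160 hU hD w hP') (by norm_num) (by norm_num)
    · exact mixed y z hS hy2 (by omega)
  · by_cases hz2 : deg E z = 2
    · exact mixed z y hS.swap.swap1.swap hz2 (by omega)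
    · apply gen190
      intro a ha
      rcases nw a ha with h | h <;> omega

end D3
end TG

namespace TG
open Finset

/-! ### Vertices of degree three and their weak neighbours -/

section D3

variable {E : Finset (Finset V)}

/-- neighbours left with degree at most one -/
def M (E : Finset (Finset V)) (v : V) : Finset V :=
  univ.filter (fun u => u ≠ v ∧ 0 < codeg E v u ∧ deg (res E v) u ≤ 1)

theorem mem_M {v u : V} : u ∈ M E v ↔ u ≠ v ∧ 0 < codeg E v u ∧ deg (res E v) u ≤ 1 := by
  simp [M]

theorem NewOne.mem {v u : V} (h : NewOne E v u) : u ∈ M E v := by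
  refine mem_M.2 ⟨?_, h.2, h.1.le⟩
  rintro rfl
  have := h.1
  rw [deg_res_self] at this
  omega

theorem M_two (hP : ¬ P13 E) {v u : V} (hv : deg E v = 3) (hu : u ∈ M E v) : 2 ≤ deg E u := by
  obtain ⟨h1, h2, h3⟩ := mem_M.1 hu
  have := codeg_le E v u
  obtain ⟨e, he, hve, hue⟩ := codeg_pos.1 h2
  by_contra hcon
  exact hP ⟨e, he, u, hue, v, hve, by omega, by omega⟩

theorem M_zero (hP : ¬ P13 E) {v u : V} (hv : deg E v = 3) (hu : u ∈ M E v)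
    (h : deg (res E v) u = 0) : 76 ≤ ex 1 E v u :=
  ex_vanish_two (mem_M.1 hu).2.1 h (M_two hP hv hu)

theorem NewOne.uniq {v u : V} (h : NewOne E v u) {f g : Finset V} (hf : f ∈ E) (hvf : v ∉ f)
    (hu : u ∈ f) (hg : g ∈ E) (hvg : v ∉ g) (hug : u ∈ g) : f = g := by
  obtain ⟨e, _, _, hun⟩ := deg_one h.1
  rw [hun f (mem_res.2 ⟨hf, hvf⟩) hu, hun g (mem_res.2 ⟨hg, hvg⟩) hug]

theorem mem_new {v u : V} (h : u ∈ M E v) (h0 : deg (res E v) u ≠ 0) : NewOne E v u := by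
  obtain ⟨h1, h2, h3⟩ := mem_M.1 h
  exact ⟨by omega, h2⟩

/-- local no-pendant condition -/
def NoPL (E : Finset (Finset V)) (v : V) : Prop :=
  ∀ u ∈ M E v, ∀ f ∈ E, v ∉ f → u ∈ f → ∃ x ∈ f, x ≠ u ∧ deg E x ≠ 1

/-- local condition: no ones in the edges of weak neighbours -/
def NoOL (E : Finset (Finset V)) (v : V) : Prop :=
  ∀ u ∈ M E v, ∀ f ∈ E, v ∉ f → u ∈ f → ∀ x ∈ f, deg E x ≠ 1

theorem noPL_of (hP : ¬ P13 E) (hPe : ¬ Pend E) {v : V} (hv : deg E v = 3) : NoPL E v := by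
  intro u hu f hf hvf huf
  by_contra hcon
  push Not at hcon
  exact hPe ⟨f, hf, u, huf, M_two hP hv hu, hcon⟩

theorem NoOL.noPL (hU : Unif E) {v : V} (h : NoOL E v) : NoPL E v := by
  intro u hu f hf hvf huf
  obtain ⟨a, b, h1, h2, h3, rfl⟩ := edge_form hU hf huf
  exact ⟨a, by simp, h1.symm, h u hu _ hf hvf huf a (by simp)⟩

theorem ex_M (hU : Unif E) {v : V} (h : NoPL E v) {u : V} (hu : u ∈ M E v) : 14 ≤ ex 1 E v u :=
  ex_fourteen le_rfl hU (mem_M.1 hu).2.1 (mem_M.1 hu).2.2 (h u hu)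

theorem sur_M0 (hU : Unif E) (hD : ∀ u, deg E u ≤ 3) (hG : Gen E) (hP : ¬ P13 E) (hQ : ¬ QQ E)
    {v : V} (hv : deg E v = 3) (h : M E v = ∅) : Sur E 4 := by
  obtain ⟨h1, h2⟩ := lemK hP hQ hD (v := v) (by
    intro a ha
    have := ha.mem
    rw [h] at this
    simp at this)
  exact fin1 hG (by omega) (drop3_0 hU hD hv) (rep190 hU hD v h1 h2) (by norm_num) (by norm_num)

theorem sur_R2 (hU : Unif E) (hD : ∀ u, deg E u ≤ 3) (hG : Gen E) (hP : ¬ P13 E) (hPe : ¬ Pend E)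
    {v : V} (hv : deg E v = 3) (h : 2 ≤ (M E v).card) : Sur E 4 := by
  have hL := noPL_of hP hPe hv
  by_cases h3 : 3 ≤ (M E v).card
  · obtain ⟨a, b, c, ha, hb, hc, hab, hac, hbc⟩ := Finset.two_lt_card_iff.1 h3
    have := drop3_3 hU hD hv (mem_M.1 ha).1 (mem_M.1 hb).1 (mem_M.1 hc).1 hab hac hbc
    have := ex_M hU hL ha
    have := ex_M hU hL hb
    have := ex_M hU hL hc
    exact fin1 hG (D := 400) (by omega) (by linarith) (rep148 hU hD v) (by norm_num) (by norm_num)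
  obtain ⟨a, c, hac, hM⟩ := Finset.card_eq_two.1 (show (M E v).card = 2 by omega)
  have ha : a ∈ M E v := by simp [hM]
  have hc : c ∈ M E v := by simp [hM]
  have hd := drop3_2 hU hD hv (mem_M.1 ha).1 (mem_M.1 hc).1 hac
  have a14 := ex_M hU hL ha
  have c14 := ex_M hU hL hc
  by_cases ha0 : deg (res E v) a = 0
  · have := M_zero hP hv ha ha0
    exact fin1 hG (D := 448) (by omega) (by linarith) (rep148 hU hD v) (by norm_num) (by norm_num)
  by_cases hc0 : deg (res E v) c = 0
  · have := M_zero hP hv hc hc0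
    exact fin1 hG (D := 448) (by omega) (by linarith) (rep148 hU hD v) (by norm_num) (by norm_num)
  have na := mem_new ha ha0
  have nc := mem_new hc hc0
  by_cases hiso : ∃ f ∈ E, v ∉ f ∧ (a ∈ f ∨ c ∈ f) ∧ ∀ x ∈ f, deg (res E v) x = 1
  · obtain ⟨f, hf, hvf, hacf, hf1⟩ := hiso
    have both : a ∈ f ∧ c ∈ f := by
      have aux : ∀ u ∈ M E v, u ∈ f → ∃ x ∈ f, x ≠ u ∧ x ∈ M E v := by
        intro u hu huf
        obtain ⟨x, hx, hxu, hx1⟩ := hL u hu f hf hvf huf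
        refine ⟨x, hx, hxu, NewOne.mem ⟨hf1 x hx, ?_⟩⟩
        rcases old_or_nbr (hf1 x hx) with h | h
        · exact absurd h hx1
        · exact h
      rcases hacf with h | h
      · obtain ⟨x, hx, hxa, hxM⟩ := aux a ha h
        rw [hM] at hxM
        simp only [Finset.mem_insert, Finset.mem_singleton] at hxM
        rcases hxM with rfl | rfl
        · exact absurd rfl hxa
        · exact ⟨h, hx⟩
      · obtain ⟨x, hx, hxa, hxM⟩ := aux c hc h
        rw [hM] at hxM
        simp only [Finset.mem_insert, Finset.mem_singleton] at hxM
        rcases hxM with rfl | rfl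
        · exact ⟨hx, h⟩
        · exact absurd rfl hxa
    have allnew : ∀ u, NewOne E v u → ∀ g ∈ E, v ∉ g → u ∈ g → g = f := by
      intro u hu g hg hvg hug
      have hm := hu.mem
      rw [hM] at hm
      simp only [Finset.mem_insert, Finset.mem_singleton] at hm
      rcases hm with rfl | rfl
      · exact hu.uniq hg hvg hug hf hvf both.1
      · exact hu.uniq hg hvg hug hf hvf both.2
    have hP' : ¬ P13 (res E v) := by
      intro h
      obtain ⟨a', b, g, hg, hwg, hag, hbg, haw, hba, hN, hb', hb, hno, h21⟩ := new_P13 hU hD hP h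
      obtain rfl := allnew a' hN g hg hwg hag
      have := hf1 b hbg
      omega
    have hPe' : ¬ Pend (res E v) := by
      rintro ⟨e, he, w, hwe, hw2, h1⟩
      have he' := mem_res.1 he
      apply hPe
      refine ⟨e, he'.1, w, hwe, hw2.trans (deg_mono (res_subset E v) w), ?_⟩
      intro x hx hxw
      have hx1 := h1 x hx hxw
      rcases old_or_nbr hx1 with h | h
      · exact h
      · obtain rfl := allnew x ⟨hx1, h⟩ e he'.1 he'.2 hx
        have := hf1 w hwe
        omega
    exact fin1 hG (D := 386) (by omega) (by linarith) (fun u hu =>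
      reply_noPend' (by norm_num) (by norm_num) (hU.res v) (res_deg_le hD v) hP' hPe' hu)
      (by norm_num) (by norm_num)
  · push Not at hiso
    have a20 := ex_twenty (γ := 1) le_rfl hU na.2 na.1.le
      (fun f hf hvf h => hiso f hf hvf (Or.inl h))
    have c20 := ex_twenty (γ := 1) le_rfl hU nc.2 nc.1.le
      (fun f hf hvf h => hiso f hf hvf (Or.inr h))
    by_cases hP' : P13 (res E v)
    · obtain ⟨a', b, g, hg, hwg, hag, hbg, haw, hba, hN, hb', hb, hno, h21⟩ := new_P13 hU hD hP hP'
      have key : ∀ c', NewOne E v c' → (∀ x ∈ M E v, x = a' ∨ x = c') → 20 ≤ ex 1 E v c' →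
          42 ≤ ex 1 E v a' + ex 1 E v c' := by
        intro c' hc' hall h20
        by_cases hcg : c' ∈ g
        · have : 21 ≤ ex 1 E v c' := by
            apply ex_twentyone le_rfl hU hc'.2 hc'.1.le
            intro f hf hvf hcf
            obtain rfl := hc'.uniq hf hvf hcf hg hwg hcg
            exact ⟨⟨b, hbg, by omega⟩, hno⟩
          linarith
        · have : 22 ≤ ex 1 E v a' := by
            apply ex_twentytwo hU hN.2 hN.1.le
            intro f hf hvf haf x hx hxa hx1
            obtain rfl := hN.uniq hf hvf haf hg hwg hag
            rcases old_or_nbr hx1 with h | h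
            · exact hno x hx h
            · rcases hall x (NewOne.mem ⟨hx1, h⟩) with rfl | rfl
              · exact hxa rfl
              · exact hcg hx
          linarith
      have hm := hN.mem
      have h42 : 42 ≤ ex 1 E v a + ex 1 E v c := by
        rw [hM] at hm
        simp only [Finset.mem_insert, Finset.mem_singleton] at hm
        rcases hm with rfl | rfl
        · exact key c nc (by simp [hM]) c20
        · have := key a na (by simp [hM]) a20
          linarith
      exact fin1 hG (D := 400) (by omega) (by linarith) (rep148 hU hD v) (by norm_num) (by norm_num)
    · exact fin1 hG (D := 398) (by omega) (by linarith) (rep160 hU hD v hP') (by norm_num) (by norm_num)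

theorem sur_R3 (hU : Unif E) (hD : ∀ u, deg E u ≤ 3) (hG : Gen E) (hP : ¬ P13 E)
    {v : V} (hL : NoPL E v) (hv : deg E v = 3) (h : 3 ≤ (M E v).card) : Sur E 10 := by
  by_cases hP' : P13 (res E v)
  · obtain ⟨a, b, g, hg, hwg, hag, hbg, haw, hba, hN, hb', hb, hno, h21⟩ := new_P13 hU hD hP hP'
    have hc : 1 < ((M E v).erase a).card := by
      rw [Finset.card_erase_of_mem hN.mem]; omega
    obtain ⟨c, d, hc, hd, hcd⟩ := Finset.one_lt_card_iff.1 hc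
    rw [Finset.mem_erase] at hc hd
    have := drop3_3 hU hD hv haw (mem_M.1 hc.2).1 (mem_M.1 hd.2).1 hc.1.symm hd.1.symm hcd
    have := ex_M hU hL hc.2
    have := ex_M hU hL hd.2
    exact fin1 hG (D := 407) (by omega) (by linarith) (rep148 hU hD v) (by norm_num) (by norm_num)
  · obtain ⟨a, b, c, ha, hb, hc, hab, hac, hbc⟩ := Finset.two_lt_card_iff.1 h
    have := drop3_3 hU hD hv (mem_M.1 ha).1 (mem_M.1 hb).1 (mem_M.1 hc).1 hab hac hbc
    have := ex_M hU hL ha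
    have := ex_M hU hL hb
    have := ex_M hU hL hc
    exact fin1 hG (D := 400) (by omega) (by linarith) (rep160 hU hD v hP') (by norm_num) (by norm_num)

theorem sur_R3' (hU : Unif E) (hD : ∀ u, deg E u ≤ 3) (hG : Gen E) (hP : ¬ P13 E)
    {v : V} (hO : NoOL E v) (hv : deg E v = 3) (h : 3 ≤ (M E v).card) : Sur E 16 := by
  have hL := hO.noPL hU
  by_cases hP' : P13 (res E v)
  · obtain ⟨a, b, g, hg, hwg, hag, hbg, haw, hba, hN, hb', hb, hno, h21⟩ := new_P13 hU hD hP hP'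
    have hcard : (((M E v).erase a)).card = (M E v).card - 1 := Finset.card_erase_of_mem hN.mem
    have hnot : v ∉ M E v := by simp [mem_M]
    have hd := drop3 hU hD hv (M E v) hnot
    rw [← Finset.add_sum_erase _ _ hN.mem] at hd
    have h42 : 42 ≤ ∑ x ∈ (M E v).erase a, ex 1 E v x := by
      by_cases h4 : 4 ≤ (M E v).card
      · have := Finset.card_nsmul_le_sum ((M E v).erase a) (fun x => ex 1 E v x) 14
          (fun x hx => ex_M hU hL (Finset.mem_of_mem_erase hx))
        rw [hcard, nsmul_eq_mul] at this
        have h5 : (3 : ℤ) ≤ (((M E v).card - 1 : ℕ) : ℤ) := by omega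
        nlinarith
      · have hc2 : ((M E v).erase a).card = 2 := by omega
        have := Finset.card_nsmul_le_sum ((M E v).erase a) (fun x => ex 1 E v x) 21 ?_
        · rw [hc2] at this
          simpa using this
        intro c hc
        have hcM := Finset.mem_of_mem_erase hc
        by_cases h0 : deg (res E v) c = 0
        · have := M_zero hP hv hcM h0
          linarith
        have nc := mem_new hcM h0
        apply ex_twentyone le_rfl hU nc.2 nc.1.le
        intro f hf hvf hcf
        refine ⟨?_, hO c hcM f hf hvf hcf⟩
        by_contra hcon
        push Not at hcon
        have haf : a ∉ f := by
          intro haf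
          obtain rfl := hN.uniq hf hvf haf hg hwg hag
          have := hcon b hbg
          omega
        have hsub : f ⊆ (M E v).erase a := by
          intro x hx
          refine Finset.mem_erase.2 ⟨by rintro rfl; exact haf hx, ?_⟩
          rcases old_or_nbr (hcon x hx) with h | h
          · exact absurd h (hO c hcM f hf hvf hcf x hx)
          · exact NewOne.mem ⟨hcon x hx, h⟩
        have := Finset.card_le_card hsub
        rw [hU f hf, hc2] at this
        omega
    exact fin1 hG (D := 421) (by omega) (by linarith) (rep148 hU hD v) (by norm_num) (by norm_num)
  · obtain ⟨a, b, c, ha, hb, hc, hab, hac, hbc⟩ := Finset.two_lt_card_iff.1 h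
    have := drop3_3 hU hD hv (mem_M.1 ha).1 (mem_M.1 hb).1 (mem_M.1 hc).1 hab hac hbc
    have := ex_M hU hL ha
    have := ex_M hU hL hb
    have := ex_M hU hL hc
    exact fin1 hG (D := 400) (by omega) (by linarith) (rep160 hU hD v hP') (by norm_num) (by norm_num)

/-- replies at old ones -/
theorem reply_old (hU : Unif E) (hD : ∀ u, deg E u ≤ 3) (hP : ¬ P13 E) {v u : V}
    (hu : deg E u = 1) (hu' : 0 < deg (res E v) u) :
    Phi 1 (res (res E v) u) + 160 ≤ Phi 1 (res E v) := by
  have := reply_gen (γ := 1) (by norm_num) le_rfl (hU.res v) (res_deg_le hD v) (c := 6)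
    (by norm_num) hu' ?_
  · linarith
  intro h1 e he hue x hx hxu
  have h2 := deg_le_two_of hP (res_subset _ _ he) hue hx hu
  have h3 := deg_mono (res_subset E v) x
  apply ex_six le_rfl (codeg_pos_of he hue hx)
  have := deg_res (res E v) u x
  have := codeg_pos_of he hue hx
  omega

theorem sur_R2' (hU : Unif E) (hD : ∀ u, deg E u ≤ 3) (hG : Gen E) (hP : ¬ P13 E)
    {v : V} (hO : NoOL E v) (hv : deg E v = 3) (h : 2 ≤ (M E v).card) : Sur E 6 := by
  have hL := hO.noPL hU
  by_cases h3 : 3 ≤ (M E v).card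
  · exact (sur_R3' hU hD hG hP hO hv h3).mono (by norm_num)
  obtain ⟨a, c, hac, hM⟩ := Finset.card_eq_two.1 (show (M E v).card = 2 by omega)
  have ha : a ∈ M E v := by simp [hM]
  have hc : c ∈ M E v := by simp [hM]
  have hd := drop3_2 hU hD hv (mem_M.1 ha).1 (mem_M.1 hc).1 hac
  have a14 := ex_M hU hL ha
  have c14 := ex_M hU hL hc
  by_cases ha0 : deg (res E v) a = 0
  · have := M_zero hP hv ha ha0
    exact fin1 hG (D := 448) (by omega) (by linarith) (rep148 hU hD v) (by norm_num) (by norm_num)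
  by_cases hc0 : deg (res E v) c = 0
  · have := M_zero hP hv hc hc0
    exact fin1 hG (D := 448) (by omega) (by linarith) (rep148 hU hD v) (by norm_num) (by norm_num)
  have na := mem_new ha ha0
  have nc := mem_new hc hc0
  have newM : ∀ u ∈ M E v, ∀ f ∈ E, v ∉ f → u ∈ f → ∀ x ∈ f, deg (res E v) x = 1 → x = a ∨ x = c := by
    intro u hu f hf hvf huf x hx hx1
    rcases old_or_nbr hx1 with h | h
    · exact absurd h (hO u hu f hf hvf huf x hx)
    · have := NewOne.mem ⟨hx1, h⟩
      rw [hM] at this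
      simpa using this
  have noiso : ∀ u ∈ M E v, ∀ f ∈ E, v ∉ f → u ∈ f → ∃ x ∈ f, deg (res E v) x ≠ 1 := by
    intro u hu f hf hvf huf
    by_contra hcon
    push Not at hcon
    have hsub : f ⊆ {a, c} := fun x hx => by
      simpa using newM u hu f hf hvf huf x hx (hcon x hx)
    have := Finset.card_le_card hsub
    rw [hU f hf, Finset.card_pair hac] at this
    omega
  by_cases hcom : ∃ f ∈ E, v ∉ f ∧ a ∈ f ∧ c ∈ f
  · obtain ⟨f, hf, hvf, haf, hcf⟩ := hcom
    have a21 := ex_twentyone (γ := 1) le_rfl hU na.2 na.1.le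
      (fun f hf hvf h => ⟨noiso a ha f hf hvf h, hO a ha f hf hvf h⟩)
    have c21 := ex_twentyone (γ := 1) le_rfl hU nc.2 nc.1.le
      (fun f hf hvf h => ⟨noiso c hc f hf hvf h, hO c hc f hf hvf h⟩)
    refine fin1 hG (v := v) (D := 400) (R := 160) (by omega) (by linarith) ?_ (by norm_num) (by norm_num)
    intro u hu
    by_cases hu2 : 2 ≤ deg (res E v) u
    · have := reply_two (γ := 1) (by norm_num) le_rfl (hU.res v) (res_deg_le hD v) hu2
      linarith
    have hu1 : deg (res E v) u = 1 := by omega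
    have fr := mem_res.2 ⟨hf, hvf⟩
    have key : ∀ p q, p ∈ f → q ∈ f → p ≠ q → deg (res E v) p = 1 → deg (res E v) q = 1 →
        Phi 1 (res (res E v) p) + 160 ≤ Phi 1 (res E v) := by
      intro p q hp hq hpq hp1 hq1
      obtain ⟨t, h1, h2, rfl⟩ := edge_form2 hU hf hp hq hpq
      have h5 := reply_edge (γ := 1) (by norm_num) le_rfl (hU.res v) (res_deg_le hD v) hp1 hpq h1 h2
      have h6 := ex_one (γ := 1) (codeg_pos_of fr hp hq) hq1
      have h7 := ex_nonneg (γ := 1) le_rfl (res E v) p t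
      linarith
    rcases old_or_nbr hu1 with h | h
    · exact reply_old hU hD hP h hu
    · have := NewOne.mem ⟨hu1, h⟩
      rw [hM] at this
      simp only [Finset.mem_insert, Finset.mem_singleton] at this
      rcases this with rfl | rfl
      · exact key u c haf hcf hac hu1 nc.1
      · exact key u a hcf haf hac.symm hu1 na.1
  · push Not at hcom
    have a22 : 22 ≤ ex 1 E v a := by
      apply ex_twentytwo hU na.2 na.1.le
      intro f hf hvf haf x hx hxa hx1
      rcases newM a ha f hf hvf haf x hx hx1 with rfl | rfl
      · exact hxa rfl
      · exact hcom f hf hvf haf hx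
    have c22 : 22 ≤ ex 1 E v c := by
      apply ex_twentytwo hU nc.2 nc.1.le
      intro f hf hvf haf x hx hxa hx1
      rcases newM c hc f hf hvf haf x hx hx1 with rfl | rfl
      · exact hcom f hf hvf hx haf
      · exact hxa rfl
    exact fin1 hG (D := 402) (by omega) (by linarith) (rep148 hU hD v) (by norm_num) (by norm_num)

/-- the tight structure at a vertex of degree three -/
structure Tight (E : Finset (Finset V)) (v z s t : V) : Prop where
  hM : M E v = {z}
  new : NewOne E v z
  edge : {z, s, t} ∈ E
  vf : v ∉ ({z, s, t} : Finset V)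
  zs : z ≠ s
  zt : z ≠ t
  st : s ≠ t
  s3 : deg E s = 3
  t3 : deg E t = 3
  cs : codeg E v s = 0
  ct : codeg E v t = 0
  nsur : ¬ Sur (res (res E v) z) 16

theorem tight_of (hU : Unif E) (hD : ∀ u, deg E u ≤ 3) (hG : Gen E) (hP : ¬ P13 E) (hQ : ¬ QQ E)
    (hPe : ¬ Pend E) (hS : ¬ Sur E 0) {v : V} (hv : deg E v = 3) : ∃ z s t, Tight E v z s t := by
  have hM1 : (M E v).card = 1 := by
    by_contra hcon
    by_cases h0 : (M E v).card = 0
    · exact hS ((sur_M0 hU hD hG hP hQ hv (Finset.card_eq_zero.1 h0)).mono (by norm_num))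
    · exact hS ((sur_R2 hU hD hG hP hPe hv (by omega)).mono (by norm_num))
  obtain ⟨z, hM⟩ := Finset.card_eq_one.1 hM1
  have hz : z ∈ M E v := by simp [hM]
  have hzv := (mem_M.1 hz).1
  have hz2 := M_two hP hv hz
  have hd := drop3_1 hU hD hv hzv
  by_cases hz0 : deg (res E v) z = 0
  · have := M_zero hP hv hz hz0
    exact absurd (fin1 hG (σ := 0) (D := 412) (by omega) (by linarith) (rep148 hU hD v) (by norm_num) (by norm_num)) hS
  have nz := mem_new hz hz0
  have newz : ∀ u, NewOne E v u → u = z := by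
    intro u hu
    have := hu.mem
    rw [hM] at this
    simpa using this
  have hL := noPL_of hP hPe hv
  by_cases hP' : P13 (res E v)
  swap
  · exfalso
    apply hS
    have h20 : 20 ≤ ex 1 E v z := by
      apply ex_twenty le_rfl hU nz.2 nz.1.le
      intro f hf hvf hzf
      by_contra hcon
      push Not at hcon
      obtain ⟨x, hx, hxz, hx1⟩ := hL z hz f hf hvf hzf
      rcases old_or_nbr (hcon x hx) with h | h
      · exact hx1 h
      · exact hxz (newz x ⟨hcon x hx, h⟩)
    refine fin1 hG (D := 378) (by omega) (by linarith) (fun u hu =>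
      reply_noPend (by norm_num) (by norm_num) (hU.res v) (res_deg_le hD v) hP' ?_ hu)
      (by norm_num) (by norm_num)
    rintro ⟨w, e, he, f, hf, a, hae, ha1, haw, haf, hwe, hwf, hfx⟩
    have hf' := mem_res.1 hf
    have he' := mem_res.1 he
    have hef : e ≠ f := by rintro rfl; exact haf hae
    have hw2 : 2 ≤ deg E w := two_le_deg he'.1 hf'.1 hef hwe hwf
    obtain ⟨x, y, b1, b2, b3, rfl⟩ := edge_form hU hf'.1 hwf
    have hx1 := hfx x (by simp) b1.symm
    have hy1 := hfx y (by simp) b2.symm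
    have zf : z ∈ ({w, x, y} : Finset V) := by
      by_contra hzf
      apply hPe
      refine ⟨_, hf'.1, w, hwf, hw2, ?_⟩
      intro x hx hxw
      have hx1 := hfx x hx hxw
      rcases old_or_nbr hx1 with h | h
      · exact h
      · exact absurd (newz x ⟨hx1, h⟩ ▸ hx) hzf
    have hold : ∃ o ∈ ({w, x, y} : Finset V), deg E o = 1 := by
      rcases old_or_nbr hx1 with h | h
      · exact ⟨x, by simp, h⟩
      rcases old_or_nbr hy1 with h' | h'
      · exact ⟨y, by simp, h'⟩
      exact absurd ((newz x ⟨hx1, h⟩).trans (newz y ⟨hy1, h'⟩).symm) b3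
    have aold : deg E a = 1 := by
      rcases old_or_nbr ha1 with h | h
      · exact h
      · exact absurd (newz a ⟨ha1, h⟩ ▸ zf) haf
    have hwle := deg_le_two_of hP he'.1 hae hwe aold
    apply hQ
    refine ⟨w, by omega, ?_⟩
    intro g hg hwg
    rcases deg_two_only hwle he'.1 hf'.1 hg hef hwe hwf hwg with rfl | rfl
    · exact ⟨a, hae, aold⟩
    · exact hold
  obtain ⟨a, b, g, hg, hvg, hag, hbg, hav, hba, hN, hb', hb, hno, h21⟩ := new_P13 hU hD hP hP'
  obtain rfl := newz a hN
  have h22 : 22 ≤ ex 1 E v a := by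
    apply ex_twentytwo hU hN.2 hN.1.le
    intro f hf hvf haf x hx hxa hx1
    obtain rfl := hN.uniq hf hvf haf hg hvg hag
    rcases old_or_nbr hx1 with h | h
    · exact hno x hx h
    · exact hxa (newz x ⟨hx1, h⟩)
  obtain ⟨t, hat, hbt, rfl⟩ := edge_form2 hU hg hag hbg hba.symm
  have hgr := mem_res.2 ⟨hg, hvg⟩
  have hPend' : ∀ f ∈ res E v, a ∉ f → ∀ x ∈ f, 2 ≤ deg (res E v) x →
      ∃ y ∈ f, y ≠ x ∧ deg (res E v) y ≠ 1 := by
    intro f hf haf x hx hx2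
    by_contra hcon
    push Not at hcon
    have hf' := mem_res.1 hf
    apply hPe
    refine ⟨f, hf'.1, x, hx, hx2.trans (deg_mono (res_subset E v) x), ?_⟩
    intro y hy hyx
    have hy1 := hcon y hy hyx
    rcases old_or_nbr hy1 with h | h
    · exact h
    · exact absurd (newz y ⟨hy1, h⟩ ▸ hy) haf
  -- replies other than a
  have hrep : ∀ u, u ≠ a → 0 < deg (res E v) u → Phi 1 (res (res E v) u) + 164 ≤ Phi 1 (res E v) := by
    intro u hua hu
    by_cases hu2 : 2 ≤ deg (res E v) u
    · have := reply_two (γ := 1) (by norm_num) le_rfl (hU.res v) (res_deg_le hD v) hu2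
      linarith
    have hu1 : deg (res E v) u = 1 := by omega
    have huE : deg E u = 1 := by
      rcases old_or_nbr hu1 with h | h
      · exact h
      · exact absurd (newz u ⟨hu1, h⟩) hua
    have := reply_gen (γ := 1) (by norm_num) le_rfl (hU.res v) (res_deg_le hD v) (c := 14)
      (by norm_num) hu ?_
    · linarith
    intro h1 e he hue x hx hxu
    have h2 := deg_le_two_of hP (res_subset _ _ he) hue hx huE
    have h3 := deg_mono (res_subset E v) x
    have hcx := codeg_pos_of he hue hx
    have hdx := deg_res (res E v) u x
    by_cases hx1 : deg (res E v) x = 1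
    · have := ex_one (γ := 1) hcx hx1
      linarith
    apply ex_fourteen le_rfl (hU.res v) hcx (by omega)
    intro f hf huf hxf
    by_cases haf : a ∈ f
    · obtain rfl := hN.uniq (mem_res.1 hf).1 (mem_res.1 hf).2 haf hg hvg hag
      exact ⟨b, by simp, by rintro rfl; omega, by omega⟩
    exact hPend' f hf haf x hxf (by have := deg_pos_of he hx; omega)
  have ha1 := hN.1
  have hta := hat.symm
  have ht1 : deg (res E v) t ≠ 1 := by
    intro h1
    rcases old_or_nbr h1 with h | h
    · exact hno t (by simp) h
    · exact hta (newz t ⟨h1, h⟩)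
  have htpos := deg_pos_of hgr (by simp : t ∈ _)
  have ht3' := res_deg_le hD v t
  by_cases ht2 : deg (res E v) t = 2
  · exfalso
    apply hS
    refine fin1 hG (v := v) (D := 380) (R := 164) (by omega) (by linarith) ?_ (by norm_num) (by norm_num)
    intro u hu
    by_cases hua : u = a
    swap
    · exact hrep u hua hu
    subst hua
    have h5 := reply_edge (γ := 1) (by norm_num) le_rfl (hU.res v) (res_deg_le hD v) ha1 hba.symm hat hbt
    have hct := codeg_pos_of hgr hag (by simp : t ∈ _)
    have hdt := deg_res (res E v) u t
    have h6 : 20 ≤ ex 1 (res E v) u t := by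
      apply ex_twenty le_rfl (hU.res v) hct (by omega)
      intro f hf huf htf
      by_contra hcon
      push Not at hcon
      obtain ⟨y, hy, hyt, hy1⟩ := hPend' f hf huf t htf (by omega)
      rcases old_or_nbr (hcon y hy) with h | h
      · exact hy1 h
      · obtain ⟨e, he, hue, hye⟩ := codeg_pos.1 h
        have he' := mem_res.1 he
        obtain rfl := hN.uniq he'.1 he'.2 hue hg hvg hag
        simp only [Finset.mem_insert, Finset.mem_singleton] at hye
        rcases hye with rfl | rfl | rfl
        · exact huf hy
        · have := hcon y hy
          have h8 := deg_res (res E v) u y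
          have h9 := codeg_le' (res E v) u y
          omega
        · exact hyt rfl
    have h7 := ex_nonneg (γ := 1) le_rfl (res E v) u b
    linarith
  have ht3 : deg (res E v) t = 3 := by omega
  have htE := deg_res E v t
  have hbE := deg_res E v b
  have := hD t
  refine ⟨a, b, t, hM, hN, hg, hvg, hba.symm, hat, hbt, hb, by omega, by omega, by omega, ?_⟩
  intro hsur
  apply hS
  unfold Sur at hsur ⊢
  have hPn := Phi_nonneg (γ := 1) (by norm_num) (res E v)
  have := round (E := E) (C := Phi 1 E + 16) (v := v) (by omega) (by linarith) ?_
  · linarith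
  intro u hu
  by_cases hua : u = a
  · subst hua
    have := rep148 hU hD v u hu
    linarith
  · have h1 := hrep u hua hu
    have h2 := hG (res (res E v) u) ((res_subset _ _).trans (res_subset _ _))
      (lt_of_le_of_lt (Finset.card_le_card (res_subset _ _)) (card_res_lt (by omega)))
    linarith

end D3
end TG

namespace TG
open Finset

/-! ### Tight rounds and the absence of double neighbours -/

section D4

variable {E : Finset (Finset V)}

/-- a round in which Staller answers at a weak neighbour -/
structure Step (F : Finset (Finset V)) (x y a b : V) : Prop where
  x3 : deg F x = 3
  new : NewOne F x y
  edge : {y, a, b} ∈ F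
  vf : x ∉ ({y, a, b} : Finset V)
  ya : y ≠ a
  yb : y ≠ b
  ab : a ≠ b
  a3 : deg (res F x) a = 3
  b3 : deg (res F x) b = 3

theorem Tight.step {v z s t : V} (h : Tight E v z s t) (hv : deg E v = 3) : Step E v z s t := by
  have h1 := deg_res E v s
  have h2 := deg_res E v t
  have := h.s3
  have := h.t3
  have := h.cs
  have := h.ct
  exact ⟨hv, h.new, h.edge, h.vf, h.zs, h.zt, h.st, by omega, by omega⟩

theorem Step.uniq {F : Finset (Finset V)} {x y a b : V} (h : Step F x y a b) {f : Finset V}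
    (hf : f ∈ F) (hx : x ∉ f) (hy : y ∈ f) : f = {y, a, b} :=
  h.new.uniq hf hx hy h.edge h.vf (by simp)

theorem Step.sub {F : Finset (Finset V)} {x y a b : V} (h : Step F x y a b) :
    res (res F x) y ⊆ F := (res_subset _ _).trans (res_subset _ _)

theorem Step.mem {F : Finset (Finset V)} {x y a b : V} (h : Step F x y a b) {f : Finset V} :
    f ∈ res (res F x) y ↔ f ∈ F ∧ x ∉ f ∧ f ≠ {y, a, b} := by
  rw [mem_res, mem_res]
  constructor
  · rintro ⟨⟨h1, h2⟩, h3⟩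
    exact ⟨h1, h2, by rintro rfl; simp at h3⟩
  · rintro ⟨h1, h2, h3⟩
    exact ⟨⟨h1, h2⟩, fun hy => h3 (h.uniq h1 h2 hy)⟩

theorem Step.deg_far {F : Finset (Finset V)} {x y a b : V} (h : Step F x y a b) {w : V}
    (hw : w ∉ ({y, a, b} : Finset V)) : deg (res (res F x) y) w = deg (res F x) w := by
  have h1 := deg_res (res F x) y w
  have : codeg (res F x) y w = 0 := by
    by_contra hc
    obtain ⟨e, he, hye, hwe⟩ := codeg_pos.1 (Nat.pos_of_ne_zero hc)
    have he' := mem_res.1 he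
    rw [h.uniq he'.1 he'.2 hye] at hwe
    exact hw hwe
  omega

theorem Step.deg_ab {F : Finset (Finset V)} {x y a b : V} (h : Step F x y a b) {w : V}
    (hw : w = a ∨ w = b) : deg (res (res F x) y) w = 2 := by
  have h1 := deg_res (res F x) y w
  have h2 := codeg_le' (res F x) y w
  have h3 := h.new.1
  have h4 : 0 < codeg (res F x) y w :=
    codeg_pos_of (mem_res.2 ⟨h.edge, h.vf⟩) (by simp) (by rcases hw with rfl | rfl <;> simp)
  have := h.a3
  have := h.b3
  rcases hw with rfl | rfl <;> omega

theorem Step.one {F : Finset (Finset V)} {x y a b : V} (h : Step F x y a b) {w : V}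
    (hw : deg (res (res F x) y) w = 1) : deg F w = 1 ∨ (w ∈ M F x ∧ w ≠ y) := by
  have hwy : w ≠ y := by
    rintro rfl
    rw [deg_res_self] at hw
    omega
  by_cases hab : w = a ∨ w = b
  · have := h.deg_ab hab
    omega
  · rw [h.deg_far (by simp; tauto)] at hw
    rcases old_or_nbr hw with h1 | h1
    · exact Or.inl h1
    · exact Or.inr ⟨NewOne.mem ⟨hw, h1⟩, hwy⟩

/-- the critical situation -/
structure XT (E : Finset (Finset V)) : Prop where
  hU : Unif E
  hD : ∀ u, deg E u ≤ 3
  hG : Gen E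
  hP : ¬ P13 E
  hQ : ¬ QQ E
  hPe : ¬ Pend E
  hS : ¬ Sur E 0

theorem XT.tight (h : XT E) {v : V} (hv : deg E v = 3) : ∃ z s t, Tight E v z s t :=
  tight_of h.hU h.hD h.hG h.hP h.hQ h.hPe h.hS hv

theorem Tight.only {v z s t : V} (h : Tight E v z s t) {u : V} (hu : u ∈ M E v) : u = z := by
  rw [h.hM] at hu
  simpa using hu

theorem Tight.zM {v z s t : V} (h : Tight E v z s t) : z ∈ M E v := by simp [h.hM]

/-- other neighbours -/
theorem XT.nbr (h : XT E) {v z s t u : V} (hT : Tight E v z s t) (hv : deg E v = 3)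
    (huv : u ≠ v) (hc : 0 < codeg E v u) (huz : u ≠ z) : deg E u = 3 ∧ codeg E v u = 1 := by
  have h1 := deg_res E v u
  have h2 := h.hD u
  by_cases h3 : deg (res E v) u ≤ 1
  · exact absurd (hT.only (mem_M.2 ⟨huv, hc, h3⟩)) huz
  · omega

/-- edges at neighbours of a vertex of degree three have no vertex of degree one -/
theorem XT.near (h : XT E) {x m : V} (hx : deg E x = 3) (hm : 0 < codeg E x m) {f : Finset V}
    (hf : f ∈ E) (hmf : m ∈ f) {y : V} (hy : y ∈ f) : deg E y ≠ 1 := by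
  intro hy1
  have hmle := deg_le_two_of h.hP hf hy hmf hy1
  have hmx : m ≠ x := by rintro rfl; omega
  obtain ⟨z, s, t, hT⟩ := h.tight hx
  by_cases hmz : m = z
  · subst hmz
    by_cases hxf : x ∈ f
    · exact h.hP ⟨f, hf, y, hy, x, hxf, hy1, by omega⟩
    · have := (hT.step hx).uniq hf hxf hmf
      subst this
      exact h.hP ⟨_, hf, y, hy, s, by simp, hy1, hT.s3.ge⟩
  · have := (h.nbr hT hx hmx hm hmz).1
    omega

theorem M_mono {F : Finset (Finset V)} (hF : F ⊆ E) {x : V} (h : deg F x = deg E x) :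
    M E x ⊆ M F x := by
  intro u hu
  obtain ⟨h1, h2, h3⟩ := mem_M.1 hu
  have hall : ∀ e ∈ E, x ∈ e → e ∈ F := by
    intro e he hxe
    have : F.filter (fun e => x ∈ e) = E.filter (fun e => x ∈ e) :=
      Finset.eq_of_subset_of_card_le (Finset.filter_subset_filter _ hF) (by unfold deg at h; omega)
    have h5 : e ∈ E.filter (fun e => x ∈ e) := Finset.mem_filter.2 ⟨he, hxe⟩
    rw [← this] at h5
    exact (Finset.mem_filter.1 h5).1
  refine mem_M.2 ⟨h1, ?_, ?_⟩
  · obtain ⟨e, he, hxe, hue⟩ := codeg_pos.1 h2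
    exact codeg_pos_of (hall e he hxe) hxe hue
  · refine le_trans (deg_mono ?_ u) h3
    intro e he
    rw [mem_res] at he ⊢
    exact ⟨hF he.1, he.2⟩

theorem keep {F : Finset (Finset V)} (hF : F ⊆ E) {x : V} (h : deg F x = deg E x) {e : Finset V}
    (he : e ∈ E) (hxe : x ∈ e) : e ∈ F := by
  have : F.filter (fun e => x ∈ e) = E.filter (fun e => x ∈ e) :=
    Finset.eq_of_subset_of_card_le (Finset.filter_subset_filter _ hF) (by unfold deg at h; omega)
  have h5 : e ∈ E.filter (fun e => x ∈ e) := Finset.mem_filter.2 ⟨he, hxe⟩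
  rw [← this] at h5
  exact (Finset.mem_filter.1 h5).1

theorem codeg_mono {F : Finset (Finset V)} (hF : F ⊆ E) (v u : V) : codeg F v u ≤ codeg E v u :=
  Finset.card_le_card (Finset.filter_subset_filter _ hF)

/-- weak neighbours in the residual hypergraph of a tight round -/
theorem XT.first (h : XT E) {v z s t : V} (hv : deg E v = 3) (hT : Tight E v z s t) {x : V}
    (hx : deg (res (res E v) z) x = 3) : (M (res (res E v) z) x).card ≤ 2 ∧
      ∀ u ∈ M (res (res E v) z) x, deg (res (res (res E v) z) x) u ≠ 0 := by
  have hst := hT.step hv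
  have hsub := hst.sub
  have hU := h.hU.mono hsub
  have hD : ∀ u, deg (res (res E v) z) u ≤ 3 := fun u => (deg_mono hsub u).trans (h.hD u)
  have hG := h.hG.mono hsub
  have hP : ¬ P13 (res (res E v) z) := fun hc => hT.nsur (sur_P13 hU hD hG hc)
  have hxE : deg E x = 3 := le_antisymm (h.hD x) (hx ▸ deg_mono hsub x)
  have hO : NoOL (res (res E v) z) x := by
    intro u hu f hf hxf huf y hy hy1
    have hc := (mem_M.1 hu).2.1
    have hc' := hc.trans_le (codeg_mono hsub x u)
    have := h.near hxE hc' (hsub hf) huf hy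
    rcases hst.one hy1 with h1 | ⟨h1, h2⟩
    · exact this h1
    · exact h2 (hT.only h1)
  constructor
  · by_contra hcon
    exact hT.nsur (sur_R3' hU hD hG hP hO hx (by omega))
  · intro u hu h0
    have h76 := M_zero hP hx hu h0
    have hd := drop3_1 hU hD hx (mem_M.1 hu).1
    exact hT.nsur (fin1 hG (D := 434) (by omega) (by linarith) (rep148 hU hD x)
      (by norm_num) (by norm_num))

theorem deg_three_only {v : V} {e f g k : Finset V} (h : deg E v ≤ 3) (he : e ∈ E) (hf : f ∈ E)
    (hg : g ∈ E) (hk : k ∈ E) (hef : e ≠ f) (heg : e ≠ g) (hfg : f ≠ g) (hve : v ∈ e) (hvf : v ∈ f)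
    (hvg : v ∈ g) (hvk : v ∈ k) : k = e ∨ k = f ∨ k = g := by
  by_contra hcon
  push Not at hcon
  have hsub : ({k, e, f, g} : Finset (Finset V)) ⊆ E.filter (fun e => v ∈ e) := by
    intro x hx
    simp only [Finset.mem_insert, Finset.mem_singleton] at hx
    rw [Finset.mem_filter]
    rcases hx with rfl | rfl | rfl | rfl <;> exact ⟨by assumption, by assumption⟩
  have hc : ({k, e, f, g} : Finset (Finset V)).card = 4 := by
    rw [Finset.card_insert_of_notMem (by simp; tauto),
      Finset.card_insert_of_notMem (by simp; tauto), Finset.card_pair hfg]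
  have := Finset.card_le_card hsub
  unfold deg at h
  omega

theorem codeg_two {v u : V} (h : 2 ≤ codeg E v u) : ∃ e ∈ E, ∃ f ∈ E, e ≠ f ∧ v ∈ e ∧ u ∈ e ∧
    v ∈ f ∧ u ∈ f := by
  obtain ⟨e, f, he, hf, hne⟩ := Finset.one_lt_card_iff.1 (show 1 < (E.filter _).card from h)
  rw [Finset.mem_filter] at he hf
  exact ⟨e, he.1, f, hf.1, hne, he.2.1, he.2.2, hf.2.1, hf.2.2⟩

/-- first half of the analysis of double neighbours -/
theorem XT.dbl_aux (h : XT E) {v v' s t x w : V} {e0 e0' : Finset V} (hv : deg E v = 3)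
    (hv' : deg E v' = 3) (hT : Tight E v v' s t) (he0 : e0 ∈ E) (he0' : e0' ∈ E) (hne : e0 ≠ e0')
    (h1 : v ∈ e0) (h2 : v' ∈ e0) (h3 : v ∈ e0') (h4 : v' ∈ e0') (hx : x ∈ e0) (hxv : x ≠ v)
    (hxv' : x ≠ v') (hw : deg E w = 3) (hvw : 0 < codeg E v w) (hv'w : codeg E v' w = 0)
    (hwv : w ≠ v) (hT' : ∃ b c, Tight E v' v b c) :
    ∃ z, (z = s ∨ z = t) ∧ deg (res E z) w = 1 ∧ ∃ e ∈ E, w ∈ e ∧ z ∈ e ∧ x ∈ e := by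
  obtain ⟨b', c', hT'⟩ := hT'
  obtain ⟨z, p, q, hZ⟩ := h.tight hw
  have hst := hZ.step hw
  have hvv' : v' ≠ v := (mem_M.1 hT.zM).1
  have hwv' : w ≠ v' := by rintro rfl; rw [codeg_self] at hv'w; omega
  have hcwv : codeg E w v = 1 := by
    rw [codeg_comm]; exact (h.nbr hT hv hwv hvw hwv').2
  have hcwv' : codeg E w v' = 0 := by rw [codeg_comm]; exact hv'w
  have hvz : v ≠ z := by
    rintro rfl
    have := hZ.new.1
    have := deg_res E w v
    omega
  have hvf : v ∉ ({z, p, q} : Finset V) := by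
    simp only [Finset.mem_insert, Finset.mem_singleton]
    rintro (rfl | rfl | rfl)
    · exact hvz rfl
    · have := hZ.cs; omega
    · have := hZ.ct; omega
  have mem1 : ∀ e ∈ E, v ∈ e → v' ∈ e → e ∈ res (res E w) z := by
    intro e he hve hve'
    refine hst.mem.2 ⟨he, ?_, ?_⟩
    · intro hwe
      have := codeg_pos_of he hwe hve'
      omega
    · rintro rfl
      exact hvf hve
  have hdv : deg (res (res E w) z) v = 2 := by
    rw [hst.deg_far hvf]
    have := deg_res E w v
    omega
  have hv'f : v' ∈ ({z, p, q} : Finset V) := by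
    by_contra hcon
    have hd : deg (res (res E w) z) v' = 3 := by
      rw [hst.deg_far hcon]
      have := deg_res E w v'
      omega
    have hc2 := two_le_codeg (mem1 e0 he0 h1 h2) (mem1 e0' he0' h3 h4) hne h2 h4 h1 h3
    have h5 := deg_res (res (res E w) z) v' v
    exact (h.first hw hZ hd).2 v (mem_M.2 ⟨hvv'.symm, by omega, by omega⟩) (by omega)
  have hv'z : v' ≠ z := by
    rintro rfl
    have := hZ.new.2
    omega
  have hfeq : ({z, p, q} : Finset V) = {v', s, t} := (hT.step hv).uniq hZ.edge hvf hv'f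
  have hzst : z = s ∨ z = t := by
    have : z ∈ ({v', s, t} : Finset V) := by rw [← hfeq]; simp
    simp only [Finset.mem_insert, Finset.mem_singleton] at this
    tauto
  have hz3 : deg E z = 3 := by
    have := hT.s3
    have := hT.t3
    rcases hzst with rfl | rfl <;> assumption
  have hcvz : codeg E v z = 0 := by
    have := hT.cs
    have := hT.ct
    rcases hzst with rfl | rfl <;> assumption
  have hzw : deg (res E z) w = 1 := by
    have h6 := deg_res E z w
    have h7 := deg_res E w z
    have h8 := hZ.new.1
    rw [codeg_comm] at h6
    omega
  have hcvx := codeg_pos_of he0 h1 hx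
  have hxx := h.nbr hT hv hxv hcvx hxv'
  have hcv'x := codeg_pos_of he0 h2 hx
  have hxx' := h.nbr hT' hv' hxv' hcv'x hxv
  refine ⟨z, hzst, hzw, ?_⟩
  by_cases hcwx : codeg E w x = 0
  · exfalso
    have hxf : x ∉ ({z, p, q} : Finset V) := by
      rw [hfeq]
      simp only [Finset.mem_insert, Finset.mem_singleton]
      rintro (rfl | rfl | rfl)
      · exact hxv' rfl
      · have := hT.cs; omega
      · have := hT.ct; omega
    have hd : deg (res (res E w) z) x = 3 := by
      rw [hst.deg_far hxf]
      have := deg_res E w x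
      omega
    obtain ⟨zx, sx, tx, hX⟩ := h.tight hxx.1
    have hm := M_mono hst.sub (show _ = deg E x by omega) hX.zM
    have hzv : zx ≠ v := by
      rintro rfl
      have := hX.new.1
      have := deg_res E x zx
      have := codeg_comm E x zx
      omega
    have hzv' : zx ≠ v' := by
      rintro rfl
      have := hX.new.1
      have := deg_res E x zx
      have := codeg_comm E x zx
      omega
    have he1 := mem1 e0 he0 h1 h2
    have m1 : v ∈ M (res (res E w) z) x := by
      have h5 := deg_res (res (res E w) z) x v
      have h6 := codeg_pos_of he1 hx h1
      exact mem_M.2 ⟨hxv.symm, h6, by omega⟩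
    have m2 : v' ∈ M (res (res E w) z) x := by
      have h5 := deg_res (res (res E w) z) x v'
      have h6 := codeg_pos_of he1 hx h2
      have h7 := hst.deg_ab (w := v') (by
        simp only [Finset.mem_insert, Finset.mem_singleton] at hv'f
        tauto)
      exact mem_M.2 ⟨hxv'.symm, h6, by omega⟩
    have := (h.first hw hZ hd).1
    have h3 : 2 < (M (res (res E w) z) x).card :=
      Finset.two_lt_card_iff.2 ⟨v, v', zx, m1, m2, hm, hvv'.symm, hzv.symm, hzv'.symm⟩
    omega
  · obtain ⟨e, he, hwe, hxe⟩ := codeg_pos.1 (Nat.pos_of_ne_zero hcwx)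
    refine ⟨e, he, hwe, ?_, hxe⟩
    by_contra hze
    obtain ⟨g, hg, hvg, hwg⟩ := codeg_pos.1 hvw
    have hzg : z ∉ g := by
      intro hzg
      have := codeg_pos_of hg hvg hzg
      omega
    obtain ⟨k, _, _, hk⟩ := deg_one hzw
    have e1 := hk e (mem_res.2 ⟨he, hze⟩) hwe
    have e2 := hk g (mem_res.2 ⟨hg, hzg⟩) hwg
    have : e = g := e1.trans e2.symm
    subst this
    have hv'e : v' ∉ e := by
      intro hc
      have := codeg_pos_of he hc hwe
      omega
    have := two_le_codeg he0 he (by rintro rfl; exact hv'e h2) h1 hvg hx hxe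
    omega

theorem XT.nodbl (h : XT E) {v v' : V} (hne : v ≠ v') (hv : deg E v = 3) (hv' : deg E v' = 3) :
    codeg E v v' ≤ 1 := by
  by_contra hcon
  obtain ⟨z, s, t, hT⟩ := h.tight hv
  obtain ⟨z', b, c, hT'⟩ := h.tight hv'
  have h1 : v' = z := by
    have := deg_res E v v'
    exact hT.only (mem_M.2 ⟨hne.symm, by omega, by omega⟩)
  have h2 : v = z' := by
    have := deg_res E v' v
    have := codeg_comm E v v'
    exact hT'.only (mem_M.2 ⟨hne, by omega, by omega⟩)
  subst h1
  subst h2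
  obtain ⟨e, he, f, hf, hef, g1, g2, g3, g4⟩ := codeg_two (show 2 ≤ codeg E v v' by omega)
  obtain ⟨x, hvx, hv'x, rfl⟩ := edge_form2 h.hU he g1 g2 hne
  have hb : 0 < codeg E v b := codeg_pos_of hT'.edge (by simp) (by simp)
  have hc : 0 < codeg E v c := codeg_pos_of hT'.edge (by simp) (by simp)
  obtain ⟨zb, hzb, hzb1, e1, he1, he1b, he1z, he1x⟩ := h.dbl_aux (x := x) hv hv' hT he hf hef g1 g2 g3 g4
    (by simp) hvx.symm hv'x.symm hT'.s3 hb hT'.cs hT'.zs.symm ⟨b, c, hT'⟩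
  obtain ⟨zc, hzc, hzc1, e2, he2, he2b, he2z, he2x⟩ := h.dbl_aux (x := x) hv hv' hT he hf hef g1 g2 g3 g4
    (by simp) hvx.symm hv'x.symm hT'.t3 hc hT'.ct hT'.zt.symm ⟨b, c, hT'⟩
  have cvx := codeg_pos_of he g1 (by simp : x ∈ _)
  have cv'x := codeg_pos_of he g2 (by simp : x ∈ _)
  have hx := h.nbr hT hv hvx.symm cvx hv'x.symm
  have hx' := h.nbr hT' hv' hv'x.symm cv'x hvx.symm
  have zst : ∀ z, (z = s ∨ z = t) → codeg E v z = 0 ∧ deg E z = 3 ∧ z ≠ x := by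
    intro z hz
    have := hT.cs
    have := hT.ct
    have := hT.s3
    have := hT.t3
    refine ⟨by rcases hz with rfl | rfl <;> assumption, by rcases hz with rfl | rfl <;> assumption, ?_⟩
    rintro rfl
    rcases hz with rfl | rfl <;> omega
  obtain ⟨cb, db, zbx⟩ := zst zb hzb
  obtain ⟨cc, dc, zcx⟩ := zst zc hzc
  have hbx : b ≠ x := by rintro rfl; have := hT'.cs; omega
  have hcx : c ≠ x := by rintro rfl; have := hT'.ct; omega
  have hbz : b ≠ zb := by rintro rfl; omega
  have hcz : c ≠ zc := by rintro rfl; omega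
  have eq1 : e1 = {b, zb, x} := by
    obtain ⟨r, r1, r2, rfl⟩ := edge_form2 h.hU he1 he1b he1z hbz
    simp only [Finset.mem_insert, Finset.mem_singleton] at he1x
    rcases he1x with h5 | h5 | h5
    · exact absurd h5.symm hbx
    · exact absurd h5.symm zbx
    · rw [h5]
  have eq2 : e2 = {c, zc, x} := by
    obtain ⟨r, r1, r2, rfl⟩ := edge_form2 h.hU he2 he2b he2z hcz
    simp only [Finset.mem_insert, Finset.mem_singleton] at he2x
    rcases he2x with h5 | h5 | h5
    · exact absurd h5.symm hcx
    · exact absurd h5.symm zcx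
    · rw [h5]
  have hczb : c ≠ zb := by rintro rfl; omega
  have hbzc : b ≠ zc := by rintro rfl; omega
  have hbc : b ≠ c := hT'.st
  have hzbc : zb ≠ zc := by
    rintro rfl
    obtain ⟨z1, s1, t1, hZ⟩ := h.tight db
    have q1 := hZ.only (mem_M.2 ⟨hbz, codeg_pos_of he1 he1z he1b, hzb1.le⟩)
    have q2 := hZ.only (mem_M.2 ⟨hcz, codeg_pos_of he2 he2z he2b, hzc1.le⟩)
    exact hbc (q1.trans q2.symm)
  have hv1 : v ∉ e1 := by
    rw [eq1]
    simp only [Finset.mem_insert, Finset.mem_singleton]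
    rintro (h5 | h5 | h5)
    · exact hT'.zs h5
    · rw [← h5, codeg_self] at cb; omega
    · exact hvx h5
  have hv2 : v ∉ e2 := by
    rw [eq2]
    simp only [Finset.mem_insert, Finset.mem_singleton]
    rintro (h5 | h5 | h5)
    · exact hT'.zt h5
    · rw [← h5, codeg_self] at cc; omega
    · exact hvx h5
  have n1 : ({v, v', x} : Finset V) ≠ e1 := by intro h5; rw [← h5] at hv1; simp at hv1
  have n2 : ({v, v', x} : Finset V) ≠ e2 := by intro h5; rw [← h5] at hv2; simp at hv2
  have n3 : e1 ≠ e2 := by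
    intro h5
    rw [← h5, eq1] at he2b
    simp only [Finset.mem_insert, Finset.mem_singleton] at he2b
    rcases he2b with h6 | h6 | h6
    · exact hbc h6.symm
    · exact hczb h6
    · exact hcx h6
  obtain ⟨zx, sx, tx, hX⟩ := h.tight hx.1
  have hzxx : zx ≠ x := (mem_M.1 hX.zM).1
  have hX1 := hX.new.1
  have hX2 := deg_res E x zx
  have hzv : zx ≠ v := by
    rintro rfl
    have := codeg_comm E x zx
    omega
  have hzv' : zx ≠ v' := by
    rintro rfl
    have := codeg_comm E x zx
    omega
  have only := fun k hk hxk => deg_three_only (k := k) (h.hD x) he he1 he2 hk n1 n2 n3 (by simp) he1x he2x hxk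
  have no0 : zx ∉ ({v, v', x} : Finset V) := by simp [hzv, hzv', hzxx]
  have hz3 : deg E zx = 3 := by
    obtain ⟨k, hk, hxk, hzk⟩ := codeg_pos.1 hX.new.2
    rcases only k hk hxk with rfl | rfl | rfl
    · exact absurd hzk no0
    · rw [eq1] at hzk
      simp only [Finset.mem_insert, Finset.mem_singleton] at hzk
      rcases hzk with rfl | rfl | rfl
      · exact hT'.s3
      · exact db
      · exact hx.1
    · rw [eq2] at hzk
      simp only [Finset.mem_insert, Finset.mem_singleton] at hzk
      rcases hzk with rfl | rfl | rfl
      · exact hT'.t3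
      · exact dc
      · exact hx.1
  obtain ⟨k, hk, l, hl, hkl, q1, q2, q3, q4⟩ := codeg_two (show 2 ≤ codeg E x zx by omega)
  have hin : zx ∈ e1 ∧ zx ∈ e2 := by
    rcases only k hk q1 with rfl | rfl | rfl
    · exact absurd q2 no0
    · rcases only l hl q3 with rfl | rfl | rfl
      · exact absurd q4 no0
      · exact absurd rfl hkl
      · exact ⟨q2, q4⟩
    · rcases only l hl q3 with rfl | rfl | rfl
      · exact absurd q4 no0
      · exact ⟨q4, q2⟩
      · exact absurd rfl hkl
  rw [eq1, eq2] at hin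
  simp only [Finset.mem_insert, Finset.mem_singleton] at hin
  obtain ⟨i1, i2⟩ := hin
  rcases i1 with rfl | rfl | rfl
  · rcases i2 with h6 | h6 | h6
    · exact hbc h6
    · exact hbzc h6
    · exact hzxx h6
  · rcases i2 with h6 | h6 | h6
    · exact hczb h6.symm
    · exact hzbc h6
    · exact hzxx h6
  · exact hzxx rfl

/-- the weak neighbour has degree two -/
theorem XT.z2 (h : XT E) {v z s t : V} (hT : Tight E v z s t) (hv : deg E v = 3) : deg E z = 2 := by
  have h1 := deg_res E v z
  have h2 := hT.new.1
  have h3 := hT.new.2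
  have h4 := h.hD z
  by_contra hcon
  have := h.nodbl (mem_M.1 hT.zM).1.symm hv (by omega)
  omega

/-- all codegrees at a vertex of degree three are at most one -/
theorem XT.codeg_le_one (h : XT E) {v u : V} (hv : deg E v = 3) (huv : u ≠ v) :
    codeg E v u ≤ 1 := by
  by_contra hcon
  obtain ⟨z, s, t, hT⟩ := h.tight hv
  have h1 := deg_res E v u
  have h2 := h.hD u
  have h4 := hT.only (mem_M.2 ⟨huv, by omega, by omega⟩)
  subst h4
  have := h.z2 hT hv
  have := hT.new.1
  omega

end D4
end TG

namespace TG
open Finset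

/-! ### Counting damaged vertices of degree three -/

section D5

variable {E F : Finset (Finset V)}

/-- vertices which lost degree three -/
def lost (E F : Finset (Finset V)) : Finset V := univ.filter (fun w => deg E w = 3 ∧ deg F w ≠ 3)

theorem mem_lost {w : V} : w ∈ lost E F ↔ deg E w = 3 ∧ deg F w ≠ 3 := by simp [lost]

/-- number of vertices of degree three in an edge -/
def n3 (E : Finset (Finset V)) (e : Finset V) : ℕ := (e.filter (fun w => deg E w = 3)).card

/-- the neighbourhood -/
def nb (F : Finset (Finset V)) (x : V) : Finset V := univ.filter (fun w => w ≠ x ∧ 0 < codeg F x w)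

theorem mem_nb {x w : V} : w ∈ nb F x ↔ w ≠ x ∧ 0 < codeg F x w := by simp [nb]

theorem card_nb (hU : Unif F) {x : V} (hx : deg F x = 3) (hc : ∀ u, u ≠ x → codeg F x u ≤ 1) :
    (nb F x).card = 6 := by
  have h := sum_codeg hU x
  have h2 : ∑ u ∈ univ.erase x, codeg F x u = ∑ u ∈ univ.erase x, if 0 < codeg F x u then 1 else 0 := by
    apply Finset.sum_congr rfl
    intro u hu
    have := hc u (Finset.ne_of_mem_erase hu)
    split_ifs <;> omega
  rw [h2, Finset.sum_boole] at h
  have h3 : nb F x = (univ.erase x).filter (fun u => 0 < codeg F x u) := by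
    ext u
    simp [nb]
  rw [h3]
  rw [hx] at h
  exact_mod_cast h

theorem XT.lost_step (h : XT E) (hF : F ⊆ E) {x y a b : V} (hs : Step F x y a b) :
    (lost E (res (res F x) y)).card + (M F x).card = (lost E F).card + 9 := by
  have hxE : deg E x = 3 := le_antisymm (h.hD x) (hs.x3 ▸ deg_mono hF x)
  have hc : ∀ u, u ≠ x → codeg F x u ≤ 1 := fun u hu =>
    (codeg_mono hF x u).trans (h.codeg_le_one hxE hu)
  have hD : ∀ u, deg F u ≤ 3 := fun u => (deg_mono hF u).trans (h.hD u)
  have h6 := card_nb (h.hU.mono hF) hs.x3 hc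
  have hMN : M F x ⊆ nb F x := by
    intro u hu
    obtain ⟨h1, h2, h3⟩ := mem_M.1 hu
    exact mem_nb.2 ⟨h1, h2⟩
  have hya := hs.ya
  have hyb := hs.yb
  have ha3 := hs.a3
  have hb3 := hs.b3
  have hra := deg_res F x a
  have hrb := deg_res F x b
  have hDa := hD a
  have hDb := hD b
  have hax : a ≠ x := by rintro rfl; rw [deg_res_self] at ha3; omega
  have hbx : b ≠ x := by rintro rfl; rw [deg_res_self] at hb3; omega
  have hay : deg F y = 2 := by
    have h1 := deg_res F x y
    have h2 := hs.new.1
    have h3 := hs.new.2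
    have h4 := hc y (mem_M.1 hs.new.mem).1
    omega
  have up : ∀ w, deg F w = 3 → deg E w = 3 := fun w hw =>
    le_antisymm (h.hD w) (hw ▸ deg_mono hF w)
  have hset : lost E (res (res F x) y) = lost E F ∪ ({x, a, b} ∪ (nb F x \ M F x)) := by
    ext w
    simp only [Finset.mem_union, mem_lost, Finset.mem_insert, Finset.mem_singleton, Finset.mem_sdiff]
    constructor
    · rintro ⟨h1, h2⟩
      by_cases h3 : deg F w = 3
      swap
      · exact Or.inl ⟨h1, h3⟩
      by_cases hw : w = x ∨ w = a ∨ w = b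
      · exact Or.inr (Or.inl hw)
      have hwy : w ≠ y := by rintro rfl; omega
      rw [hs.deg_far (by simp; tauto)] at h2
      have h4 := deg_res F x w
      have h5 := hc w (by tauto)
      refine Or.inr (Or.inr ⟨mem_nb.2 ⟨by tauto, by omega⟩, ?_⟩)
      rw [mem_M]
      rintro ⟨_, _, h6⟩
      omega
    · have hle : ∀ w, deg (res (res F x) y) w ≤ deg (res F x) w := fun w => deg_mono (res_subset _ _) w
      have hle' : ∀ w, deg (res F x) w ≤ deg F w := fun w => deg_mono (res_subset _ _) w
      rintro (⟨h1, h2⟩ | (rfl | rfl | rfl) | ⟨h1, h2⟩)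
      · have := hle w
        have := hle' w
        have := hD w
        exact ⟨h1, by omega⟩
      · have := hle w
        rw [deg_res_self] at this
        exact ⟨hxE, by omega⟩
      · have := hs.deg_ab (w := w) (by tauto)
        exact ⟨up _ (by omega), by omega⟩
      · have := hs.deg_ab (w := w) (by tauto)
        exact ⟨up _ (by omega), by omega⟩
      · obtain ⟨q1, q2⟩ := mem_nb.1 h1
        have h4 := deg_res F x w
        have h5 := hD w
        have h7 := hle w
        have h8 : ¬ deg (res F x) w ≤ 1 := fun h9 => h2 (mem_M.2 ⟨q1, q2, h9⟩)
        exact ⟨up _ (by omega), by omega⟩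
  have hd1 : Disjoint ({x, a, b} : Finset V) (nb F x \ M F x) := by
    rw [Finset.disjoint_left]
    intro w hw hw'
    have q := mem_nb.1 (Finset.mem_sdiff.1 hw').1
    simp only [Finset.mem_insert, Finset.mem_singleton] at hw
    rcases hw with rfl | rfl | rfl
    · exact q.1 rfl
    · have := q.2; omega
    · have := q.2; omega
  have hd2 : Disjoint (lost E F) ({x, a, b} ∪ (nb F x \ M F x)) := by
    rw [Finset.disjoint_left]
    intro w hw hw'
    apply (mem_lost.1 hw).2
    rcases Finset.mem_union.1 hw' with hw' | hw'
    · simp only [Finset.mem_insert, Finset.mem_singleton] at hw'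
      rcases hw' with rfl | rfl | rfl
      · exact hs.x3
      · omega
      · omega
    · obtain ⟨h1, h2⟩ := Finset.mem_sdiff.1 hw'
      obtain ⟨q1, q2⟩ := mem_nb.1 h1
      have h4 := deg_res F x w
      have h5 := hD w
      have h8 : ¬ deg (res F x) w ≤ 1 := fun h9 => h2 (mem_M.2 ⟨q1, q2, h9⟩)
      omega
  rw [hset, Finset.card_union_of_disjoint hd2, Finset.card_union_of_disjoint hd1,
    Finset.card_sdiff_of_subset hMN, h6, Finset.card_insert_of_notMem (by simp [hax.symm, hbx.symm]),
    Finset.card_pair hs.ab]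
  have := Finset.card_le_card hMN
  omega

/-- edges at a vertex of degree three -/
theorem XT.n3_eq (h : XT E) {v z s t : V} (hT : Tight E v z s t) (hv : deg E v = 3) {e : Finset V}
    (he : e ∈ E) (hve : v ∈ e) : (z ∈ e → n3 E e = 2) ∧ (z ∉ e → n3 E e = 3) := by
  have hz := h.z2 hT hv
  have nb3 : ∀ w ∈ e, w ≠ z → deg E w = 3 := by
    intro w hw hwz
    by_cases hwv : w = v
    · rw [hwv]; exact hv
    · exact (h.nbr hT hv hwv (codeg_pos_of he hve hw) hwz).1
  constructor
  · intro hze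
    have : e.filter (fun w => deg E w = 3) = e.erase z := by
      ext w
      rw [Finset.mem_filter, Finset.mem_erase]
      constructor
      · rintro ⟨h1, h2⟩
        exact ⟨by rintro rfl; omega, h1⟩
      · rintro ⟨h1, h2⟩
        exact ⟨h2, nb3 w h2 h1⟩
    rw [n3, this, Finset.card_erase_of_mem hze, h.hU e he]
  · intro hze
    have : e.filter (fun w => deg E w = 3) = e := by
      rw [Finset.filter_eq_self]
      intro w hw
      exact nb3 w hw (by rintro rfl; exact hze hw)
    rw [n3, this, h.hU e he]

theorem XT.count3 (h : XT E) {v : V} (hv : deg E v = 3) :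
    (E.filter (fun e => n3 E e = 3 ∧ v ∈ e)).card = 2 := by
  obtain ⟨z, s, t, hT⟩ := h.tight hv
  have h1 := deg_res E z v
  have h2 := h.codeg_le_one hv (mem_M.1 hT.zM).1
  have h3 := hT.new.2
  rw [codeg_comm] at h1
  have : E.filter (fun e => n3 E e = 3 ∧ v ∈ e) = (res E z).filter (fun e => v ∈ e) := by
    ext e
    rw [Finset.mem_filter, Finset.mem_filter, mem_res]
    constructor
    · rintro ⟨q1, q2, q3⟩
      refine ⟨⟨q1, fun hz => ?_⟩, q3⟩
      have := (h.n3_eq hT hv q1 q3).1 hz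
      omega
    · rintro ⟨⟨q1, q2⟩, q3⟩
      exact ⟨q1, (h.n3_eq hT hv q1 q3).2 q2, q3⟩
  rw [this]
  change deg (res E z) v = 2
  omega

theorem XT.count2 (h : XT E) {v : V} (hv : deg E v = 3) :
    (E.filter (fun e => n3 E e = 2 ∧ v ∈ e)).card = 1 := by
  obtain ⟨z, s, t, hT⟩ := h.tight hv
  have h2 := h.codeg_le_one hv (mem_M.1 hT.zM).1
  have h3 := hT.new.2
  have : E.filter (fun e => n3 E e = 2 ∧ v ∈ e) = E.filter (fun e => v ∈ e ∧ z ∈ e) := by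
    ext e
    rw [Finset.mem_filter, Finset.mem_filter]
    constructor
    · rintro ⟨q1, q2, q3⟩
      refine ⟨q1, q3, ?_⟩
      by_contra hz
      have := (h.n3_eq hT hv q1 q3).2 hz
      omega
    · rintro ⟨q1, q2, q3⟩
      exact ⟨q1, (h.n3_eq hT hv q1 q2).1 q3, q2⟩
  rw [this]
  change codeg E v z = 1
  omega

/-- double counting -/
theorem pick (k c : ℕ) (S : Finset V) (hS : ∀ v ∈ S, deg E v = 3)
    (hc : ∀ v ∈ S, (E.filter (fun e => n3 E e = k ∧ v ∈ e)).card = c) (hk : ¬ k ∣ c * S.card) :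
    ∃ e ∈ E, n3 E e = k ∧ ∃ u ∈ e, u ∈ S ∧ ∃ x ∈ e, deg E x = 3 ∧ x ∉ S := by
  by_contra hcon
  push Not at hcon
  apply hk
  have h1 : ∑ v ∈ S, (E.filter (fun e => n3 E e = k ∧ v ∈ e)).card = c * S.card := by
    rw [Finset.sum_congr rfl hc, Finset.sum_const, smul_eq_mul, mul_comm]
  have h2 : ∑ v ∈ S, (E.filter (fun e => n3 E e = k ∧ v ∈ e)).card =
      ∑ e ∈ E.filter (fun e => n3 E e = k), (S.filter (fun v => v ∈ e)).card := by
    have := Finset.sum_card_bipartiteAbove_eq_sum_card_bipartiteBelow (fun (v : V) (e : Finset V) => v ∈ e)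
      (s := S) (t := E.filter (fun e => n3 E e = k))
    unfold Finset.bipartiteAbove Finset.bipartiteBelow at this
    rw [← this]
    apply Finset.sum_congr rfl
    intro v hv
    rw [Finset.filter_filter]
  rw [← h1, h2]
  apply Finset.dvd_sum
  intro e he
  obtain ⟨he, hek⟩ := Finset.mem_filter.1 he
  by_cases h0 : S.filter (fun v => v ∈ e) = ∅
  · rw [h0]; simp
  · obtain ⟨u, hu⟩ := Finset.nonempty_iff_ne_empty.2 h0
    obtain ⟨hu, hue⟩ := Finset.mem_filter.1 hu
    have : S.filter (fun v => v ∈ e) = e.filter (fun w => deg E w = 3) := by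
      ext w
      rw [Finset.mem_filter, Finset.mem_filter]
      exact ⟨fun ⟨q1, q2⟩ => ⟨q2, hS w q1⟩, fun ⟨q1, q2⟩ => ⟨hcon e he hek u hue hu w q1 q2, q1⟩⟩
    rw [this]
    change k ∣ n3 E e
    rw [hek]

/-- choice of the next vertex -/
theorem XT.choose (h : XT E) (hF : F ⊆ E) {k : ℕ} (hk : (k = 3 ∧ ¬ 3 ∣ 2 * (lost E F).card) ∨
    (k = 2 ∧ ¬ 2 ∣ (lost E F).card)) :
    ∃ e ∈ F, n3 E e = k ∧ ∃ u x z s t, u ∈ e ∧ x ∈ e ∧ deg F x = 3 ∧ deg E x = 3 ∧ Tight E x z s t ∧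
      deg E u = 3 ∧ u ≠ z ∧ u ∈ M F x ∧ z ∈ M F x := by
  obtain ⟨e, he, hek, u, hue, hu, x, hxe, hx, hxS⟩ : ∃ e ∈ E, n3 E e = k ∧ ∃ u ∈ e, u ∈ lost E F ∧
      ∃ x ∈ e, deg E x = 3 ∧ x ∉ lost E F := by
    rcases hk with ⟨rfl, hk⟩ | ⟨rfl, hk⟩
    · exact pick 3 2 (lost E F) (fun v hv => (mem_lost.1 hv).1)
        (fun v hv => h.count3 (mem_lost.1 hv).1) hk
    · exact pick 2 1 (lost E F) (fun v hv => (mem_lost.1 hv).1)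
        (fun v hv => h.count2 (mem_lost.1 hv).1) (by rwa [one_mul])
  obtain ⟨hu3, huF⟩ := mem_lost.1 hu
  have hxF : deg F x = 3 := by
    by_contra hc
    exact hxS (mem_lost.2 ⟨hx, hc⟩)
  obtain ⟨z, s, t, hT⟩ := h.tight hx
  have heF := keep hF (hxF.trans hx.symm) he hxe
  have hux : u ≠ x := by rintro rfl; exact huF hxF
  refine ⟨e, heF, hek, u, x, z, s, t, hue, hxe, hxF, hx, hT, hu3, ?_, ?_, ?_⟩
  · rintro rfl
    have := h.z2 hT hx
    omega
  · have h1 := deg_res F x u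
    have h2 := codeg_pos_of heF hxe hue
    have h3 := deg_mono hF u
    exact mem_M.2 ⟨hux, h2, by omega⟩
  · exact M_mono hF (hxF.trans hx.symm) hT.zM

end D5
end TG

namespace TG
open Finset

/-! ### The three consecutive tight rounds -/

section D6

variable {E F : Finset (Finset V)}

/-- no vertex of degree one in edges at the vertex -/
def NF (E : Finset (Finset V)) (w : V) : Prop := ∀ f ∈ E, w ∈ f → ∀ y ∈ f, deg E y ≠ 1

/-- vertices of degree one are old or listed -/
def NN (E F : Finset (Finset V)) (O : Finset V) : Prop :=
  (∀ w, deg F w = 1 → deg E w = 1 ∨ w ∈ O) ∧ ∀ w ∈ O, NF E w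

theorem fin2 {σ D : ℤ} (hG : Gen E) {v : V} (hv : 0 < deg E v)
    (hD : Phi 1 (res E v) + D ≤ Phi 1 E)
    (hR : ∀ u, 0 < deg (res E v) u →
      ∃ R τ : ℤ, Phi 1 (res (res E v) u) + R ≤ Phi 1 (res E v) ∧ Sur (res (res E v) u) τ ∧
        544 + σ ≤ D + R + τ) (h272 : 256 + σ ≤ D) : Sur E σ := by
  have hPn := Phi_nonneg (γ := 1) (by norm_num) (res E v)
  have := round (E := E) (C := Phi 1 E + 16 - σ) (v := v) hv (by linarith) ?_
  · unfold Sur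
    linarith
  intro u hu
  obtain ⟨R, τ, h1, h2, h3⟩ := hR u hu
  unfold Sur at h2
  linarith

theorem gen_sur (hG : Gen E) {v u : V} (hv : 0 < deg E v) : Sur (res (res E v) u) 0 := by
  have h2 := hG (res (res E v) u) ((res_subset _ _).trans (res_subset _ _))
      (lt_of_le_of_lt (Finset.card_le_card (res_subset _ _)) (card_res_lt hv))
  unfold Sur
  linarith

theorem XT.noPend (h : XT E) (hF : F ⊆ E) {O : Finset V} (hN : NN E F O)
    (hO : ∀ f ∈ F, ∀ p ∈ O, ∀ q ∈ O, p ∈ f → q ∈ f → deg F p = 1 → deg F q = 1 → p = q) : ¬ Pend F := by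
  rintro ⟨e, he, w, hwe, hw2, h1⟩
  obtain ⟨p, q, b1, b2, b3, rfl⟩ := edge_form (h.hU.mono hF) he hwe
  have hp1 := h1 p (by simp) b1.symm
  have hq1 := h1 q (by simp) b2.symm
  rcases hN.1 p hp1 with hp | hp
  · rcases hN.1 q hq1 with hq | hq
    · apply h.hPe
      refine ⟨_, hF he, w, hwe, hw2.trans (deg_mono hF w), ?_⟩
      intro x hx hxw
      simp only [Finset.mem_insert, Finset.mem_singleton] at hx
      rcases hx with rfl | rfl | rfl
      · exact absurd rfl hxw
      · exact hp
      · exact hq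
    · exact hN.2 q hq _ (hF he) (by simp) p (by simp) hp
  · rcases hN.1 q hq1 with hq | hq
    · exact hN.2 p hp _ (hF he) (by simp) q (by simp) hq
    · exact b3 (hO _ he p hp q hq (by simp) (by simp) hp1 hq1)

theorem XT.NFM (h : XT E) (hF : F ⊆ E) {x m : V} (hx : deg E x = 3) (hm : m ∈ M F x) : NF E m := by
  intro f hf hmf y hy
  exact h.near hx ((mem_M.1 hm).2.1.trans_le (codeg_mono hF x m)) hf hmf hy

/-- ones near weak neighbours are listed -/
theorem XT.onesM (h : XT E) (hF : F ⊆ E) {O : Finset V} (hN : NN E F O) {x m : V}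
    (hx : deg E x = 3) (hm : m ∈ M F x) {f : Finset V} (hf : f ∈ F) (hmf : m ∈ f) {y : V}
    (hy : y ∈ f) (hy1 : deg F y = 1) : y ∈ O := by
  rcases hN.1 y hy1 with h1 | h1
  · exact absurd h1 (h.NFM hF hx hm f (hF hf) hmf y hy)
  · exact h1

theorem XT.newM (h : XT E) (hF : F ⊆ E) (hP : ¬ P13 F) {x m : V} (hx : deg E x = 3)
    (hxF : deg F x = 3) (hm : m ∈ M F x) : NewOne F x m ∧ deg F m = 2 := by
  have h1 := M_two hP hxF hm
  obtain ⟨h2, h3, h4⟩ := mem_M.1 hm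
  have h5 := codeg_mono hF x m
  have h6 := h.codeg_le_one hx h2
  have h7 := deg_res F x m
  exact ⟨⟨by omega, h3⟩, by omega⟩

theorem XT.NN_step (h : XT E) (hF : F ⊆ E) {O : Finset V} (hN : NN E F O) {x y a b : V}
    (hs : Step F x y a b) (hx : deg E x = 3) {O' : Finset V} (hOO : O ⊆ O')
    (hM : ∀ w ∈ M F x, w ≠ y → w ∈ O') (hO' : ∀ w ∈ O', w ∈ O ∨ w ∈ M F x) :
    NN E (res (res F x) y) O' := by
  constructor
  · intro w hw
    rcases hs.one hw with h1 | ⟨h1, h2⟩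
    · rcases hN.1 w h1 with h3 | h3
      · exact Or.inl h3
      · exact Or.inr (hOO h3)
    · exact Or.inr (hM w h1 h2)
  · intro w hw
    rcases hO' w hw with h1 | h1
    · exact hN.2 w h1
    · exact h.NFM hF hx h1

theorem XT.hDF (h : XT E) (hF : F ⊆ E) : ∀ u, deg F u ≤ 3 := fun u => (deg_mono hF u).trans (h.hD u)

theorem two_le_card {A : Finset V} {a b : V} (ha : a ∈ A) (hb : b ∈ A) (hab : a ≠ b) : 2 ≤ A.card :=
  Finset.one_lt_card_iff.2 ⟨a, b, ha, hb, hab⟩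

theorem eq_pair {A : Finset V} {a b : V} (ha : a ∈ A) (hb : b ∈ A) (hab : a ≠ b) (h : A.card ≤ 2) :
    A = {a, b} := by
  symm
  apply Finset.eq_of_subset_of_card_le
  · intro x hx
    simp only [Finset.mem_insert, Finset.mem_singleton] at hx
    rcases hx with rfl | rfl <;> assumption
  · rw [Finset.card_pair hab]; exact h

theorem XT.stage3a (h : XT E) (hF : F ⊆ E) (hc : ¬ 3 ∣ 2 * (lost E F).card) (hPe : ¬ Pend F) :
    Sur F 4 := by
  have hU := h.hU.mono hF
  have hD := h.hDF hF
  have hG := h.hG.mono hF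
  by_cases hP : P13 F
  · exact (sur_P13 hU hD hG hP).mono (by norm_num)
  obtain ⟨e, he, hek, u, x, z, s, t, hue, hxe, hxF, hx, hT, hu3, huz, huM, hzM⟩ :=
    h.choose hF (Or.inl ⟨rfl, hc⟩)
  exact sur_R2 hU hD hG hP hPe hxF (two_le_card huM hzM huz)

theorem XT.stage3b (h : XT E) (hF : F ⊆ E) (hc : ¬ 3 ∣ 2 * (lost E F).card) {o g w : V}
    (hN : NN E F {o, g}) (hPF : {w, o, g} ∈ F) (hwo : w ≠ o) (hwg : w ≠ g) (hog : o ≠ g)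
    (ho : deg F o = 1) (hg : deg F g = 1) : Sur F 6 := by
  have hU := h.hU.mono hF
  have hD := h.hDF hF
  have hG := h.hG.mono hF
  by_cases hP : P13 F
  · exact (sur_P13 hU hD hG hP).mono (by norm_num)
  obtain ⟨e, he, hek, u, x, z, s, t, hue, hxe, hxF, hx, hT, hu3, huz, huM, hzM⟩ :=
    h.choose hF (Or.inl ⟨rfl, hc⟩)
  have h2 := two_le_card huM hzM huz
  -- ones occur only in the pendant edge
  have only : ∀ m ∈ M F x, ∀ f ∈ F, m ∈ f → ∀ y ∈ f, deg F y = 1 → f = {w, o, g} := by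
    intro m hm f hf hmf y hy hy1
    have := h.onesM hF hN hx hm hf hmf hy hy1
    simp only [Finset.mem_insert, Finset.mem_singleton] at this
    obtain ⟨k, hk, hyk, hall⟩ := deg_one hy1
    rw [hall f hf hy]
    symm
    apply hall _ hPF
    rcases this with rfl | rfl <;> simp
  have onlyw : ∀ m ∈ M F x, m ∈ ({w, o, g} : Finset V) → m = w := by
    intro m hm hmm
    have := M_two hP hxF hm
    simp only [Finset.mem_insert, Finset.mem_singleton] at hmm
    rcases hmm with rfl | rfl | rfl
    · rfl
    · omega
    · omega
  by_cases hwM : w ∈ M F x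
  swap
  · refine sur_R2' hU hD hG hP ?_ hxF h2
    intro m hm f hf hxf hmf y hy hy1
    have := only m hm f hf hmf y hy hy1
    subst this
    exact hwM (onlyw m hm hmf ▸ hm)
  have hxP : x ∉ ({w, o, g} : Finset V) := by
    intro hxP
    exact hP ⟨_, hPF, o, by simp, x, hxP, ho, hxF.ge⟩
  obtain ⟨hwN, hw2⟩ := h.newM hF hP hx hxF hwM
  have noM : ∀ m ∈ M F x, m ≠ w → ∀ f ∈ F, m ∈ f → ∀ y ∈ f, deg F y ≠ 1 := by
    intro m hm hmw f hf hmf y hy hy1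
    have := only m hm f hf hmf y hy hy1
    subst this
    exact hmw (onlyw m hm hmf)
  by_cases h3 : 3 ≤ (M F x).card
  · have hcard : (((M F x).erase w)).card = (M F x).card - 1 := Finset.card_erase_of_mem hwM
    have hnot : x ∉ M F x := by simp [mem_M]
    have hd := drop3 hU hD hxF (M F x) hnot
    rw [← Finset.add_sum_erase _ _ hwM] at hd
    have h6 := ex_six (γ := 1) le_rfl hwN.2 hwN.1.le
    have h42 : 42 ≤ ∑ m ∈ (M F x).erase w, ex 1 F x m := by
      by_cases h4 : 4 ≤ (M F x).card
      · have := Finset.card_nsmul_le_sum ((M F x).erase w) (fun m => ex 1 F x m) 14 ?_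
        · rw [hcard, nsmul_eq_mul] at this
          have h5 : (3 : ℤ) ≤ (((M F x).card - 1 : ℕ) : ℤ) := by omega
          nlinarith
        intro m hm
        obtain ⟨hmw, hm⟩ := Finset.mem_erase.1 hm
        apply ex_fourteen le_rfl hU (mem_M.1 hm).2.1 (mem_M.1 hm).2.2
        intro f hf hxf hmf
        obtain ⟨p, q, h1, h2, h3, rfl⟩ := edge_form hU hf hmf
        exact ⟨p, by simp, h1.symm, noM m hm hmw _ hf hmf p (by simp)⟩
      · have hc2 : ((M F x).erase w).card = 2 := by omega
        have := Finset.card_nsmul_le_sum ((M F x).erase w) (fun m => ex 1 F x m) 21 ?_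
        · rw [hc2] at this
          simpa using this
        intro m hm
        obtain ⟨hmw, hmM⟩ := Finset.mem_erase.1 hm
        apply ex_twentyone le_rfl hU (mem_M.1 hmM).2.1 (mem_M.1 hmM).2.2
        intro f hf hxf hmf
        refine ⟨?_, noM m hmM hmw f hf hmf⟩
        by_contra hcon
        push Not at hcon
        have hsub : f ⊆ (M F x).erase w := by
          intro y hy
          refine Finset.mem_erase.2 ⟨?_, ?_⟩
          · rintro rfl
            have := hwN.uniq hf hxf hy hPF hxP (by simp)
            subst this
            exact hmw (onlyw m hmM hmf)
          · rcases old_or_nbr (hcon y hy) with h | h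
            · exact absurd h (noM m hmM hmw f hf hmf y hy)
            · exact NewOne.mem ⟨hcon y hy, h⟩
        have := Finset.card_le_card hsub
        rw [hU f hf, hc2] at this
        omega
    exact fin1 hG (D := 406) (by omega) (by linarith) (rep148 hU hD x) (by norm_num) (by norm_num)
  have hMeq := eq_pair huM hzM huz (by omega)
  obtain ⟨k, hk, hxk, hwk⟩ := codeg_pos.1 hwN.2
  have hwx : w ≠ x := (mem_M.1 hwM).1
  obtain ⟨r, hwr, hxr, rfl⟩ := edge_form2 hU hk hwk hxk hwx
  have hr : deg F r = 3 := by
    by_contra hr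
    have hcr := codeg_pos_of hk hxk (by simp : r ∈ _)
    have hrM : r ∈ M F x := by
      have h1 := deg_res F x r
      have h2 := hD r
      exact mem_M.2 ⟨hxr.symm, hcr, by omega⟩
    have hze : z ∉ e := by
      intro hze
      have := (h.n3_eq hT hx (hF he) hxe).1 hze
      omega
    have hboth : u ∈ ({w, x, r} : Finset V) ∧ z ∈ ({w, x, r} : Finset V) := by
      rw [hMeq] at hwM hrM
      simp only [Finset.mem_insert, Finset.mem_singleton] at hwM hrM
      rcases hwM with rfl | rfl <;> rcases hrM with rfl | rfl
      · exact absurd rfl hwr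
      · simp
      · simp
      · exact absurd rfl hwr
    have := two_le_codeg (hF he) (hF hk) (by rintro rfl; exact hze hboth.2) hxe hxk hue hboth.1
    have := h.codeg_le_one hx (mem_M.1 huM).1
    omega
  have hox : o ≠ x := by rintro rfl; omega
  have hgx : g ≠ x := by rintro rfl; omega
  have hor : o ≠ r := by rintro rfl; omega
  have hgr : g ≠ r := by rintro rfl; omega
  have hne : ({w, o, g} : Finset V) ≠ {w, x, r} := by
    intro hh; rw [hh] at hxP; exact hxP hxk
  have hS : Star2 F w o g x r :=
    ⟨⟨hwo, hwg, hwx, hwr, hog, hox, hor, hgx, hgr, hxr⟩, hPF, hk, fun f hf hwf =>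
      deg_two_only hw2.le hPF hk hf hne (by simp) hwk hwf⟩
  have hd := pend_drop hU hD hS hw2 ho hg
  have e1 := ex_nonneg (γ := 1) le_rfl F w x
  have e2 := ex_nonneg (γ := 1) le_rfl F w r
  have cx : codeg F w x = 1 := by
    rw [codeg_comm]
    have := hwN.2
    have := codeg_mono hF x w
    have := h.codeg_le_one hx hwx
    omega
  have hrE : deg E r = 3 := le_antisymm (h.hD r) (hr ▸ deg_mono hF r)
  have cr : codeg F w r = 1 := by
    have h1 := codeg_pos_of hk hwk (by simp : r ∈ _)
    rw [codeg_comm] at h1 ⊢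
    have := codeg_mono hF r w
    have := h.codeg_le_one hrE hwr
    omega
  -- ones afterwards are old
  have old : ∀ y, deg (res F w) y = 1 → deg F y = 1 ∧ deg E y = 1 := by
    intro y hy
    have h1 := deg_res F w y
    have hyo : y ≠ o := by
      rintro rfl
      have := codeg_pos_of hPF (by simp : w ∈ _) (by simp : y ∈ _)
      omega
    have hyg : y ≠ g := by
      rintro rfl
      have := codeg_pos_of hPF (by simp : w ∈ _) (by simp : y ∈ _)
      omega
    have hF1 : deg F y = 1 := by
      rcases old_or_nbr hy with h2 | h2
      · exact h2
      obtain ⟨f, hf, hwf, hyf⟩ := codeg_pos.1 h2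
      rcases hS.2.2.2 f hf hwf with rfl | rfl
      · simp only [Finset.mem_insert, Finset.mem_singleton] at hyf
        rcases hyf with rfl | rfl | rfl
        · rw [deg_res_self] at hy; omega
        · exact absurd rfl hyo
        · exact absurd rfl hyg
      · simp only [Finset.mem_insert, Finset.mem_singleton] at hyf
        rcases hyf with rfl | rfl | rfl
        · rw [deg_res_self] at hy; omega
        · omega
        · omega
    refine ⟨hF1, ?_⟩
    rcases hN.1 y hF1 with h2 | h2
    · exact h2
    · simp only [Finset.mem_insert, Finset.mem_singleton] at h2
      tauto
  have hP' : ¬ P13 (res F w) := by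
    rintro ⟨f, hf, a, ha, b, hb, ha1, hb3⟩
    exact hP ⟨f, res_subset _ _ hf, a, ha, b, hb, (old a ha1).1, hb3.trans (deg_mono (res_subset _ _) b)⟩
  have hPe' : ¬ Pend (res F w) := by
    rintro ⟨f, hf, a, ha, ha2, hf1⟩
    exact h.hPe ⟨f, hF (res_subset _ _ hf), a, ha,
      ha2.trans ((deg_mono (res_subset _ _) a).trans (deg_mono hF a)),
      fun y hy hya => (old y (hf1 y hy hya)).2⟩
  exact fin1 hG (D := 374) (by omega) (by linarith) (fun y hy =>
    reply_noPend' (by norm_num) (by norm_num) (hU.res w) (res_deg_le hD w) hP' hPe' hy)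
    (by norm_num) (by norm_num)

end D6
end TG

namespace TG
open Finset

section D7

variable {E F : Finset (Finset V)}

set_option maxHeartbeats 2000000 in
theorem XT.stage2 (h : XT E) (hF : F ⊆ E) (hl : (lost E F).card = 15) {o : V}
    (hN : NN E F {o}) (ho : deg F o = 1) : Sur F 10 := by
  have hU := h.hU.mono hF
  have hD := h.hDF hF
  have hG := h.hG.mono hF
  by_cases hP : P13 F
  · exact (sur_P13 hU hD hG hP).mono (by norm_num)
  have hPe : ¬ Pend F := by
    apply h.noPend hF hN
    intro f hf p hp q hq _ _ _ _
    rw [Finset.mem_singleton] at hp hq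
    rw [hp, hq]
  obtain ⟨e, he, hek, u, x, z, s, t, hue, hxe, hxF, hx, hT, hu3, huz, huM, hzM⟩ :=
    h.choose hF (k := 2) (Or.inr ⟨rfl, by rw [hl]; norm_num⟩)
  by_cases h3 : 3 ≤ (M F x).card
  · exact sur_R3 hU hD hG hP (noPL_of hP hPe hxF) hxF h3
  have hMeq := eq_pair huM hzM huz (by omega)
  have hM2 : (M F x).card = 2 := by rw [hMeq, Finset.card_pair huz]
  obtain ⟨nu, u2⟩ := h.newM hF hP hx hxF huM
  obtain ⟨nz, z2⟩ := h.newM hF hP hx hxF hzM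
  have hze : z ∈ e := by
    by_contra hze
    have := (h.n3_eq hT hx (hF he) hxe).2 hze
    omega
  have sep : ∀ f ∈ F, x ∉ f → u ∈ f → z ∈ f → False := by
    intro f hf hxf huf hzf
    have := two_le_codeg (hF he) (hF hf) (by rintro rfl; exact hxf hxe) hue huf hze hzf
    have := h.codeg_le_one hu3 huz.symm
    omega
  obtain ⟨fu, hfu, hufu, _⟩ := deg_one nu.1
  obtain ⟨fz, hfz, hzfz, _⟩ := deg_one nz.1
  rw [mem_res] at hfu hfz
  have hzfu : z ∉ fu := fun hc => sep fu hfu.1 hfu.2 hufu hc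
  have hufz : u ∉ fz := fun hc => sep fz hfz.1 hfz.2 hc hzfz
  -- gains
  have key : ∀ m m' f, m ∈ M F x → M F x = {m, m'} → NewOne F x m → f ∈ F → x ∉ f → m ∈ f → m' ∉ f →
      20 ≤ ex 1 F x m ∧ (o ∉ f → 22 ≤ ex 1 F x m) := by
    intro m m' f hm hMm nm hf hxf hmf hmpf
    have ones : ∀ y ∈ f, y ≠ m → deg (res F x) y = 1 → y = o := by
      intro y hy hym hy1
      rcases old_or_nbr hy1 with h1 | h1
      · simpa using h.onesM hF hN hx hm hf hmf hy h1
      · have := NewOne.mem ⟨hy1, h1⟩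
        rw [hMm] at this
        simp only [Finset.mem_insert, Finset.mem_singleton] at this
        rcases this with h2 | h2
        · exact absurd h2 hym
        · exact absurd (h2 ▸ hy) hmpf
    constructor
    · apply ex_twenty le_rfl hU nm.2 nm.1.le
      intro f' hf' hxf' hmf'
      obtain rfl := nm.uniq hf' hxf' hmf' hf hxf hmf
      by_contra hcon
      push Not at hcon
      obtain ⟨p, q, b1, b2, b3, rfl⟩ := edge_form hU hf hmf
      have q1 := ones p (by simp) b1.symm (hcon p (by simp))
      have q2 := ones q (by simp) b2.symm (hcon q (by simp))
      exact b3 (q1.trans q2.symm)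
    · intro hof
      apply ex_twentytwo hU nm.2 nm.1.le
      intro f' hf' hxf' hmf' y hy hym hy1
      obtain rfl := nm.uniq hf' hxf' hmf' hf hxf hmf
      exact hof (ones y hy hym hy1 ▸ hy)
  have hMeq' : M F x = {z, u} := by rw [hMeq, Finset.pair_comm]
  obtain ⟨ku, ku'⟩ := key u z fu huM hMeq nu hfu.1 hfu.2 hufu hzfu
  obtain ⟨kz, kz'⟩ := key z u fz hzM hMeq' nz hfz.1 hfz.2 hzfz hufz
  have hd := drop3_2 hU hD hxF (mem_M.1 huM).1 (mem_M.1 hzM).1 huz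
  have notboth : ¬ (o ∈ fu ∧ o ∈ fz) := by
    rintro ⟨h1, h2⟩
    obtain ⟨k, hk, hok, hall⟩ := deg_one ho
    have e1 := hall fu hfu.1 h1
    have e2 := hall fz hfz.1 h2
    rw [e1, ← e2] at hufu
    exact hufz hufu
  have hrep : ∀ m m' f f', m ∈ M F x → m' ∈ M F x → M F x = {m, m'} → NewOne F x m → NewOne F x m' →
      deg F m = 2 → deg F m' = 2 →
      f ∈ F → x ∉ f → m ∈ f → m' ∉ f → f' ∈ F → x ∉ f' → m' ∈ f' → m ∉ f' →
      ∃ R τ : ℤ, Phi 1 (res (res F x) m) + R ≤ Phi 1 (res F x) ∧ Sur (res (res F x) m) τ ∧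
        (544 + 10 ≤ 400 + R + τ ∨ (o ∉ f ∧ o ∉ f' ∧ 544 + 10 ≤ 402 + R + τ)) := by
    intro m m' f f' hm hm' hMm nm nm' hm2 hmp2 hf hxf hmf hmpf hf' hxf' hmpfp hmf'
    obtain ⟨a, b, b1, b2, b3, rfl⟩ := edge_form hU hf hmf
    have hr := reply_edge (γ := 1) (by norm_num) le_rfl (hU.res x) (res_deg_le hD x) nm.1 b1 b2 b3
    have fr := mem_res.2 ⟨hf, hxf⟩
    have na := ex_nonneg (γ := 1) le_rfl (res F x) m a
    have nb := ex_nonneg (γ := 1) le_rfl (res F x) m b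
    have hgs : Sur (res (res F x) m) 0 := gen_sur hG (by omega)
    by_cases ha2 : deg (res F x) a ≤ 2
    · have := ex_six (γ := 1) le_rfl (codeg_pos_of fr hmf (by simp : a ∈ _))
        (deg_res_le_one fr hmf (by simp) ha2)
      exact ⟨154, 0, by linarith, hgs, Or.inl (by norm_num)⟩
    by_cases hb2 : deg (res F x) b ≤ 2
    · have := ex_six (γ := 1) le_rfl (codeg_pos_of fr hmf (by simp : b ∈ _))
        (deg_res_le_one fr hmf (by simp) hb2)
      exact ⟨154, 0, by linarith, hgs, Or.inl (by norm_num)⟩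
    have ha3 := res_deg_le hD x a
    have hb3 := res_deg_le hD x b
    have hs : Step F x m a b := ⟨hxF, nm, hf, hxf, b1, b2, b3, by omega, by omega⟩
    have hlost := h.lost_step hF hs
    rw [hM2, hl] at hlost
    have hF' : res (res F x) m ⊆ E := hs.sub.trans hF
    have hNN : NN E (res (res F x) m) {o, m'} := by
      apply h.NN_step hF hN hs hx
      · simp
      · intro w hw hwm
        rw [hMm] at hw
        simp only [Finset.mem_insert, Finset.mem_singleton] at hw ⊢
        tauto
      · intro w hw
        simp only [Finset.mem_insert, Finset.mem_singleton] at hw ⊢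
        rcases hw with rfl | rfl
        · exact Or.inl rfl
        · exact Or.inr hm'
    have hoa := deg_mono (res_subset F x) o
    have hom' : o ≠ m' := by rintro rfl; omega
    have hof : o ∉ ({m, a, b} : Finset V) := by
      simp only [Finset.mem_insert, Finset.mem_singleton]
      rintro (rfl | rfl | rfl) <;> omega
    by_cases hof' : o ∈ f'
    · refine ⟨148, 6, by linarith, ?_, Or.inl (by norm_num)⟩
      have hfF' : f' ∈ res (res F x) m := mem_res.2 ⟨mem_res.2 ⟨hf', hxf'⟩, hmf'⟩
      have d1 := deg_pos_of hfF' hof'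
      have d2 := deg_pos_of hfF' hmpfp
      have d3 := deg_mono (res_subset (res F x) m) o
      have d4 := deg_mono (res_subset (res F x) m) m'
      have d5 := nm'.1
      obtain ⟨w, w1, w2, rfl⟩ := edge_form2 hU hf' hof' hmpfp hom'
      have hset : ({o, m', w} : Finset V) = {w, o, m'} := by
        ext; simp only [Finset.mem_insert, Finset.mem_singleton]; tauto
      rw [hset] at hfF'
      exact h.stage3b hF' (by omega) hNN hfF' w1.symm w2.symm hom' (by omega) (by omega)
    · refine ⟨148, 4, by linarith, ?_, Or.inr ⟨hof, hof', by norm_num⟩⟩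
      apply h.stage3a hF' (by omega)
      apply h.noPend hF' hNN
      have aux : ∀ f'' ∈ res (res F x) m, o ∈ f'' → m' ∈ f'' → False := by
        intro f'' hf'' h1 h2
        have h3 := mem_res.1 (mem_res.1 hf'').1
        obtain rfl := nm'.uniq h3.1 h3.2 h2 hf' hxf' hmpfp
        exact hof' h1
      intro f'' hf'' p hp q hq hpf hqf _ _
      simp only [Finset.mem_insert, Finset.mem_singleton] at hp hq
      rcases hp with rfl | rfl <;> rcases hq with rfl | rfl
      · rfl
      · exact (aux f'' hf'' hpf hqf).elim
      · exact (aux f'' hf'' hqf hpf).elim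
      · rfl
  have hall : ∀ y, 0 < deg (res F x) y →
      ∃ R τ : ℤ, Phi 1 (res (res F x) y) + R ≤ Phi 1 (res F x) ∧ Sur (res (res F x) y) τ ∧
        (544 + 10 ≤ 400 + R + τ ∨ (o ∉ fu ∧ o ∉ fz ∧ 544 + 10 ≤ 402 + R + τ)) := by
    intro y hy
    have hgs : Sur (res (res F x) y) 0 := gen_sur hG (by omega)
    by_cases hy2 : 2 ≤ deg (res F x) y
    · have := reply_two (γ := 1) (by norm_num) le_rfl (hU.res x) (res_deg_le hD x) hy2
      exact ⟨264, 0, by linarith, hgs, Or.inl (by norm_num)⟩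
    have hy1 : deg (res F x) y = 1 := by omega
    rcases old_or_nbr hy1 with h1 | h1
    · exact ⟨160, 0, reply_old hU hD hP h1 hy, hgs, Or.inl (by norm_num)⟩
    · have hm := NewOne.mem ⟨hy1, h1⟩
      rw [hMeq] at hm
      simp only [Finset.mem_insert, Finset.mem_singleton] at hm
      rcases hm with rfl | rfl
      · exact hrep y z fu fz huM hzM hMeq nu nz u2 z2 hfu.1 hfu.2 hufu hzfu hfz.1 hfz.2 hzfz hufz
      · obtain ⟨R, τ, q1, q2, q3⟩ := hrep y u fz fu hzM huM hMeq' nz nu z2 u2 hfz.1 hfz.2 hzfz hufz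
          hfu.1 hfu.2 hufu hzfu
        exact ⟨R, τ, q1, q2, by tauto⟩
  by_cases hoo : o ∈ fu ∨ o ∈ fz
  · have h42 : 42 ≤ ex 1 F x u + ex 1 F x z := by
      rcases hoo with h1 | h1
      · have := kz' (fun h2 => notboth ⟨h1, h2⟩)
        linarith
      · have := ku' (fun h2 => notboth ⟨h2, h1⟩)
        linarith
    refine fin2 hG (v := x) (D := 400) (by omega) (by linarith) ?_ (by norm_num)
    intro y hy
    obtain ⟨R, τ, q1, q2, q3⟩ := hall y hy
    exact ⟨R, τ, q1, q2, by tauto⟩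
  · push Not at hoo
    have := ku' hoo.1
    have := kz' hoo.2
    refine fin2 hG (v := x) (D := 402) (by omega) (by linarith) ?_ (by norm_num)
    intro y hy
    obtain ⟨R, τ, q1, q2, q3⟩ := hall y hy
    refine ⟨R, τ, q1, q2, ?_⟩
    rcases q3 with q3 | q3
    · linarith
    · exact q3.2.2

theorem XT.stage1 (h : XT E) (hF : F ⊆ E) (hl : (lost E F).card = 8) (hN : NN E F ∅) : Sur F 16 := by
  have hU := h.hU.mono hF
  have hD := h.hDF hF
  have hG := h.hG.mono hF
  by_cases hP : P13 F
  · exact sur_P13 hU hD hG hP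
  obtain ⟨e, he, hek, u, x, z, s, t, hue, hxe, hxF, hx, hT, hu3, huz, huM, hzM⟩ :=
    h.choose hF (Or.inl ⟨rfl, by rw [hl]; norm_num⟩)
  have hO : NoOL F x := by
    intro m hm f hf hxf hmf y hy hy1
    have := h.onesM hF hN hx hm hf hmf hy hy1
    simp at this
  by_cases h3 : 3 ≤ (M F x).card
  · exact sur_R3' hU hD hG hP hO hxF h3
  have hMeq := eq_pair huM hzM huz (by omega)
  have hM2 : (M F x).card = 2 := by rw [hMeq, Finset.card_pair huz]
  obtain ⟨nu, u2⟩ := h.newM hF hP hx hxF huM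
  obtain ⟨nz, z2⟩ := h.newM hF hP hx hxF hzM
  have hd := drop3_2 hU hD hxF (mem_M.1 huM).1 (mem_M.1 hzM).1 huz
  have newM : ∀ m ∈ M F x, ∀ f ∈ F, x ∉ f → m ∈ f → ∀ y ∈ f, deg (res F x) y = 1 → y = u ∨ y = z := by
    intro m hm f hf hvf huf y hy hy1
    rcases old_or_nbr hy1 with h | h
    · exact absurd h (hO m hm f hf hvf huf y hy)
    · have := NewOne.mem ⟨hy1, h⟩
      rw [hMeq] at this
      simpa using this
  have noiso : ∀ m ∈ M F x, ∀ f ∈ F, x ∉ f → m ∈ f → ∃ y ∈ f, deg (res F x) y ≠ 1 := by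
    intro m hm f hf hvf huf
    by_contra hcon
    push Not at hcon
    have hsub : f ⊆ {u, z} := fun y hy => by
      simpa using newM m hm f hf hvf huf y hy (hcon y hy)
    have := Finset.card_le_card hsub
    rw [hU f hf, Finset.card_pair huz] at this
    omega
  by_cases hcom : ∃ f ∈ F, x ∉ f ∧ u ∈ f ∧ z ∈ f
  · obtain ⟨f, hf, hxf, huf, hzf⟩ := hcom
    have a21 := ex_twentyone (γ := 1) le_rfl hU nu.2 nu.1.le
      (fun f hf hvf h => ⟨noiso u huM f hf hvf h, hO u huM f hf hvf h⟩)
    have c21 := ex_twentyone (γ := 1) le_rfl hU nz.2 nz.1.le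
      (fun f hf hvf h => ⟨noiso z hzM f hf hvf h, hO z hzM f hf hvf h⟩)
    refine fin1 hG (v := x) (D := 400) (R := 160) (by omega) (by linarith) ?_ (by norm_num) (by norm_num)
    intro y hy
    by_cases hy2 : 2 ≤ deg (res F x) y
    · have := reply_two (γ := 1) (by norm_num) le_rfl (hU.res x) (res_deg_le hD x) hy2
      linarith
    have hy1 : deg (res F x) y = 1 := by omega
    have fr := mem_res.2 ⟨hf, hxf⟩
    have key : ∀ p q, p ∈ f → q ∈ f → p ≠ q → deg (res F x) p = 1 → deg (res F x) q = 1 →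
        Phi 1 (res (res F x) p) + 160 ≤ Phi 1 (res F x) := by
      intro p q hp hq hpq hp1 hq1
      obtain ⟨t, h1, h2, rfl⟩ := edge_form2 hU hf hp hq hpq
      have h5 := reply_edge (γ := 1) (by norm_num) le_rfl (hU.res x) (res_deg_le hD x) hp1 hpq h1 h2
      have h6 := ex_one (γ := 1) (codeg_pos_of fr hp hq) hq1
      have h7 := ex_nonneg (γ := 1) le_rfl (res F x) p t
      linarith
    rcases old_or_nbr hy1 with h | h
    · exact reply_old hU hD hP h hy
    · have := NewOne.mem ⟨hy1, h⟩
      rw [hMeq] at this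
      simp only [Finset.mem_insert, Finset.mem_singleton] at this
      rcases this with rfl | rfl
      · exact key y z huf hzf huz hy1 nz.1
      · exact key y u hzf huf huz.symm hy1 nu.1
  push Not at hcom
  have u22 : 22 ≤ ex 1 F x u := by
    apply ex_twentytwo hU nu.2 nu.1.le
    intro f hf hvf haf y hy hya hy1
    rcases newM u huM f hf hvf haf y hy hy1 with rfl | rfl
    · exact hya rfl
    · exact hcom f hf hvf haf hy
  have z22 : 22 ≤ ex 1 F x z := by
    apply ex_twentytwo hU nz.2 nz.1.le
    intro f hf hvf haf y hy hya hy1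
    rcases newM z hzM f hf hvf haf y hy hy1 with rfl | rfl
    · exact hcom f hf hvf hy haf
    · exact hya rfl
  have hrep : ∀ m m' f, m ∈ M F x → m' ∈ M F x → M F x = {m, m'} → NewOne F x m → NewOne F x m' →
      f ∈ F → x ∉ f → m ∈ f → m' ∉ f → (∀ a ∈ f, a ≠ m → NF E a) →
      ∃ R τ : ℤ, Phi 1 (res (res F x) m) + R ≤ Phi 1 (res F x) ∧ Sur (res (res F x) m) τ ∧
        544 + 16 ≤ 402 + R + τ := by
    intro m m' f hm hm' hMm nm nm' hf hxf hmf hmpf hNF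
    have h14 : ∀ a ∈ f, a ≠ m → deg (res F x) a ≤ 2 → 14 ≤ ex 1 (res F x) m a := by
      intro a ha ham ha2
      have fr := mem_res.2 ⟨hf, hxf⟩
      apply ex_fourteen le_rfl (hU.res x) (codeg_pos_of fr hmf ha) (deg_res_le_one fr hmf ha ha2)
      intro g hg hmg hag
      have hg' := mem_res.1 hg
      obtain ⟨p, q, b1, b2, b3, rfl⟩ := edge_form hU hg'.1 hag
      have aux : ∀ y ∈ ({a, p, q} : Finset V), deg (res F x) y = 1 → y = m' := by
        intro y hy hy1
        rcases old_or_nbr hy1 with h1 | h1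
        · rcases hN.1 y h1 with h2 | h2
          · exact absurd h2 (hNF a ha ham _ (hF hg'.1) hag y hy)
          · simp at h2
        · have := NewOne.mem ⟨hy1, h1⟩
          rw [hMm] at this
          simp only [Finset.mem_insert, Finset.mem_singleton] at this
          rcases this with h2 | h2
          · exact absurd (h2 ▸ hy) hmg
          · exact h2
      by_cases hp1 : deg (res F x) p = 1
      · by_cases hq1 : deg (res F x) q = 1
        · exact absurd ((aux p (by simp) hp1).trans (aux q (by simp) hq1).symm) b3
        · exact ⟨q, by simp, b2.symm, hq1⟩
      · exact ⟨p, by simp, b1.symm, hp1⟩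
    obtain ⟨a, b, b1, b2, b3, rfl⟩ := edge_form hU hf hmf
    have hr := reply_edge (γ := 1) (by norm_num) le_rfl (hU.res x) (res_deg_le hD x) nm.1 b1 b2 b3
    have na := ex_nonneg (γ := 1) le_rfl (res F x) m a
    have nb := ex_nonneg (γ := 1) le_rfl (res F x) m b
    have hgs : Sur (res (res F x) m) 0 := gen_sur hG (by omega)
    by_cases ha2 : deg (res F x) a ≤ 2
    · have := h14 a (by simp) b1.symm ha2
      exact ⟨162, 0, by linarith, hgs, by norm_num⟩
    by_cases hb2 : deg (res F x) b ≤ 2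
    · have := h14 b (by simp) b2.symm hb2
      exact ⟨162, 0, by linarith, hgs, by norm_num⟩
    have ha3 := res_deg_le hD x a
    have hb3 := res_deg_le hD x b
    have hs : Step F x m a b := ⟨hxF, nm, hf, hxf, b1, b2, b3, by omega, by omega⟩
    have hlost := h.lost_step hF hs
    rw [hM2, hl] at hlost
    refine ⟨148, 10, by linarith, ?_, by norm_num⟩
    apply h.stage2 (hs.sub.trans hF) (by omega) (o := m')
    · apply h.NN_step hF hN hs hx
      · simp
      · intro w hw hwm
        rw [hMm] at hw
        simp only [Finset.mem_insert, Finset.mem_singleton] at hw ⊢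
        tauto
      · intro w hw
        simp only [Finset.mem_singleton] at hw
        exact Or.inr (hw ▸ hm')
    · rw [hs.deg_far hmpf]
      exact nm'.1
  refine fin2 hG (v := x) (D := 402) (by omega) (by linarith) ?_ (by norm_num)
  intro y hy
  have hgs : Sur (res (res F x) y) 0 := gen_sur hG (by omega)
  by_cases hy2 : 2 ≤ deg (res F x) y
  · have := reply_two (γ := 1) (by norm_num) le_rfl (hU.res x) (res_deg_le hD x) hy2
    exact ⟨264, 0, by linarith, hgs, by norm_num⟩
  have hy1 : deg (res F x) y = 1 := by omega
  rcases old_or_nbr hy1 with h1 | h1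
  · exact ⟨160, 0, reply_old hU hD hP h1 hy, hgs, by norm_num⟩
  have hm := NewOne.mem ⟨hy1, h1⟩
  rw [hMeq] at hm
  obtain ⟨f, hf, hyf, _⟩ := deg_one hy1
  rw [mem_res] at hf
  simp only [Finset.mem_insert, Finset.mem_singleton] at hm
  rcases hm with rfl | rfl
  · apply hrep y z f huM hzM hMeq nu nz hf.1 hf.2 hyf (hcom f hf.1 hf.2 hyf)
    intro a ha hay g hg hag w hw
    exact h.near hu3 (codeg_pos_of (hF hf.1) hyf ha) hg hag hw
  · apply hrep y u f hzM huM (by rw [hMeq, Finset.pair_comm]) nz nu hf.1 hf.2 hyf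
      (fun hc => hcom f hf.1 hf.2 hc hyf)
    intro a ha hay g hg hag w hw hw1
    have := (hT.step hx).uniq (hF hf.1) hf.2 hyf
    subst this
    have ha3 : deg E a = 3 := by
      simp only [Finset.mem_insert, Finset.mem_singleton] at ha
      rcases ha with rfl | rfl | rfl
      · exact absurd rfl hay
      · exact hT.s3
      · exact hT.t3
    exact h.hP ⟨g, hg, w, hw, a, hag, hw1, ha3.ge⟩

theorem XT.false (h : XT E) {v : V} (hv : deg E v = 3) : False := by
  obtain ⟨z, s, t, hT⟩ := h.tight hv
  have hs := hT.step hv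
  have hN : NN E E ∅ := ⟨fun w hw => Or.inl hw, by simp⟩
  have hl := h.lost_step (Finset.Subset.refl E) hs
  have h0 : lost E E = ∅ := by
    ext w; simp [mem_lost]
  rw [hT.hM, h0] at hl
  simp at hl
  apply hT.nsur
  apply h.stage1 hs.sub hl
  apply h.NN_step (Finset.Subset.refl E) hN hs hv
  · simp
  · intro w hw hwz
    exact absurd (hT.only hw) hwz
  · simp

theorem sur_all (n : ℕ) : ∀ E : Finset (Finset V), E.card = n → Unif E → Sur E 0 := by
  induction n using Nat.strong_induction_on with
  | _ n ih =>
    intro E hn hU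
    have hG : Gen E := by
      intro F hF hlt
      have := ih F.card (by omega) F rfl (hU.mono hF)
      unfold Sur at this
      linarith
    by_cases h4 : ∃ v, 4 ≤ deg E v
    · obtain ⟨v, hv⟩ := h4
      exact sur_big hU hG hv
    push Not at h4
    have hD : ∀ u, deg E u ≤ 3 := fun u => by have := h4 u; omega
    by_contra hS
    by_cases hP : P13 E
    · exact hS ((sur_P13 hU hD hG hP).mono (by norm_num))
    by_cases hQ : QQ E
    · exact hS (sur_QQ hU hD hG hP hQ)
    by_cases hPe : Pend E
    · exact hS (sur_Pend hU hD hG hP hQ hPe)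
    by_cases h3 : ∃ v, deg E v = 3
    · obtain ⟨v, hv⟩ := h3
      exact XT.false ⟨hU, hD, hG, hP, hQ, hPe, hS⟩ hv
    · push Not at h3
      have := val_le_two hU (fun u => by have := hD u; have := h3 u; omega)
      apply hS
      unfold Sur
      linarith

end D7
end TG




namespace TG

open Finset

/-- Double counting of the degree-one incidences. -/
theorem sum_ones (E : Finset (Finset V)) :
    ∑ f ∈ E, (ones E f : ℤ) = ∑ v : V, (if deg E v = 1 then (1 : ℤ) else 0) := by
  have h1 : ∀ f ∈ E, (ones E f : ℤ)
      = ∑ v : V, (if v ∈ f ∧ deg E v = 1 then (1 : ℤ) else 0) := by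
    intro f _
    have : f.filter (fun u => deg E u = 1) = univ.filter (fun v => v ∈ f ∧ deg E v = 1) := by
      ext; simp
    unfold ones
    rw [this, Finset.card_filter]
    push_cast
    rfl
  rw [Finset.sum_congr rfl h1, Finset.sum_comm]
  refine Finset.sum_congr rfl (fun v _ => ?_)
  by_cases hv : deg E v = 1
  · simp only [hv, and_true, if_true]
    have : ((E.filter (fun e => v ∈ e)).card : ℤ) = 1 := by exact_mod_cast hv
    rw [Finset.card_filter] at this
    push_cast at this
    exact this
  · simp [hv]

theorem Phi_le {E : Finset (Finset V)} :
    Phi 1 E ≤ 85 * ((Fintype.card V : ℤ) + E.card) := by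
  have hb : ∑ f ∈ E, bon 1 (ones E f) ≤ ∑ f ∈ E, 28 * (ones E f : ℤ) := by
    refine Finset.sum_le_sum (fun f _ => ?_)
    unfold bon
    split_ifs with h h
    · rw [h]; norm_num
    · rw [h]; norm_num
    · positivity
  rw [← Finset.mul_sum, sum_ones, Finset.mul_sum] at hb
  have hw : ∑ v : V, (wt (deg E v) + 28 * (if deg E v = 1 then (1 : ℤ) else 0))
      ≤ ∑ v : V, (85 : ℤ) := by
    refine Finset.sum_le_sum (fun v _ => ?_)
    rcases hd : deg E v with _ | _ | _ | n <;> simp [wt]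
  rw [Finset.sum_add_distrib] at hw
  simp only [Finset.sum_const, Finset.card_univ, nsmul_eq_mul] at hw
  unfold Phi
  linarith

theorem final_bound {E : Finset (Finset V)} (hU : Unif E) :
    16 * gameVal true E ≤ 5 * (Fintype.card V + E.card) := by
  have h := sur_all E.card E rfl hU
  have h' := Phi_le (E := E)
  unfold Sur at h
  omega

end TG

theorem gameTransversalNum_le_of_three_uniform
    {V : Type} [Fintype V] [DecidableEq V] (E : Finset (Finset V))
    (h3 : ∀ e ∈ E, e.card = 3) :
    (gameTransversalNum E : ℚ) ≤ (5 / 16) * (Fintype.card V + E.card) := by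
  have h := TG.final_bound (E := E) h3
  have h' : (16 : ℚ) * (gameTransversalNum E : ℚ) ≤ 5 * (Fintype.card V + E.card) := by
    exact_mod_cast h
  linarith
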